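/- Fix an odd integer p ≥ 5 and C₀ > 0. Let u : ℝ × (0,∞) → ℝ be C^∞ on {(t,r) : r > |t|} and satisfy ∂_t²u − ∂_r²u − (3/r)∂_r u = |u|^{p−1}u there, with data (u₀, u₁) = (u(0,·), ∂_t u(0,·)). Assume: (i) (u₀,u₁) ∈ H(R₀) for every R₀ > 0; (ii) ∫₀^∞ |u₀(r)|^{2(p−1)} r³ dr < ∞; (iii) for every R₀ > 0 and every ρ ≥ R₀, ‖u‖_{L²L⁸(ρ)} + ‖u‖_{L³L⁶(ρ)} + sup_{t∈ℝ} ‖(u(t,·), ∂_t u(t,·))‖_{H(ρ+|t|)} ≤ C₀‖(u₀,u₁)‖_{H(ρ)}; and (iv) for every R₀ > 0 the exterior energy of u on {r > R₀ + |t|} vanishes. Then there exists R > 0 such that u₀(r) = 0 and u₁(r) = 0 for all r > R. -/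

import Mathlib

open MeasureTheory Filter Set
open scoped ENNReal

/-- The exterior energy norm `‖(v,w)‖_{H(R)} = (∫_R^∞ (|v'|² + |w|²) r³ dr)^{1/2}`. -/
noncomputable def eH (R : ℝ) (v w : ℝ → ℝ) : ℝ≥0∞ :=
  ((∫⁻ r in Ioi R, ENNReal.ofReal ((deriv v r) ^ 2 * r ^ 3)) +
      ∫⁻ r in Ioi R, ENNReal.ofReal ((w r) ^ 2 * r ^ 3)) ^ (1 / 2 : ℝ)

/-- The exterior spacetime norm `‖u‖_{L^aL^b(R)}` over the region `{r > R + |t|}`. -/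
noncomputable def eLL (a b R : ℝ) (u : ℝ → ℝ → ℝ) : ℝ≥0∞ :=
  (∫⁻ t : ℝ,
      (∫⁻ r in Ioi (R + |t|), ENNReal.ofReal (|u t r| ^ b * r ^ 3)) ^ (a / b)) ^ (1 / a)

/-- The time derivative `∂_t u` of a function of `(t,r)`. -/
noncomputable def dtu (u : ℝ → ℝ → ℝ) (t r : ℝ) : ℝ := deriv (fun s => u s r) t

/-- `u` is an exterior solution of `∂_t²u - ∂_r²u - (3/r)∂_r u = |u|^{p-1}u`
on `{r > R + |t|}`, of smoothness class `C^n`. -/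
def IsExtSol (p : ℕ) (n : ℕ∞) (R : ℝ) (u : ℝ → ℝ → ℝ) : Prop :=
  ContDiffOn ℝ n (fun q : ℝ × ℝ => u q.1 q.2) {q : ℝ × ℝ | R + |q.1| < q.2} ∧
  ∀ t r : ℝ, R + |t| < r →
    deriv (fun s => dtu u s r) t - deriv (deriv (u t)) r - (3 / r) * deriv (u t) r
      = |u t r| ^ (p - 1) * u t r

/-- The exterior energy of `u` outside `{r > R + |t|}` vanishes as `t → ±∞`. -/
def ExtEnergyVanishes (R : ℝ) (u : ℝ → ℝ → ℝ) : Prop :=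
  Tendsto (fun t : ℝ => ∫ r in Ioi (R + |t|),
      ((dtu u t r) ^ 2 + (deriv (u t) r) ^ 2) * r ^ 3) atTop (nhds 0) ∧
  Tendsto (fun t : ℝ => ∫ r in Ioi (R + |t|),
      ((dtu u t r) ^ 2 + (deriv (u t) r) ^ 2) * r ^ 3) atBot (nhds 0)

/-- `sup_{t∈ℝ} ‖(u(t,·), ∂_t u(t,·))‖_{H(R+|t|)}`. -/
noncomputable def supH (R : ℝ) (u : ℝ → ℝ → ℝ) : ℝ≥0∞ :=
  ⨆ t : ℝ, eH (R + |t|) (u t) (fun r => dtu u t r)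

/-!
Fix a time `t₀` and use the null coordinates `ξ = r - (t - t₀)`, `η = r + (t - t₀)`. Green's
identity on the square `[ρ, Λ]²`, tested against the Riemann kernel of the radial wave operator
with pole `(ρ, ρ)`, expresses `4 ρ² u(t₀, ρ)` as a Duhamel integral plus terms on the outer edges
`ξ = Λ` and `η = Λ`. For two poles `ρ₀ < ρ₁` the difference of the kernels is small on those
edges, and the vanishing of the exterior energy makes the edge terms small along some sequence
`Λ → ∞`. So `4 ρ² u(t₀, ρ)` plus the Duhamel integral does not depend on `ρ`. The integral tends
to `0`, hence `4 ρ² u(t₀, ρ)` converges as `ρ → ∞`; finiteness of the energy makes the limit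
independent of `t₀`, and `u = O(r⁻²)`.

For the difference `u(t + τ, r) - u(t, r)` the limits cancel, and only the difference of the Duhamel
integrals is left. With respect to the weight `r⁻² e^{l/r}`, `l` large, the latter contracts by a
factor `1/2`, so `u` does not depend on time.

The stationary equation becomes a damped oscillator for `Y(s) = e^{as} u(e^s)`, `a = 2 / (p - 1)`,
and the critical integrability says that `|Y|^{2(p-1)}` is integrable over the line. Its energy
decreases, while averages of the energy over unit windows tend to `0` at both ends, by the virial
identity. So the energy vanishes identically, `Y` is constant, and `u = 0`.
-/

open scoped Topology

namespace RadialWave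

/-! ### The hypergeometric profile of the Riemann kernel -/

section PowerSeries

open FormalMultilinearSeries

lemma hasFPowerSeriesOnBall_deriv_ofScalars {𝕜 : Type*} [NontriviallyNormedField 𝕜]
    [CompleteSpace 𝕜] {f : 𝕜 → 𝕜} {c : ℕ → 𝕜} {x : 𝕜} {r : ℝ≥0∞}
    (hf : HasFPowerSeriesOnBall f (ofScalars 𝕜 c) x r) :
    HasFPowerSeriesOnBall (deriv f) (ofScalars 𝕜 fun n => ((n : 𝕜) + 1) * c (n + 1)) x r := by
  have eval_one := (ContinuousLinearMap.apply 𝕜 𝕜 (1 : 𝕜)).comp_hasFPowerSeriesOnBall hf.fderiv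
  have series_eq : ofScalars 𝕜 (fun n => ((n : 𝕜) + 1) * c (n + 1)) =
      (ContinuousLinearMap.apply 𝕜 𝕜 (1 : 𝕜)).compFormalMultilinearSeries
        (ofScalars 𝕜 c).derivSeries := by
    ext n
    simp
  rw [series_eq]
  exact eval_one

lemma hasSum_ofScalars {f : ℝ → ℝ} {c : ℕ → ℝ}
    (hf : HasFPowerSeriesOnBall f (ofScalars ℝ c) 0 1) {x : ℝ} (hx : |x| < 1) :
    HasSum (fun n => c n * x ^ n) (f x) := by
  have hx' : x ∈ Metric.eball (0 : ℝ) 1 := by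
    simpa [Metric.mem_eball, edist_dist] using hx
  simpa [mul_comm] using hf.hasSum hx'

end PowerSeries

section Hypergeometric

variable {a b c : ℝ}

lemma succ_mul_ordinaryHypergeometricCoefficient_succ (hc : ∀ k : ℕ, (k : ℝ) ≠ -c) (n : ℕ) :
    ((n : ℝ) + 1) * (c + n) * ordinaryHypergeometricCoefficient a b c (n + 1) =
      (a + n) * (b + n) * ordinaryHypergeometricCoefficient a b c n := by
  have hcn : c + n ≠ 0 := fun h => hc n (by linarith)
  simp only [ordinaryHypergeometricCoefficient, ascPochhammer_succ_eval, Nat.factorial_succ]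
  push_cast
  field_simp

lemma hasFPowerSeriesOnBall_ordinaryHypergeometric
    (habc : ∀ k : ℕ, (k : ℝ) ≠ -a ∧ (k : ℝ) ≠ -b ∧ (k : ℝ) ≠ -c) :
    HasFPowerSeriesOnBall (₂F₁ a b c : ℝ → ℝ) (ordinaryHypergeometricSeries ℝ a b c) 0 1 := by
  have hradius := ordinaryHypergeometricSeries_radius_eq_one ℝ a b c habc
  have := (ordinaryHypergeometricSeries ℝ a b c).hasFPowerSeriesOnBall (by simp [hradius])
  rwa [hradius] at this

/-- Gauss's differential equation, read off from the recursion of the coefficients. -/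
lemma ordinaryHypergeometric_ode
    (habc : ∀ k : ℕ, (k : ℝ) ≠ -a ∧ (k : ℝ) ≠ -b ∧ (k : ℝ) ≠ -c) {x : ℝ} (hx : |x| < 1) :
    x * (1 - x) * deriv (deriv (₂F₁ a b c)) x + (c - (a + b + 1) * x) * deriv (₂F₁ a b c) x =
      a * b * ₂F₁ a b c x := by
  set β := ordinaryHypergeometricCoefficient a b c
  set F : ℝ → ℝ := ₂F₁ a b c
  have hF0 : HasFPowerSeriesOnBall F (FormalMultilinearSeries.ofScalars ℝ β) 0 1 :=
    hasFPowerSeriesOnBall_ordinaryHypergeometric habc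
  have hF1 := hasFPowerSeriesOnBall_deriv_ofScalars hF0
  have h0 := hasSum_ofScalars hF0 hx
  have h1 := hasSum_ofScalars hF1 hx
  have h2 := hasSum_ofScalars (hasFPowerSeriesOnBall_deriv_ofScalars hF1) hx
  have x_mul_h1 : HasSum (fun n : ℕ => n * β n * x ^ n) (x * deriv F x) := by
    rw [← hasSum_nat_add_iff' 1]
    simpa [pow_succ, mul_comm, mul_left_comm, mul_assoc] using h1.mul_left x
  have x_mul_h2 : HasSum (fun n : ℕ => n * (n + 1) * β (n + 1) * x ^ n)
      (x * deriv (deriv F) x) := by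
    rw [← hasSum_nat_add_iff' 1]
    simpa [pow_succ, mul_comm, mul_left_comm, mul_assoc] using h2.mul_left x
  have x_sq_mul_h2 : HasSum (fun n : ℕ => n * (n - 1) * β n * x ^ n)
      (x * (x * deriv (deriv F) x)) := by
    rw [← hasSum_nat_add_iff' 1]
    simpa [pow_succ, mul_comm, mul_left_comm, mul_assoc] using x_mul_h2.mul_left x
  have total := (((x_mul_h2.sub x_sq_mul_h2).add (h1.mul_left c)).sub
    (x_mul_h1.mul_left (a + b + 1))).sub (h0.mul_left (a * b))
  have terms_vanish : ∀ n : ℕ, n * (n + 1) * β (n + 1) * x ^ n - n * (n - 1) * β n * x ^ n +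
      c * ((n + 1) * β (n + 1) * x ^ n) - (a + b + 1) * (n * β n * x ^ n) -
      a * b * (β n * x ^ n) = 0 := fun n => by
    linear_combination x ^ n *
      succ_mul_ordinaryHypergeometricCoefficient_succ (a := a) (b := b) (fun k => (habc k).2.2) n
  simp_rw [terms_vanish] at total
  linear_combination total.unique hasSum_zero

end Hypergeometric

section Profile

/-- The coefficients `binom(1/2, n)²` of `riemannProfile`. -/
noncomputable def profileCoeff : ℕ → ℝ :=
  ordinaryHypergeometricCoefficient (-1 / 2) (-1 / 2) 1

/-- The profile of the Riemann function of the radial wave operator in dimension four, as a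
function of the cross ratio of the null coordinates. -/
noncomputable def riemannProfile : ℝ → ℝ := ₂F₁ (-1 / 2 : ℝ) (-1 / 2) 1

lemma natCast_ne_profile_parameters (k : ℕ) :
    (k : ℝ) ≠ -(-1 / 2) ∧ (k : ℝ) ≠ -(-1 / 2) ∧ (k : ℝ) ≠ -1 := by
  have half : (k : ℝ) ≠ -(-1 / 2) := fun h => by
    have : 2 * k = 1 := by exact_mod_cast (by linarith : (2 : ℝ) * k = 1)
    lia
  exact ⟨half, half, by linarith [k.cast_nonneg (α := ℝ)]⟩

lemma hasFPowerSeriesOnBall_riemannProfile :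
    HasFPowerSeriesOnBall riemannProfile
      (FormalMultilinearSeries.ofScalars ℝ profileCoeff) 0 1 :=
  hasFPowerSeriesOnBall_ordinaryHypergeometric natCast_ne_profile_parameters

lemma hasSum_riemannProfile {x : ℝ} (hx : |x| < 1) :
    HasSum (fun n => profileCoeff n * x ^ n) (riemannProfile x) :=
  hasSum_ofScalars hasFPowerSeriesOnBall_riemannProfile hx

lemma riemannProfile_eq_tsum (x : ℝ) : riemannProfile x = ∑' n, profileCoeff n * x ^ n := by
  simp only [riemannProfile, profileCoeff, ordinaryHypergeometric_eq_tsum, smul_eq_mul]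

lemma riemannProfile_zero : riemannProfile 0 = 1 := ordinaryHypergeometric_zero _ _ _

lemma analyticAt_riemannProfile {x : ℝ} (hx : |x| < 1) : AnalyticAt ℝ riemannProfile x :=
  hasFPowerSeriesOnBall_riemannProfile.analyticAt_of_mem
    (by simpa [Metric.mem_eball, edist_dist] using hx)

lemma riemannProfile_ode {x : ℝ} (hx : |x| < 1) :
    x * (1 - x) * deriv (deriv riemannProfile) x + deriv riemannProfile x =
      riemannProfile x / 4 := by
  have gauss := ordinaryHypergeometric_ode natCast_ne_profile_parameters hx
  unfold riemannProfile
  linear_combination gauss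

lemma profileCoeff_zero : profileCoeff 0 = 1 := by
  simp [profileCoeff, ordinaryHypergeometricCoefficient]

lemma profileCoeff_nonneg (n : ℕ) : 0 ≤ profileCoeff n := by
  have : profileCoeff n =
      (n.factorial : ℝ)⁻¹ ^ 2 * (ascPochhammer ℝ n).eval (-1 / 2) ^ 2 := by
    simp only [profileCoeff, ordinaryHypergeometricCoefficient, ascPochhammer_eval_one]
    ring
  rw [this]
  positivity

lemma sq_mul_profileCoeff_succ (n : ℕ) :
    ((n : ℝ) + 1) ^ 2 * profileCoeff (n + 1) = ((n : ℝ) - 1 / 2) ^ 2 * profileCoeff n := by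
  have := succ_mul_ordinaryHypergeometricCoefficient_succ (a := -1 / 2) (b := -1 / 2)
    (fun k => (natCast_ne_profile_parameters k).2.2) n
  unfold profileCoeff
  linear_combination this

lemma cube_mul_profileCoeff_succ_le (n : ℕ) :
    ((n : ℝ) + 1) ^ 3 * profileCoeff (n + 1) ≤ 1 / 4 := by
  induction n with
  | zero =>
    have := sq_mul_profileCoeff_succ 0
    norm_num [profileCoeff_zero] at this ⊢
    exact this.le
  | succ n ih =>
    have hn : (0 : ℝ) ≤ n := n.cast_nonneg
    have recursion := sq_mul_profileCoeff_succ (n + 1)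
    push_cast at recursion ⊢
    calc ((n : ℝ) + 1 + 1) ^ 3 * profileCoeff (n + 1 + 1)
        = ((n + 2) * (n + 1 / 2) ^ 2) * profileCoeff (n + 1) := by
          linear_combination ((n : ℝ) + 2) * recursion
      _ ≤ ((n : ℝ) + 1) ^ 3 * profileCoeff (n + 1) := by
          refine mul_le_mul_of_nonneg_right ?_ (profileCoeff_nonneg _)
          nlinarith [hn]
      _ ≤ 1 / 4 := ih

lemma summable_mul_sqrt_mul_profileCoeff :
    Summable fun n : ℕ => ((n : ℝ) * √n) * profileCoeff n := by
  rw [← summable_nat_add_iff 1]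
  have majorant := (summable_nat_add_iff 1).2
    (Real.summable_one_div_nat_rpow.2 (by norm_num : (1 : ℝ) < 3 / 2))
  refine majorant.of_nonneg_of_le
    (fun n => mul_nonneg (by positivity) (profileCoeff_nonneg _)) fun n => ?_
  push_cast
  have hn : (0 : ℝ) < (n : ℝ) + 1 := by positivity
  have three_halves : ((n : ℝ) + 1) ^ (3 / 2 : ℝ) = ((n : ℝ) + 1) * √((n : ℝ) + 1) := by
    rw [Real.sqrt_eq_rpow, ← Real.rpow_one_add' hn.le (by norm_num)]
    norm_num
  rw [three_halves, le_div_iff₀ (by positivity)]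
  calc ((n : ℝ) + 1) * √((n : ℝ) + 1) * profileCoeff (n + 1) * (((n : ℝ) + 1) * √((n : ℝ) + 1))
      = (√((n : ℝ) + 1) * √((n : ℝ) + 1)) * ((n : ℝ) + 1) ^ 2 * profileCoeff (n + 1) := by ring
    _ = ((n : ℝ) + 1) ^ 3 * profileCoeff (n + 1) := by rw [Real.mul_self_sqrt hn.le]; ring
    _ ≤ 1 := by linarith [cube_mul_profileCoeff_succ_le n]

lemma summable_natCast_mul_profileCoeff : Summable fun n : ℕ => (n : ℝ) * profileCoeff n := by
  refine summable_mul_sqrt_mul_profileCoeff.of_nonneg_of_le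
    (fun n => mul_nonneg n.cast_nonneg (profileCoeff_nonneg n)) fun n => ?_
  refine mul_le_mul_of_nonneg_right ?_ (profileCoeff_nonneg n)
  rcases n.eq_zero_or_pos with rfl | hn
  · simp
  · exact le_mul_of_one_le_right n.cast_nonneg (Real.one_le_sqrt.2 (by exact_mod_cast hn))

lemma summable_profileCoeff : Summable profileCoeff := by
  rw [← summable_nat_add_iff 1]
  refine ((summable_nat_add_iff 1).2 summable_natCast_mul_profileCoeff).of_nonneg_of_le
    (fun n => profileCoeff_nonneg _) fun n => ?_
  exact le_mul_of_one_le_left (profileCoeff_nonneg _)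
    (by push_cast; linarith [n.cast_nonneg (α := ℝ)])

lemma hasSum_riemannProfile_one : HasSum profileCoeff (riemannProfile 1) := by
  simpa [riemannProfile_eq_tsum] using summable_profileCoeff.hasSum

lemma tendsto_sq_mul_profileCoeff :
    Tendsto (fun n : ℕ => (n : ℝ) ^ 2 * profileCoeff n) atTop (𝓝 0) := by
  rw [← tendsto_add_atTop_iff_nat 1]
  refine squeeze_zero (fun n => mul_nonneg (by positivity) (profileCoeff_nonneg _)) (fun n => ?_)
    (tendsto_one_div_add_atTop_nhds_zero_nat (𝕜 := ℝ))
  push_cast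
  rw [le_div_iff₀ (by positivity)]
  linarith [cube_mul_profileCoeff_succ_le n]

/-- The value of `deriv riemannProfile` at the endpoint `1`, by telescoping the recursion. -/
lemma hasSum_natCast_mul_profileCoeff :
    HasSum (fun n : ℕ => (n : ℝ) * profileCoeff n) (riemannProfile 1 / 4) := by
  have diff_summable := summable_natCast_mul_profileCoeff.hasSum.sub
    (hasSum_riemannProfile_one.div_const 4)
  have partial_sum (N : ℕ) : ∑ n ∈ Finset.range N, ((n : ℝ) * profileCoeff n - profileCoeff n / 4) =
      -((N : ℝ) ^ 2 * profileCoeff N) := by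
    induction N with
    | zero => simp
    | succ N ih =>
      rw [Finset.sum_range_succ, ih]
      push_cast
      linear_combination sq_mul_profileCoeff_succ N
  have diff_limit := diff_summable.tendsto_sum_nat
  simp_rw [partial_sum] at diff_limit
  have diff_eq_zero := tendsto_nhds_unique diff_limit
    (neg_zero (G := ℝ) ▸ tendsto_sq_mul_profileCoeff.neg)
  rw [← sub_eq_zero.1 diff_eq_zero]
  exact summable_natCast_mul_profileCoeff.hasSum

lemma riemannProfile_nonneg {x : ℝ} (hx : 0 ≤ x) : 0 ≤ riemannProfile x := by
  rw [riemannProfile_eq_tsum]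
  exact tsum_nonneg fun n => mul_nonneg (profileCoeff_nonneg n) (pow_nonneg hx n)

lemma riemannProfile_le_riemannProfile_one {x : ℝ} (h0 : 0 ≤ x) (h1 : x < 1) :
    riemannProfile x ≤ riemannProfile 1 :=
  hasSum_le (fun n => mul_le_of_le_one_right (profileCoeff_nonneg n) (pow_le_one₀ h0 h1.le))
    (hasSum_riemannProfile (by rwa [abs_of_nonneg h0])) hasSum_riemannProfile_one

lemma pow_sub_one_add_mul_le_sq {x : ℝ} (h0 : 0 ≤ x) (h1 : x ≤ 1) (n : ℕ) :
    x ^ n - 1 + n * (1 - x) ≤ (n * (1 - x)) ^ 2 := by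
  induction n with
  | zero => simp
  | succ n ih =>
    have hn : (0 : ℝ) ≤ n := n.cast_nonneg
    push_cast
    calc x ^ (n + 1) - 1 + ((n : ℝ) + 1) * (1 - x)
        = x * (x ^ n - 1 + n * (1 - x)) + n * (1 - x) ^ 2 := by ring
      _ ≤ 1 * (n * (1 - x)) ^ 2 + n * (1 - x) ^ 2 := by
          gcongr ?_ + _
          exact (mul_le_mul_of_nonneg_left ih h0).trans (by gcongr)
      _ ≤ (((n : ℝ) + 1) * (1 - x)) ^ 2 := by
          nlinarith [mul_nonneg hn (sq_nonneg (1 - x)), sq_nonneg (1 - x)]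

/-- The exponent `3/2` interpolates between the first and the second order Taylor remainder; the
coefficients decay just too slowly for the latter. -/
lemma abs_pow_sub_one_add_mul_le {x : ℝ} (h0 : 0 ≤ x) (h1 : x < 1) (n : ℕ) :
    |x ^ n - 1 + n * (1 - x)| ≤ ((n : ℝ) * √n) * ((1 - x) * √(1 - x)) := by
  have bernoulli : 0 ≤ x ^ n - 1 + n * (1 - x) := by
    have := one_add_mul_le_pow (a := x - 1) (by linarith) n
    rw [add_sub_cancel] at this
    linarith
  have first_order : x ^ n - 1 + n * (1 - x) ≤ n * (1 - x) := by
    linarith [pow_le_one₀ (n := n) h0 h1.le]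
  have second_order := pow_sub_one_add_mul_le_sq h0 h1.le n
  rw [abs_of_nonneg bernoulli]
  set y : ℝ := n * (1 - x)
  have hy : 0 ≤ y := mul_nonneg n.cast_nonneg (by linarith)
  have rhs_eq : ((n : ℝ) * √n) * ((1 - x) * √(1 - x)) = y * √y := by
    rw [Real.sqrt_mul n.cast_nonneg]
    ring
  rw [rhs_eq]
  rcases le_total y 1 with hy1 | hy1
  · have : y ≤ √y := Real.le_sqrt_of_sq_le (by nlinarith)
    exact second_order.trans (by nlinarith)
  · exact first_order.trans (le_mul_of_one_le_right hy (Real.one_le_sqrt.2 hy1))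

lemma exists_abs_riemannProfile_sub_le : ∃ C : ℝ, 0 ≤ C ∧ ∀ x : ℝ, 0 ≤ x → x < 1 →
    |riemannProfile x - riemannProfile 1 * (1 - (1 - x) / 4)| ≤ C * ((1 - x) * √(1 - x)) := by
  refine ⟨∑' n : ℕ, ((n : ℝ) * √n) * profileCoeff n,
    tsum_nonneg fun n => mul_nonneg (by positivity) (profileCoeff_nonneg n), fun x h0 h1 => ?_⟩
  have remainder : HasSum (fun n : ℕ => profileCoeff n * (x ^ n - 1 + n * (1 - x)))
      (riemannProfile x - riemannProfile 1 * (1 - (1 - x) / 4)) := by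
    have sum_of_sums := ((hasSum_riemannProfile (by rwa [abs_of_nonneg h0])).sub
      hasSum_riemannProfile_one).add (hasSum_natCast_mul_profileCoeff.mul_right (1 - x))
    rw [show riemannProfile x - riemannProfile 1 * (1 - (1 - x) / 4) =
      riemannProfile x - riemannProfile 1 + riemannProfile 1 / 4 * (1 - x) by ring]
    exact sum_of_sums.congr_fun fun n => by ring
  rw [← remainder.tsum_eq, ← Real.norm_eq_abs, ← tsum_mul_right]
  refine tsum_of_norm_bounded (summable_mul_sqrt_mul_profileCoeff.mul_right _).hasSum fun n => ?_
  rw [Real.norm_eq_abs, abs_mul, abs_of_nonneg (profileCoeff_nonneg n)]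
  calc profileCoeff n * |x ^ n - 1 + n * (1 - x)|
      ≤ profileCoeff n * (((n : ℝ) * √n) * ((1 - x) * √(1 - x))) :=
        mul_le_mul_of_nonneg_left (abs_pow_sub_one_add_mul_le h0 h1 n) (profileCoeff_nonneg n)
    _ = ((n : ℝ) * √n) * profileCoeff n * ((1 - x) * √(1 - x)) := by ring

end Profile

/-! ### The Riemann kernel -/

/-- The variable of the Riemann kernel: a cross ratio of the null coordinates `ξ, η` and `±ρ`. -/
noncomputable def crossRatio (ρ ξ η : ℝ) : ℝ := (ξ - ρ) / (ξ + ρ) * ((η - ρ) / (η + ρ))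

/-- The Riemann kernel, with pole `(ρ, ρ)`, of the radial wave operator
`∂_ξ ∂_η + (3 / 2) (∂_ξ + ∂_η) / (ξ + η)` in the null coordinates `ξ = r - t`, `η = r + t`;
the Riemann function proper is `(ξ + η) * riemannKernel ρ ξ η`, up to a constant factor. -/
noncomputable def riemannKernel (ρ ξ η : ℝ) : ℝ :=
  √(ξ + ρ) * √(η + ρ) * riemannProfile (crossRatio ρ ξ η)

/-- The derivative of `riemannKernel` in its last variable. By symmetry of the kernel, the
derivative in `ξ` at `(ξ, η)` is `riemannKernelDeriv ρ η ξ`. -/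
noncomputable def riemannKernelDeriv (ρ ξ η : ℝ) : ℝ :=
  √(ξ + ρ) * √(η + ρ) * (riemannProfile (crossRatio ρ ξ η) / (2 * (η + ρ)) +
    deriv riemannProfile (crossRatio ρ ξ η) * ((ξ - ρ) / (ξ + ρ) * (2 * ρ / (η + ρ) ^ 2)))

/-- The mixed second derivative of `riemannKernel`, in the form given by the adjoint wave
equation. -/
noncomputable def riemannKernelMixedDeriv (ρ ξ η : ℝ) : ℝ :=
  (riemannKernelDeriv ρ ξ η + riemannKernelDeriv ρ η ξ) / (2 * (ξ + η))

/-- The region `{r > |t|}` in null coordinates. -/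
def openQuadrant : Set (ℝ × ℝ) := {q | 0 < q.1 ∧ 0 < q.2}

lemma crossRatio_comm (ρ ξ η : ℝ) : crossRatio ρ ξ η = crossRatio ρ η ξ := mul_comm _ _

lemma riemannKernel_comm (ρ ξ η : ℝ) : riemannKernel ρ ξ η = riemannKernel ρ η ξ := by
  rw [riemannKernel, riemannKernel, crossRatio_comm, mul_comm √(ξ + ρ)]

lemma riemannKernelMixedDeriv_comm (ρ ξ η : ℝ) :
    riemannKernelMixedDeriv ρ ξ η = riemannKernelMixedDeriv ρ η ξ := by
  rw [riemannKernelMixedDeriv, riemannKernelMixedDeriv, add_comm ξ,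
    add_comm (riemannKernelDeriv _ _ _)]

lemma Icc_prod_Icc_subset_openQuadrant {a b : ℝ} (ha : 0 < a) :
    Icc a b ×ˢ Icc a b ⊆ openQuadrant :=
  fun _ hq => ⟨ha.trans_le hq.1.1, ha.trans_le hq.2.1⟩

lemma riemannKernel_left_self (ρ η : ℝ) : riemannKernel ρ ρ η = √(ρ + ρ) * √(η + ρ) := by
  simp [riemannKernel, crossRatio, riemannProfile_zero]

lemma riemannKernel_self {ρ : ℝ} (hρ : 0 ≤ ρ) : riemannKernel ρ ρ ρ = 2 * ρ := by
  rw [riemannKernel_left_self, Real.mul_self_sqrt (by positivity), two_mul]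

lemma add_mul_riemannKernelDeriv_left_self {ρ η : ℝ} (h : 0 < η + ρ) :
    (ρ + η) * riemannKernelDeriv ρ ρ η = riemannKernel ρ ρ η / 2 := by
  simp only [riemannKernel, riemannKernelDeriv, crossRatio, sub_self, zero_div, zero_mul,
    riemannProfile_zero, mul_zero, add_zero, add_comm ρ η]
  field_simp

lemma abs_sub_div_add_lt_one {ρ ξ : ℝ} (hρ : 0 < ρ) (hξ : 0 < ξ) :
    |(ξ - ρ) / (ξ + ρ)| < 1 := by
  rw [abs_div, abs_of_pos (by positivity : 0 < ξ + ρ), div_lt_one (by positivity), abs_lt]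
  constructor <;> linarith

lemma hasDerivAt_sub_div_add {ρ η : ℝ} (h : 0 < η + ρ) :
    HasDerivAt (fun y => (y - ρ) / (y + ρ)) (2 * ρ / (η + ρ) ^ 2) η :=
  (((hasDerivAt_id' η).sub_const ρ).div ((hasDerivAt_id' η).add_const ρ) h.ne').congr_deriv
    (by ring)

lemma hasDerivAt_sqrt_add {ρ η : ℝ} (h : 0 < η + ρ) :
    HasDerivAt (fun y => √(y + ρ)) (√(η + ρ) / (2 * (η + ρ))) η := by
  refine (((hasDerivAt_id' η).add_const ρ).sqrt h.ne').congr_deriv ?_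
  rw [div_eq_div_iff (by positivity) (by positivity)]
  linear_combination -2 * Real.mul_self_sqrt h.le

lemma hasDerivAt_crossRatio {ρ ξ η : ℝ} (h : 0 < η + ρ) :
    HasDerivAt (fun y => crossRatio ρ ξ y) ((ξ - ρ) / (ξ + ρ) * (2 * ρ / (η + ρ) ^ 2)) η :=
  (hasDerivAt_sub_div_add h).const_mul _

section OpenQuadrant

variable {ρ ξ η : ℝ} (hρ : 0 < ρ) (hξ : 0 < ξ) (hη : 0 < η)

include hρ hξ hη

lemma abs_crossRatio_lt_one : |crossRatio ρ ξ η| < 1 := by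
  rw [crossRatio, abs_mul]
  exact mul_lt_one_of_nonneg_of_lt_one_left (abs_nonneg _) (abs_sub_div_add_lt_one hρ hξ)
    (abs_sub_div_add_lt_one hρ hη).le

lemma one_sub_crossRatio :
    1 - crossRatio ρ ξ η = 2 * ρ * (ξ + η) / ((ξ + ρ) * (η + ρ)) := by
  rw [crossRatio]
  field_simp
  ring

lemma hasDerivAt_riemannKernel_right :
    HasDerivAt (fun y => riemannKernel ρ ξ y) (riemannKernelDeriv ρ ξ η) η := by
  have hp : 0 < η + ρ := by positivity
  have hprofile :=
    (analyticAt_riemannProfile (abs_crossRatio_lt_one hρ hξ hη)).differentiableAt.hasDerivAt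
  refine (((hasDerivAt_sqrt_add hp).const_mul √(ξ + ρ)).mul
    (hprofile.comp η (hasDerivAt_crossRatio hp))).congr_deriv ?_
  simp only [riemannKernelDeriv, Function.comp]
  field_simp

lemma hasDerivAt_riemannKernel_left :
    HasDerivAt (fun x => riemannKernel ρ x η) (riemannKernelDeriv ρ η ξ) ξ := by
  simpa only [riemannKernel_comm ρ η] using hasDerivAt_riemannKernel_right hρ hη hξ

lemma hasDerivAt_riemannKernelDeriv_left :
    HasDerivAt (fun x => riemannKernelDeriv ρ x η) (riemannKernelMixedDeriv ρ ξ η) ξ := by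
  have hp : 0 < ξ + ρ := by positivity
  have hX : HasDerivAt (fun x => crossRatio ρ x η)
      ((η - ρ) / (η + ρ) * (2 * ρ / (ξ + ρ) ^ 2)) ξ := by
    simpa only [crossRatio_comm ρ η] using hasDerivAt_crossRatio (ξ := η) hp
  have hanalytic := analyticAt_riemannProfile (abs_crossRatio_lt_one hρ hξ hη)
  have h0 := hanalytic.differentiableAt.hasDerivAt.comp ξ hX
  have h1 := hanalytic.deriv.differentiableAt.hasDerivAt.comp ξ hX
  refine (((hasDerivAt_sqrt_add hp).mul_const √(η + ρ)).mul
    ((h0.div_const (2 * (η + ρ))).add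
      (h1.mul ((hasDerivAt_sub_div_add hp).mul_const (2 * ρ / (η + ρ) ^ 2))))).congr_deriv ?_
  have hode := riemannProfile_ode (abs_crossRatio_lt_one hρ hξ hη)
  rw [one_sub_crossRatio hρ hξ hη, ← eq_sub_iff_add_eq'] at hode
  simp only [riemannKernelMixedDeriv, riemannKernelDeriv, Function.comp, crossRatio_comm ρ η ξ,
    Pi.add_apply, Pi.mul_apply, hode]
  unfold crossRatio
  field_simp
  ring

end OpenQuadrant

section Continuity

variable {ρ : ℝ} (hρ : 0 < ρ)

include hρ

lemma continuousOn_sub_div_add_fst :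
    ContinuousOn (fun q : ℝ × ℝ => (q.1 - ρ) / (q.1 + ρ)) openQuadrant :=
  ContinuousOn.div (by fun_prop) (by fun_prop) fun _ hq => (add_pos hq.1 hρ).ne'

lemma continuousOn_sub_div_add_snd :
    ContinuousOn (fun q : ℝ × ℝ => (q.2 - ρ) / (q.2 + ρ)) openQuadrant :=
  ContinuousOn.div (by fun_prop) (by fun_prop) fun _ hq => (add_pos hq.2 hρ).ne'

lemma continuousOn_comp_crossRatio {f : ℝ → ℝ} (hf : ∀ x, |x| < 1 → ContinuousAt f x) :
    ContinuousOn (fun q : ℝ × ℝ => f (crossRatio ρ q.1 q.2)) openQuadrant := fun q hq =>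
  (hf _ (abs_crossRatio_lt_one hρ hq.1 hq.2)).comp_continuousWithinAt
    (f := fun q : ℝ × ℝ => crossRatio ρ q.1 q.2)
    (((continuousOn_sub_div_add_fst hρ).mul (continuousOn_sub_div_add_snd hρ)) q hq)

lemma continuousOn_riemannKernel :
    ContinuousOn (fun q : ℝ × ℝ => riemannKernel ρ q.1 q.2) openQuadrant :=
  ContinuousOn.mul (by fun_prop) <| continuousOn_comp_crossRatio hρ fun _ hx =>
    (analyticAt_riemannProfile hx).continuousAt

lemma continuousOn_riemannKernelDeriv :
    ContinuousOn (fun q : ℝ × ℝ => riemannKernelDeriv ρ q.1 q.2) openQuadrant := by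
  have hprofile := continuousOn_comp_crossRatio hρ fun x hx =>
    (analyticAt_riemannProfile hx).continuousAt
  have hprofileDeriv := continuousOn_comp_crossRatio hρ fun x hx =>
    (analyticAt_riemannProfile hx).deriv.continuousAt
  have hne : ∀ q ∈ openQuadrant, q.2 + ρ ≠ 0 := fun q hq => (add_pos hq.2 hρ).ne'
  refine ContinuousOn.mul (by fun_prop) (ContinuousOn.add ?_ ?_)
  · exact hprofile.div (by fun_prop) fun q hq => mul_ne_zero two_ne_zero (hne q hq)
  · exact hprofileDeriv.mul ((continuousOn_sub_div_add_fst hρ).mul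
      (ContinuousOn.div (by fun_prop) (by fun_prop) fun q hq => pow_ne_zero 2 (hne q hq)))

lemma continuousOn_riemannKernelDeriv_swap :
    ContinuousOn (fun q : ℝ × ℝ => riemannKernelDeriv ρ q.2 q.1) openQuadrant :=
  (continuousOn_riemannKernelDeriv hρ).comp continuous_swap.continuousOn fun _ hq => ⟨hq.2, hq.1⟩

lemma continuousOn_riemannKernelMixedDeriv :
    ContinuousOn (fun q : ℝ × ℝ => riemannKernelMixedDeriv ρ q.1 q.2) openQuadrant :=
  ((continuousOn_riemannKernelDeriv hρ).add (continuousOn_riemannKernelDeriv_swap hρ)).div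
    (by fun_prop) fun _ hq => (mul_pos two_pos (add_pos hq.1 hq.2)).ne'

end Continuity

section Bounds

variable {ρ ξ η : ℝ} (hρ : 0 < ρ) (hξ : ρ ≤ ξ) (hη : ρ ≤ η)

include hρ hξ hη

lemma crossRatio_mem_Ico : crossRatio ρ ξ η ∈ Ico (0 : ℝ) 1 := by
  have hξ₀ := hρ.trans_le hξ
  have hη₀ := hρ.trans_le hη
  refine ⟨?_, lt_of_abs_lt (abs_crossRatio_lt_one hρ hξ₀ hη₀)⟩
  exact mul_nonneg (div_nonneg (by linarith) (by linarith)) (div_nonneg (by linarith) (by linarith))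

lemma riemannKernel_nonneg : 0 ≤ riemannKernel ρ ξ η :=
  mul_nonneg (by positivity) (riemannProfile_nonneg (crossRatio_mem_Ico hρ hξ hη).1)

lemma riemannKernel_le : riemannKernel ρ ξ η ≤ riemannProfile 1 * (ξ + η) := by
  obtain ⟨hX₀, hX₁⟩ := crossRatio_mem_Ico hρ hξ hη
  have hsqrt : √(ξ + ρ) * √(η + ρ) ≤ ξ + η := by
    rw [← Real.sqrt_mul (by linarith)]
    exact Real.sqrt_le_iff.2 ⟨by linarith, by nlinarith⟩
  rw [riemannKernel, mul_comm (riemannProfile 1)]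
  exact mul_le_mul hsqrt (riemannProfile_le_riemannProfile_one hX₀ hX₁)
    (riemannProfile_nonneg hX₀) (by linarith)

end Bounds

section Asymptotics

variable {ρ ξ η : ℝ}

lemma add_div_mul_add_le (hρ : 0 < ρ) (hξ : 0 < ξ) (hξη : ξ ≤ η) :
    (ξ + η) / ((ξ + ρ) * (η + ρ)) ≤ 2 / ξ := by
  have hη := hξ.trans_le hξη
  rw [div_le_div_iff₀ (by positivity) hξ]
  nlinarith [mul_pos hρ hξ, mul_pos hρ hη]

lemma sqrt_half_mul_sqrt_add_le (hρ : 0 < ρ) (hξ : ρ ≤ ξ) (hξη : ξ ≤ η) :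
    √(ρ / 2) * √(ξ + η) ≤ √(ξ * η) := by
  rw [← Real.sqrt_mul (by positivity)]
  exact Real.sqrt_le_sqrt (by nlinarith)

lemma sq_leadingTerm_sub_mul (hρ : 0 < ρ) (hξ : 0 < ξ) (hη : 0 < η) :
    (√((ξ + ρ) * (η + ρ)) * (1 - (1 - crossRatio ρ ξ η) / 4)) ^ 2 - ξ * η =
      ρ ^ 2 + ρ ^ 2 / 4 * ((ξ + η) * ((ξ + η) / ((ξ + ρ) * (η + ρ)))) := by
  rw [mul_pow, Real.sq_sqrt (by positivity), one_sub_crossRatio hρ hξ hη]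
  field_simp
  ring

/- The factor `1 - (1 - X) / 4` is exactly what turns `√((ξ + ρ) (η + ρ))` into `√(ξ η)` up to
terms that are integrable against the energy on the edges of large squares. -/
lemma abs_leadingTerm_sub_sqrt_le (hρ : 0 < ρ) (hξ : ρ ≤ ξ) (hξη : ξ ≤ η) :
    |√((ξ + ρ) * (η + ρ)) * (1 - (1 - crossRatio ρ ξ η) / 4) - √(ξ * η)| ≤
      3 / 2 * ρ ^ 2 / √(ρ / 2) * (√(ξ + η) / ξ) := by
  have hξ₀ := hρ.trans_le hξ
  have hη₀ := hξ₀.trans_le hξη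
  have hX := crossRatio_mem_Ico hρ hξ (hξ.trans hξη)
  have hsq := sq_leadingTerm_sub_mul hρ hξ₀ hη₀
  set y := √((ξ + ρ) * (η + ρ)) * (1 - (1 - crossRatio ρ ξ η) / 4)
  have hy : 0 ≤ y := mul_nonneg (Real.sqrt_nonneg _) (by linarith [hX.1])
  have hk : √(ξ * η) ^ 2 = ξ * η := Real.sq_sqrt (by positivity)
  have hky : √(ξ * η) ≤ y := Real.sqrt_le_iff.2 ⟨hy, by rw [← sub_nonneg, hsq]; positivity⟩
  have hupper : y ^ 2 - ξ * η ≤ 3 / 2 * ρ ^ 2 * ((ξ + η) / ξ) := by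
    have hone : 1 ≤ (ξ + η) / ξ := by rw [le_div_iff₀ hξ₀]; linarith
    calc y ^ 2 - ξ * η ≤ ρ ^ 2 * ((ξ + η) / ξ) + ρ ^ 2 / 4 * ((ξ + η) * (2 / ξ)) := by
          rw [hsq]
          gcongr ?_ + _ * (_ * ?_)
          · exact le_mul_of_one_le_right (by positivity) hone
          · exact add_div_mul_add_le hρ hξ₀ hξη
      _ = 3 / 2 * ρ ^ 2 * ((ξ + η) / ξ) := by ring
  rw [abs_of_nonneg (sub_nonneg.2 hky)]
  calc y - √(ξ * η) ≤ 3 / 2 * ρ ^ 2 * (√(ξ + η) ^ 2 / ξ) / (√(ρ / 2) * √(ξ + η)) := by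
        rw [le_div_iff₀ (by positivity), Real.sq_sqrt (by positivity)]
        calc (y - √(ξ * η)) * (√(ρ / 2) * √(ξ + η)) ≤ (y - √(ξ * η)) * (y + √(ξ * η)) := by
              gcongr
              linarith [sqrt_half_mul_sqrt_add_le hρ hξ hξη]
          _ = y ^ 2 - ξ * η := by linear_combination -hk
          _ ≤ _ := hupper
    _ = 3 / 2 * ρ ^ 2 / √(ρ / 2) * (√(ξ + η) / ξ) := by field_simp

lemma sqrt_mul_one_sub_crossRatio_le (hρ : 0 < ρ) (hξ : 0 < ξ) (hξη : ξ ≤ η) :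
    √((ξ + ρ) * (η + ρ)) * ((1 - crossRatio ρ ξ η) * √(1 - crossRatio ρ ξ η)) ≤
      4 * ρ * √(2 * ρ) * (√(ξ + η) / ξ) := by
  have hη := hξ.trans_le hξη
  rw [one_sub_crossRatio hρ hξ hη, Real.sqrt_div (by positivity),
    Real.sqrt_mul (by positivity) (ξ + η)]
  have hP : 0 < (ξ + ρ) * (η + ρ) := by positivity
  set P := (ξ + ρ) * (η + ρ)
  calc √P * (2 * ρ * (ξ + η) / P * (√(2 * ρ) * √(ξ + η) / √P))
      = 2 * ρ * √(2 * ρ) * √(ξ + η) * ((ξ + η) / P) := by field_simp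
    _ ≤ 2 * ρ * √(2 * ρ) * √(ξ + η) * (2 / ξ) := by
        gcongr ?_ * ?_
        exact add_div_mul_add_le hρ hξ hξη
    _ = 4 * ρ * √(2 * ρ) * (√(ξ + η) / ξ) := by ring

lemma exists_abs_riemannKernel_sub_le (hρ : 0 < ρ) :
    ∃ C : ℝ, 0 ≤ C ∧ ∀ ξ η, ρ ≤ ξ → ξ ≤ η →
      |riemannKernel ρ ξ η - riemannProfile 1 * √(ξ * η)| ≤ C * (√(ξ + η) / ξ) := by
  obtain ⟨C₀, hC₀, hprofile⟩ := exists_abs_riemannProfile_sub_le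
  have hψ := riemannProfile_nonneg zero_le_one
  refine ⟨C₀ * (4 * ρ * √(2 * ρ)) + riemannProfile 1 * (3 / 2 * ρ ^ 2 / √(ρ / 2)),
    by positivity, fun ξ η hξ hξη => ?_⟩
  obtain ⟨hX₀, hX₁⟩ := crossRatio_mem_Ico hρ hξ (hξ.trans hξη)
  have hξ₀ := hρ.trans_le hξ
  have hprofile := hprofile _ hX₀ hX₁
  have hremainder := sqrt_mul_one_sub_crossRatio_le hρ hξ₀ hξη
  have hleading := abs_leadingTerm_sub_sqrt_le hρ hξ hξη
  rw [riemannKernel, ← Real.sqrt_mul (by positivity)]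
  set x := crossRatio ρ ξ η
  set Q := √((ξ + ρ) * (η + ρ))
  have hQ : 0 ≤ Q := Real.sqrt_nonneg _
  calc |Q * riemannProfile x - riemannProfile 1 * √(ξ * η)|
      = |Q * (riemannProfile x - riemannProfile 1 * (1 - (1 - x) / 4)) +
          riemannProfile 1 * (Q * (1 - (1 - x) / 4) - √(ξ * η))| := by ring_nf
    _ ≤ Q * |riemannProfile x - riemannProfile 1 * (1 - (1 - x) / 4)| +
          riemannProfile 1 * |Q * (1 - (1 - x) / 4) - √(ξ * η)| := by
        refine (abs_add_le _ _).trans_eq ?_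
        rw [abs_mul, abs_mul, abs_of_nonneg hQ, abs_of_nonneg hψ]
    _ ≤ Q * (C₀ * ((1 - x) * √(1 - x))) +
          riemannProfile 1 * (3 / 2 * ρ ^ 2 / √(ρ / 2) * (√(ξ + η) / ξ)) := by gcongr
    _ = C₀ * (Q * ((1 - x) * √(1 - x))) +
          riemannProfile 1 * (3 / 2 * ρ ^ 2 / √(ρ / 2) * (√(ξ + η) / ξ)) := by ring
    _ ≤ C₀ * (4 * ρ * √(2 * ρ) * (√(ξ + η) / ξ)) +
          riemannProfile 1 * (3 / 2 * ρ ^ 2 / √(ρ / 2) * (√(ξ + η) / ξ)) := by gcongr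
    _ = _ := by ring

lemma exists_abs_riemannKernel_le (hρ : 0 < ρ) (ρ₁ : ℝ) :
    ∃ C : ℝ, 0 ≤ C ∧ ∀ ξ η, ρ ≤ ξ → ξ ≤ ρ₁ → ξ ≤ η →
      |riemannKernel ρ ξ η| ≤ C * (√(ξ + η) / ξ) := by
  obtain ⟨C, hC, hkernel⟩ := exists_abs_riemannKernel_sub_le hρ
  have hψ := riemannProfile_nonneg zero_le_one
  refine ⟨C + riemannProfile 1 * (√ρ₁ * |ρ₁|), by positivity, fun ξ η hξ hξρ₁ hξη => ?_⟩
  have hξ₀ := hρ.trans_le hξ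
  have hsqrt : √(ξ * η) ≤ √ρ₁ * |ρ₁| * (√(ξ + η) / ξ) := by
    rw [Real.sqrt_mul hξ₀.le, ← mul_div_assoc, le_div_iff₀ hξ₀]
    calc √ξ * √η * ξ ≤ √ρ₁ * √(ξ + η) * |ρ₁| := by
          gcongr
          · linarith
          · exact hξρ₁.trans (le_abs_self _)
      _ = √ρ₁ * |ρ₁| * √(ξ + η) := by ring
  calc |riemannKernel ρ ξ η|
      ≤ |riemannKernel ρ ξ η - riemannProfile 1 * √(ξ * η)| + riemannProfile 1 * √(ξ * η) := by
        have := abs_sub_abs_le_abs_sub (riemannKernel ρ ξ η) (riemannProfile 1 * √(ξ * η))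
        rw [abs_of_nonneg (by positivity : 0 ≤ riemannProfile 1 * √(ξ * η))] at this
        linarith
    _ ≤ C * (√(ξ + η) / ξ) + riemannProfile 1 * (√ρ₁ * |ρ₁| * (√(ξ + η) / ξ)) := by
        gcongr
        exact hkernel ξ η hξ hξη
    _ = _ := by ring

lemma exists_abs_riemannKernel_sub_riemannKernel_le {ρ₀ ρ₁ : ℝ} (h₀ : 0 < ρ₀) (h₁ : 0 < ρ₁) :
    ∃ C : ℝ, 0 ≤ C ∧ ∀ ξ η, ρ₀ ≤ ξ → ρ₁ ≤ ξ → ξ ≤ η →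
      |riemannKernel ρ₀ ξ η - riemannKernel ρ₁ ξ η| ≤ C * (√(ξ + η) / ξ) := by
  obtain ⟨C₀, hC₀, hkernel₀⟩ := exists_abs_riemannKernel_sub_le h₀
  obtain ⟨C₁, hC₁, hkernel₁⟩ := exists_abs_riemannKernel_sub_le h₁
  refine ⟨C₀ + C₁, add_nonneg hC₀ hC₁, fun ξ η hξ₀ hξ₁ hξη => ?_⟩
  rw [add_mul]
  refine le_trans ?_ (add_le_add (hkernel₀ ξ η hξ₀ hξη) (hkernel₁ ξ η hξ₁ hξη))
  rw [← sub_sub_sub_cancel_right _ _ (riemannProfile 1 * √(ξ * η))]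
  exact abs_sub _ _

end Asymptotics

/-! ### Green's identity on a square -/

section Divergence

lemma setIntegral_Icc_eq_sub_of_hasDerivAt {f f' : ℝ → ℝ} {a b : ℝ} (hab : a ≤ b)
    (hf : ∀ x ∈ Icc a b, HasDerivAt f (f' x) x) (hf' : ContinuousOn f' (Icc a b)) :
    ∫ x in Icc a b, f' x = f b - f a := by
  rw [integral_Icc_eq_integral_Ioc, ← intervalIntegral.integral_of_le hab]
  rw [← uIcc_of_le hab] at hf hf'
  exact intervalIntegral.integral_eq_sub_of_hasDerivAt hf hf'.intervalIntegrable

lemma continuousOn_slice {f : ℝ × ℝ → ℝ} {s t : Set ℝ} (hf : ContinuousOn f (s ×ˢ t)) {c : ℝ}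
    (hc : c ∈ s) : ContinuousOn (fun y => f (c, y)) t :=
  hf.comp (by fun_prop) fun _ hy => ⟨hc, hy⟩

lemma continuousOn_prod_swap {f : ℝ × ℝ → ℝ} {s t : Set ℝ} (hf : ContinuousOn f (s ×ˢ t)) :
    ContinuousOn (fun q : ℝ × ℝ => f (q.2, q.1)) (t ×ˢ s) :=
  hf.comp (by fun_prop) fun _ hq => ⟨hq.2, hq.1⟩

lemma setIntegral_divergence_prod {A A' B B' : ℝ → ℝ → ℝ} {a b c d : ℝ} (hab : a ≤ b) (hcd : c ≤ d)
    (hA : ∀ x ∈ Icc a b, ∀ y ∈ Icc c d, HasDerivAt (fun x => A x y) (A' x y) x)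
    (hB : ∀ x ∈ Icc a b, ∀ y ∈ Icc c d, HasDerivAt (fun y => B x y) (B' x y) y)
    (hA' : ContinuousOn (fun q : ℝ × ℝ => A' q.1 q.2) (Icc a b ×ˢ Icc c d))
    (hB' : ContinuousOn (fun q : ℝ × ℝ => B' q.1 q.2) (Icc a b ×ˢ Icc c d)) :
    ∫ q in Icc a b ×ˢ Icc c d, (A' q.1 q.2 + B' q.1 q.2) =
      (∫ y in Icc c d, (A b y - A a y)) + ∫ x in Icc a b, (B x d - B x c) := by
  have hcompact : IsCompact (Icc a b ×ˢ Icc c d) := isCompact_Icc.prod isCompact_Icc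
  have hA'int := hA'.integrableOn_compact (μ := volume) hcompact
  have hB'int := hB'.integrableOn_compact (μ := volume) hcompact
  rw [integral_add hA'int hB'int]
  congr 1
  · rw [IntegrableOn, Measure.volume_eq_prod, ← Measure.prod_restrict] at hA'int
    rw [Measure.volume_eq_prod, ← Measure.prod_restrict, integral_prod_symm _ hA'int]
    exact setIntegral_congr_fun measurableSet_Icc fun y hy =>
      setIntegral_Icc_eq_sub_of_hasDerivAt hab (fun x hx => hA x hx y hy)
        (continuousOn_slice (continuousOn_prod_swap hA') hy)
  · rw [Measure.volume_eq_prod] at hB'int ⊢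
    rw [setIntegral_prod _ hB'int]
    exact setIntegral_congr_fun measurableSet_Icc fun x hx =>
      setIntegral_Icc_eq_sub_of_hasDerivAt hcd (hB x hx) (continuousOn_slice hB' hx)

end Divergence

/-- The `ξ`-component of the vector field whose divergence expresses the duality between the wave
operator applied to `b` and the adjoint operator applied to the Riemann kernel; `b'` stands for
`∂_η b`. The `η`-component is the same expression with the two variables exchanged. -/
noncomputable def greenFlux (ρ : ℝ) (b b' : ℝ → ℝ → ℝ) (ξ η : ℝ) : ℝ :=
  ((ξ + η) * (riemannKernel ρ ξ η * b' ξ η - riemannKernelDeriv ρ ξ η * b ξ η) +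
    2 * riemannKernel ρ ξ η * b ξ η) / 2

/-- The `ξ`-derivative of `greenFlux ρ b b'`, where `bξ` and `bξη` stand for `∂_ξ b` and
`∂_ξ b'`. -/
noncomputable def greenFluxDeriv (ρ : ℝ) (b bξ b' bξη : ℝ → ℝ → ℝ) (ξ η : ℝ) : ℝ :=
  ((riemannKernel ρ ξ η * b' ξ η - riemannKernelDeriv ρ ξ η * b ξ η) +
    (ξ + η) * (riemannKernelDeriv ρ η ξ * b' ξ η + riemannKernel ρ ξ η * bξη ξ η -
      riemannKernelMixedDeriv ρ ξ η * b ξ η - riemannKernelDeriv ρ ξ η * bξ ξ η) +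
    2 * riemannKernelDeriv ρ η ξ * b ξ η + 2 * riemannKernel ρ ξ η * bξ ξ η) / 2

lemma hasDerivAt_greenFlux {ρ ξ η : ℝ} (hρ : 0 < ρ) (hξ : 0 < ξ) (hη : 0 < η)
    {b bξ b' bξη : ℝ → ℝ → ℝ} (hb : HasDerivAt (fun x => b x η) (bξ ξ η) ξ)
    (hb' : HasDerivAt (fun x => b' x η) (bξη ξ η) ξ) :
    HasDerivAt (fun x => greenFlux ρ b b' x η) (greenFluxDeriv ρ b bξ b' bξη ξ η) ξ := by
  have hkernel := hasDerivAt_riemannKernel_left hρ hξ hη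
  have hkernel' := hasDerivAt_riemannKernelDeriv_left hρ hξ hη
  refine (((((hasDerivAt_id' ξ).add_const η).mul ((hkernel.mul hb').sub (hkernel'.mul hb))).add
    ((hkernel.const_mul 2).mul hb)).div_const 2).congr_deriv ?_
  simp only [greenFluxDeriv, Pi.mul_apply, Pi.sub_apply]
  ring

lemma greenFluxDeriv_add_greenFluxDeriv_swap {ρ ξ η F : ℝ} (hne : ξ + η ≠ 0)
    {a aξ aη aξη aηξ : ℝ → ℝ → ℝ}
    (hpde : (ξ + η) * (aηξ ξ η + aξη ξ η) + 3 * (aξ ξ η + aη ξ η) = -((ξ + η) / 2) * F) :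
    greenFluxDeriv ρ a aξ aη aηξ ξ η +
      greenFluxDeriv ρ (fun y x => a x y) (fun y x => aη x y) (fun y x => aξ x y)
        (fun y x => aξη x y) η ξ =
      -(1 / 4) * ((ξ + η) * riemannKernel ρ ξ η * F) := by
  have hadjoint : 2 * (ξ + η) * riemannKernelMixedDeriv ρ ξ η =
      riemannKernelDeriv ρ ξ η + riemannKernelDeriv ρ η ξ :=
    mul_div_cancel₀ _ (mul_ne_zero two_ne_zero hne)
  simp only [greenFluxDeriv, riemannKernel_comm ρ η ξ, riemannKernelMixedDeriv_comm ρ η ξ]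
  linear_combination riemannKernel ρ ξ η / 2 * hpde - a ξ η / 2 * hadjoint

section Square

variable {ρ Λ : ℝ} (hρ : 0 < ρ)

include hρ

lemma continuousOn_greenFluxDeriv {b bξ b' bξη : ℝ → ℝ → ℝ}
    (hb : ContinuousOn (fun q : ℝ × ℝ => b q.1 q.2) (Icc ρ Λ ×ˢ Icc ρ Λ))
    (hbξ : ContinuousOn (fun q : ℝ × ℝ => bξ q.1 q.2) (Icc ρ Λ ×ˢ Icc ρ Λ))
    (hb' : ContinuousOn (fun q : ℝ × ℝ => b' q.1 q.2) (Icc ρ Λ ×ˢ Icc ρ Λ))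
    (hbξη : ContinuousOn (fun q : ℝ × ℝ => bξη q.1 q.2) (Icc ρ Λ ×ˢ Icc ρ Λ)) :
    ContinuousOn (fun q : ℝ × ℝ => greenFluxDeriv ρ b bξ b' bξη q.1 q.2)
      (Icc ρ Λ ×ˢ Icc ρ Λ) := by
  have hsub := Icc_prod_Icc_subset_openQuadrant (b := Λ) hρ
  have hkernel := (continuousOn_riemannKernel hρ).mono hsub
  have hkernelη := (continuousOn_riemannKernelDeriv hρ).mono hsub
  have hkernelξ := (continuousOn_riemannKernelDeriv_swap hρ).mono hsub
  have hkernelξη := (continuousOn_riemannKernelMixedDeriv hρ).mono hsub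
  unfold greenFluxDeriv
  fun_prop

variable (hρΛ : ρ ≤ Λ)

include hρΛ

lemma setIntegral_deriv_add_mul_riemannKernel_mul {b b' : ℝ → ℝ → ℝ}
    (hb : ∀ ξ ∈ Icc ρ Λ, ∀ η ∈ Icc ρ Λ, HasDerivAt (b ξ) (b' ξ η) η)
    (hb' : ContinuousOn (fun q : ℝ × ℝ => b' q.1 q.2) (Icc ρ Λ ×ˢ Icc ρ Λ))
    {c : ℝ} (hc : c ∈ Icc ρ Λ) :
    IntegrableOn (fun η => riemannKernel ρ c η * b c η +
        (c + η) * (riemannKernelDeriv ρ c η * b c η + riemannKernel ρ c η * b' c η)) (Icc ρ Λ) ∧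
      ∫ η in Icc ρ Λ, (riemannKernel ρ c η * b c η +
        (c + η) * (riemannKernelDeriv ρ c η * b c η + riemannKernel ρ c η * b' c η)) =
      (c + Λ) * riemannKernel ρ c Λ * b c Λ - (c + ρ) * riemannKernel ρ c ρ * b c ρ := by
  have hsub := Icc_prod_Icc_subset_openQuadrant (b := Λ) hρ
  have hcont : ContinuousOn (fun η => riemannKernel ρ c η * b c η +
      (c + η) * (riemannKernelDeriv ρ c η * b c η + riemannKernel ρ c η * b' c η)) (Icc ρ Λ) := by
    have hkernel := continuousOn_slice ((continuousOn_riemannKernel hρ).mono hsub) hc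
    have hkernel' := continuousOn_slice ((continuousOn_riemannKernelDeriv hρ).mono hsub) hc
    have hbc : ContinuousOn (b c) (Icc ρ Λ) := fun η hη =>
      (hb c hc η hη).continuousAt.continuousWithinAt
    have hb'c := continuousOn_slice hb' hc
    fun_prop
  refine ⟨hcont.integrableOn_Icc, setIntegral_Icc_eq_sub_of_hasDerivAt hρΛ
    (f := fun η => (c + η) * riemannKernel ρ c η * b c η) (fun η hη => ?_) hcont⟩
  have hkernel := hasDerivAt_riemannKernel_right hρ (hρ.trans_le hc.1) (hρ.trans_le hη.1)
  refine ((((hasDerivAt_id' η).const_add c).mul hkernel).mul (hb c hc η hη)).congr_deriv ?_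
  simp only [Pi.mul_apply]
  ring

/- On the inner edge `ξ = ρ` the flux is an exact derivative, so that only corner values remain. -/
lemma setIntegral_greenFlux_sub {b b' : ℝ → ℝ → ℝ}
    (hb : ∀ ξ ∈ Icc ρ Λ, ∀ η ∈ Icc ρ Λ, HasDerivAt (b ξ) (b' ξ η) η)
    (hb' : ContinuousOn (fun q : ℝ × ℝ => b' q.1 q.2) (Icc ρ Λ ×ˢ Icc ρ Λ)) :
    ∫ η in Icc ρ Λ, (greenFlux ρ b b' Λ η - greenFlux ρ b b' ρ η) =
      (∫ η in Icc ρ Λ, riemannKernel ρ Λ η * ((Λ + η) * b' Λ η + 3 / 2 * b Λ η)) -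
        ((Λ + Λ) * riemannKernel ρ Λ Λ * b Λ Λ - (Λ + ρ) * riemannKernel ρ Λ ρ * b Λ ρ) / 2 -
        ((ρ + Λ) * riemannKernel ρ ρ Λ * b ρ Λ - (ρ + ρ) * riemannKernel ρ ρ ρ * b ρ ρ) / 2 := by
  have hΛ : Λ ∈ Icc ρ Λ := right_mem_Icc.2 hρΛ
  obtain ⟨hintΛ, hFTCΛ⟩ := setIntegral_deriv_add_mul_riemannKernel_mul hρ hρΛ hb hb' hΛ
  obtain ⟨hintρ, hFTCρ⟩ :=
    setIntegral_deriv_add_mul_riemannKernel_mul hρ hρΛ hb hb' (left_mem_Icc.2 hρΛ)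
  have hcont : ContinuousOn
      (fun η => riemannKernel ρ Λ η * ((Λ + η) * b' Λ η + 3 / 2 * b Λ η)) (Icc ρ Λ) := by
    have hkernel := continuousOn_slice
      ((continuousOn_riemannKernel hρ).mono (Icc_prod_Icc_subset_openQuadrant hρ)) hΛ
    have hbΛ : ContinuousOn (b Λ) (Icc ρ Λ) := fun η hη =>
      (hb Λ hΛ η hη).continuousAt.continuousWithinAt
    have hb'Λ := continuousOn_slice hb' hΛ
    fun_prop
  rw [← hFTCΛ, ← hFTCρ, sub_sub, ← add_div, ← integral_add hintΛ hintρ, ← integral_div]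
  refine Eq.trans ?_ (integral_sub hcont.integrableOn_Icc ((hintΛ.add hintρ).div_const 2))
  refine setIntegral_congr_fun measurableSet_Icc fun η hη => ?_
  have hedge := add_mul_riemannKernelDeriv_left_self (ρ := ρ) (η := η) (by linarith [hη.1])
  simp only [greenFlux]
  linear_combination b ρ η * hedge

/- Here `aξ`, `aη`, `aξη`, `aηξ` are the derivatives of `a` and the equation `hpde` is
`∂_ξ ∂_η a + (3 / 2) (∂_ξ a + ∂_η a) / (ξ + η) = -F / 4`. -/
lemma four_mul_sq_mul_eq_of_wave {a aξ aη aξη aηξ F : ℝ → ℝ → ℝ}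
    (hξ : ∀ ξ ∈ Icc ρ Λ, ∀ η ∈ Icc ρ Λ, HasDerivAt (fun x => a x η) (aξ ξ η) ξ)
    (hη : ∀ ξ ∈ Icc ρ Λ, ∀ η ∈ Icc ρ Λ, HasDerivAt (fun y => a ξ y) (aη ξ η) η)
    (hηξ : ∀ ξ ∈ Icc ρ Λ, ∀ η ∈ Icc ρ Λ, HasDerivAt (fun x => aη x η) (aηξ ξ η) ξ)
    (hξη : ∀ ξ ∈ Icc ρ Λ, ∀ η ∈ Icc ρ Λ, HasDerivAt (fun y => aξ ξ y) (aξη ξ η) η)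
    (ha : ContinuousOn (fun q : ℝ × ℝ => a q.1 q.2) (Icc ρ Λ ×ˢ Icc ρ Λ))
    (haξ : ContinuousOn (fun q : ℝ × ℝ => aξ q.1 q.2) (Icc ρ Λ ×ˢ Icc ρ Λ))
    (haη : ContinuousOn (fun q : ℝ × ℝ => aη q.1 q.2) (Icc ρ Λ ×ˢ Icc ρ Λ))
    (haηξ : ContinuousOn (fun q : ℝ × ℝ => aηξ q.1 q.2) (Icc ρ Λ ×ˢ Icc ρ Λ))
    (haξη : ContinuousOn (fun q : ℝ × ℝ => aξη q.1 q.2) (Icc ρ Λ ×ˢ Icc ρ Λ))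
    (hpde : ∀ ξ ∈ Icc ρ Λ, ∀ η ∈ Icc ρ Λ,
      (ξ + η) * (aηξ ξ η + aξη ξ η) + 3 * (aξ ξ η + aη ξ η) = -((ξ + η) / 2) * F ξ η) :
    4 * ρ ^ 2 * a ρ ρ = 2 * Λ * riemannKernel ρ Λ Λ * a Λ Λ -
      (∫ ξ in Icc ρ Λ, riemannKernel ρ ξ Λ * ((ξ + Λ) * aξ ξ Λ + 3 / 2 * a ξ Λ)) -
      (∫ η in Icc ρ Λ, riemannKernel ρ Λ η * ((Λ + η) * aη Λ η + 3 / 2 * a Λ η)) -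
      1 / 4 * ∫ q in Icc ρ Λ ×ˢ Icc ρ Λ, (q.1 + q.2) * riemannKernel ρ q.1 q.2 * F q.1 q.2 := by
  have hpos : ∀ x ∈ Icc ρ Λ, 0 < x := fun x hx => hρ.trans_le hx.1
  have hdiv := setIntegral_divergence_prod hρΛ hρΛ
    (fun ξ hξI η hηI => hasDerivAt_greenFlux hρ (hpos ξ hξI) (hpos η hηI)
      (hξ ξ hξI η hηI) (hηξ ξ hξI η hηI))
    (fun ξ hξI η hηI => hasDerivAt_greenFlux hρ (hpos η hηI) (hpos ξ hξI)
      (b := fun y x => a x y) (b' := fun y x => aξ x y) (bξ := fun y x => aη x y)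
      (bξη := fun y x => aξη x y) (hη ξ hξI η hηI) (hξη ξ hξI η hηI))
    (continuousOn_greenFluxDeriv hρ ha haξ haη haηξ)
    (continuousOn_prod_swap (continuousOn_greenFluxDeriv hρ (continuousOn_prod_swap ha)
      (continuousOn_prod_swap haη) (continuousOn_prod_swap haξ) (continuousOn_prod_swap haξη)))
  have hinterior : ∫ q in Icc ρ Λ ×ˢ Icc ρ Λ, (greenFluxDeriv ρ a aξ aη aηξ q.1 q.2 +
      greenFluxDeriv ρ (fun y x => a x y) (fun y x => aη x y) (fun y x => aξ x y)
        (fun y x => aξη x y) q.2 q.1) =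
      -(1 / 4) * ∫ q in Icc ρ Λ ×ˢ Icc ρ Λ,
        (q.1 + q.2) * riemannKernel ρ q.1 q.2 * F q.1 q.2 := by
    rw [← integral_const_mul]
    exact setIntegral_congr_fun (measurableSet_Icc.prod measurableSet_Icc) fun q hq =>
      greenFluxDeriv_add_greenFluxDeriv_swap (add_pos (hpos _ hq.1) (hpos _ hq.2)).ne'
        (hpde q.1 hq.1 q.2 hq.2)
  rw [hinterior, setIntegral_greenFlux_sub hρ hρΛ hη haη,
    setIntegral_greenFlux_sub hρ hρΛ (fun η hηI ξ hξI => hξ ξ hξI η hηI)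
      (continuousOn_prod_swap haξ), riemannKernel_self hρ.le, riemannKernel_comm ρ Λ ρ] at hdiv
  simp only [riemannKernel_comm ρ _ Λ, add_comm _ Λ] at hdiv ⊢
  linear_combination -hdiv

end Square

/-! ### Smooth functions on the exterior cone in null coordinates -/

/-- The region `{r > |t|}`. -/
def exteriorCone : Set (ℝ × ℝ) := {q | |q.1| < q.2}

/-- Smoothness of a function of `(t, r)` on the region `{r > |t|}`. -/
def SmoothOnCone (u : ℝ → ℝ → ℝ) : Prop :=
  ContDiffOn ℝ (⊤ : ℕ∞) (fun q : ℝ × ℝ => u q.1 q.2) exteriorCone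

/-- The radial derivative `∂_r u` of a function of `(t, r)`. -/
noncomputable def dru (u : ℝ → ℝ → ℝ) (t r : ℝ) : ℝ := deriv (u t) r

/-- The time coordinate of the point with null coordinates `ξ = r - (t - t₀)`,
`η = r + (t - t₀)`. -/
noncomputable def nullTime (t₀ ξ η : ℝ) : ℝ := t₀ + (η - ξ) / 2

/-- The radius of the point with null coordinates `ξ = r - (t - t₀)`, `η = r + (t - t₀)`. -/
noncomputable def nullRadius (ξ η : ℝ) : ℝ := (ξ + η) / 2

/-- The focusing nonlinearity `|x|^{p-1} x`. -/
def powerNonlinearity (p : ℕ) (x : ℝ) : ℝ := |x| ^ (p - 1) * x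

lemma isOpen_exteriorCone : IsOpen exteriorCone :=
  isOpen_lt (by fun_prop) (by fun_prop)

lemma nullTime_self (t₀ x : ℝ) : nullTime t₀ x x = t₀ := by simp [nullTime]

lemma nullRadius_self (x : ℝ) : nullRadius x x = x := by simp [nullRadius]

lemma abs_nullTime_lt_nullRadius {t₀ ξ η : ℝ} (hξ : |t₀| < ξ) (hη : |t₀| < η) :
    |nullTime t₀ ξ η| < nullRadius ξ η := by
  rw [abs_lt] at hξ hη
  simp only [nullTime, nullRadius, abs_lt]
  constructor <;> linarith

namespace SmoothOnCone

variable {u : ℝ → ℝ → ℝ} (h : SmoothOnCone u) {t r : ℝ}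

include h

lemma hasFDerivAt (hr : |t| < r) :
    HasFDerivAt (fun q : ℝ × ℝ => u q.1 q.2)
      (fderiv ℝ (fun q : ℝ × ℝ => u q.1 q.2) (t, r)) (t, r) :=
  ((h.contDiffAt (isOpen_exteriorCone.mem_nhds hr)).differentiableAt (by simp)).hasFDerivAt

lemma hasDerivAt_dtu (hr : |t| < r) : HasDerivAt (fun s => u s r) (dtu u t r) t :=
  ((h.hasFDerivAt hr).comp_hasDerivAt (f := fun s => (s, r)) t
    ((hasDerivAt_id' t).prodMk (hasDerivAt_const t r))).differentiableAt.hasDerivAt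

lemma hasDerivAt_dru (hr : |t| < r) : HasDerivAt (u t) (dru u t r) r :=
  ((h.hasFDerivAt hr).comp_hasDerivAt (f := fun s => (t, s)) r
    ((hasDerivAt_const r t).prodMk (hasDerivAt_id' r))).differentiableAt.hasDerivAt

lemma fderiv_time (hr : |t| < r) :
    fderiv ℝ (fun q : ℝ × ℝ => u q.1 q.2) (t, r) (1, 0) = dtu u t r :=
  ((h.hasFDerivAt hr).comp_hasDerivAt (f := fun s => (s, r)) t
    ((hasDerivAt_id' t).prodMk (hasDerivAt_const t r))).unique (h.hasDerivAt_dtu hr)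

lemma fderiv_radius (hr : |t| < r) :
    fderiv ℝ (fun q : ℝ × ℝ => u q.1 q.2) (t, r) (0, 1) = dru u t r :=
  ((h.hasFDerivAt hr).comp_hasDerivAt (f := fun s => (t, s)) r
    ((hasDerivAt_const r t).prodMk (hasDerivAt_id' r))).unique (h.hasDerivAt_dru hr)

lemma hasDerivAt_comp {α β : ℝ → ℝ} {α' β' x : ℝ} (hα : HasDerivAt α α' x)
    (hβ : HasDerivAt β β' x) (hx : |α x| < β x) :
    HasDerivAt (fun y => u (α y) (β y))
      (α' * dtu u (α x) (β x) + β' * dru u (α x) (β x)) x := by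
  refine ((h.hasFDerivAt hx).comp_hasDerivAt (f := fun y => (α y, β y)) x
    (hα.prodMk hβ)).congr_deriv ?_
  have hvec : ((α', β') : ℝ × ℝ) = α' • ((1, 0) : ℝ × ℝ) + β' • ((0, 1) : ℝ × ℝ) := by simp
  rw [hvec, map_add, map_smul, map_smul, h.fderiv_time hx, h.fderiv_radius hx, smul_eq_mul,
    smul_eq_mul]

lemma fderiv_apply (v : ℝ × ℝ) :
    ContDiffOn ℝ (⊤ : ℕ∞) (fun q => fderiv ℝ (fun q : ℝ × ℝ => u q.1 q.2) q v) exteriorCone :=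
  (h.fderiv_of_isOpen isOpen_exteriorCone (by simp)).clm_apply contDiffOn_const

lemma dtu : SmoothOnCone (dtu u) :=
  (h.fderiv_apply (1, 0)).congr fun _ hq => (h.fderiv_time hq).symm

lemma dru : SmoothOnCone (dru u) :=
  (h.fderiv_apply (0, 1)).congr fun _ hq => (h.fderiv_radius hq).symm

lemma continuousOn_slice {s : Set ℝ} (hs : ∀ r ∈ s, |t| < r) : ContinuousOn (u t) s :=
  h.continuousOn.comp (f := fun r => (t, r)) (by fun_prop) hs

lemma hasDerivAt_null_left {t₀ ξ η : ℝ} (hξ : |t₀| < ξ) (hη : |t₀| < η) :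
    HasDerivAt (fun x => u (nullTime t₀ x η) (nullRadius x η))
      ((RadialWave.dru u (nullTime t₀ ξ η) (nullRadius ξ η) -
        _root_.dtu u (nullTime t₀ ξ η) (nullRadius ξ η)) / 2) ξ := by
  refine (h.hasDerivAt_comp ((((hasDerivAt_id' ξ).const_sub η).div_const 2).const_add t₀)
    (((hasDerivAt_id' ξ).add_const η).div_const 2)
    (abs_nullTime_lt_nullRadius hξ hη)).congr_deriv ?_
  rw [nullTime, nullRadius]
  ring

lemma hasDerivAt_null_right {t₀ ξ η : ℝ} (hξ : |t₀| < ξ) (hη : |t₀| < η) :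
    HasDerivAt (fun y => u (nullTime t₀ ξ y) (nullRadius ξ y))
      ((RadialWave.dru u (nullTime t₀ ξ η) (nullRadius ξ η) +
        _root_.dtu u (nullTime t₀ ξ η) (nullRadius ξ η)) / 2) η := by
  refine (h.hasDerivAt_comp ((((hasDerivAt_id' η).sub_const ξ).div_const 2).const_add t₀)
    (((hasDerivAt_id' η).const_add ξ).div_const 2)
    (abs_nullTime_lt_nullRadius hξ hη)).congr_deriv ?_
  rw [nullTime, nullRadius]
  ring

lemma continuousOn_null {t₀ : ℝ} {s : Set (ℝ × ℝ)} (hs : ∀ q ∈ s, |t₀| < q.1 ∧ |t₀| < q.2) :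
    ContinuousOn (fun q : ℝ × ℝ => u (nullTime t₀ q.1 q.2) (nullRadius q.1 q.2)) s := by
  refine h.continuousOn.comp (f := fun q : ℝ × ℝ => (nullTime t₀ q.1 q.2, nullRadius q.1 q.2))
    ?_ fun q hq => abs_nullTime_lt_nullRadius (hs q hq).1 (hs q hq).2
  unfold nullTime nullRadius
  fun_prop

end SmoothOnCone

section Solution

variable {p : ℕ} {u : ℝ → ℝ → ℝ} (h : IsExtSol p ⊤ 0 u)

include h

lemma smoothOnCone_of_isExtSol : SmoothOnCone u := by
  simpa only [zero_add, SmoothOnCone, exteriorCone] using h.1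

lemma wave_eq_of_isExtSol {t r : ℝ} (hr : |t| < r) :
    dtu (dtu u) t r - dru (dru u) t r - (3 / r) * dru u t r = powerNonlinearity p (u t r) :=
  h.2 t r (by rwa [zero_add])

lemma four_mul_sq_mul_eq_of_isExtSol {t₀ ρ Λ : ℝ} (hρ : |t₀| < ρ) (hρΛ : ρ ≤ Λ) :
    4 * ρ ^ 2 * u t₀ ρ = 2 * Λ * riemannKernel ρ Λ Λ * u t₀ Λ -
      (∫ ξ in Icc ρ Λ, riemannKernel ρ ξ Λ * ((ξ + Λ) *
        ((dru u (nullTime t₀ ξ Λ) (nullRadius ξ Λ) -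
          dtu u (nullTime t₀ ξ Λ) (nullRadius ξ Λ)) / 2) +
        3 / 2 * u (nullTime t₀ ξ Λ) (nullRadius ξ Λ))) -
      (∫ η in Icc ρ Λ, riemannKernel ρ Λ η * ((Λ + η) *
        ((dru u (nullTime t₀ Λ η) (nullRadius Λ η) +
          dtu u (nullTime t₀ Λ η) (nullRadius Λ η)) / 2) +
        3 / 2 * u (nullTime t₀ Λ η) (nullRadius Λ η))) -
      1 / 4 * ∫ q in Icc ρ Λ ×ˢ Icc ρ Λ, (q.1 + q.2) * riemannKernel ρ q.1 q.2 *
        powerNonlinearity p (u (nullTime t₀ q.1 q.2) (nullRadius q.1 q.2)) := by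
  have hu := smoothOnCone_of_isExtSol h
  have hcone : ∀ x ∈ Icc ρ Λ, |t₀| < x := fun x hx => hρ.trans_le hx.1
  have hsq : ∀ q ∈ Icc ρ Λ ×ˢ Icc ρ Λ, |t₀| < q.1 ∧ |t₀| < q.2 := fun q hq =>
    ⟨hcone _ hq.1, hcone _ hq.2⟩
  have hcont_t := hu.dtu.continuousOn_null hsq
  have hcont_r := hu.dru.continuousOn_null hsq
  have hcont_tt := hu.dtu.dtu.continuousOn_null hsq
  have hcont_rr := hu.dru.dru.continuousOn_null hsq
  have hcont_tr := hu.dtu.dru.continuousOn_null hsq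
  have hcont_rt := hu.dru.dtu.continuousOn_null hsq
  have hgreen := four_mul_sq_mul_eq_of_wave ((abs_nonneg t₀).trans_lt hρ) hρΛ
    (F := fun ξ η => powerNonlinearity p (u (nullTime t₀ ξ η) (nullRadius ξ η)))
    (fun ξ hξ η hη => hu.hasDerivAt_null_left (hcone ξ hξ) (hcone η hη))
    (fun ξ hξ η hη => hu.hasDerivAt_null_right (hcone ξ hξ) (hcone η hη))
    (fun ξ hξ η hη => ((hu.dru.hasDerivAt_null_left (hcone ξ hξ) (hcone η hη)).add
      (hu.dtu.hasDerivAt_null_left (hcone ξ hξ) (hcone η hη))).div_const 2)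
    (fun ξ hξ η hη => ((hu.dru.hasDerivAt_null_right (hcone ξ hξ) (hcone η hη)).sub
      (hu.dtu.hasDerivAt_null_right (hcone ξ hξ) (hcone η hη))).div_const 2)
    (hu.continuousOn_null hsq) (by fun_prop) (by fun_prop) (by fun_prop) (by fun_prop) ?_
  · simpa only [nullTime_self, nullRadius_self] using hgreen
  · intro ξ hξ η hη
    have hξη : 0 < ξ + η :=
      add_pos ((abs_nonneg _).trans_lt (hcone ξ hξ)) ((abs_nonneg _).trans_lt (hcone η hη))
    have hradius : 3 / nullRadius ξ η = 6 / (ξ + η) := by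
      unfold nullRadius; field_simp; norm_num
    rw [← wave_eq_of_isExtSol h (abs_nullTime_lt_nullRadius (hcone ξ hξ) (hcone η hη)), hradius]
    field_simp
    ring

end Solution

/-! ### Energy estimates -/

/-- The radial energy density `(|∂_t u|² + |∂_r u|²) r³`. -/
noncomputable def energyDensity (u : ℝ → ℝ → ℝ) (t r : ℝ) : ℝ :=
  (dtu u t r ^ 2 + dru u t r ^ 2) * r ^ 3

/-- The exterior energy of `u` over `{r > R + |t|}` is at most `M` at every time `t`. -/
def EnergyBound (u : ℝ → ℝ → ℝ) (R M : ℝ) : Prop :=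
  0 ≤ M ∧ ∀ t, ∫⁻ r in Ioi (R + |t|), ENNReal.ofReal (energyDensity u t r) ≤ ENNReal.ofReal M

lemma energyDensity_nonneg {u : ℝ → ℝ → ℝ} {t r : ℝ} (hr : 0 ≤ r) : 0 ≤ energyDensity u t r := by
  unfold energyDensity
  positivity

lemma eH_rpow_two (u : ℝ → ℝ → ℝ) {R : ℝ} (hR : 0 ≤ R) (t : ℝ) :
    eH R (u t) (fun r => dtu u t r) ^ (2 : ℝ) =
      ∫⁻ r in Ioi R, ENNReal.ofReal (energyDensity u t r) := by
  have hmeas : Measurable fun r => ENNReal.ofReal (deriv (u t) r ^ 2 * r ^ 3) :=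
    (((measurable_deriv _).pow_const 2).mul (by fun_prop)).ennreal_ofReal
  rw [eH, ← ENNReal.rpow_mul, one_div_mul_cancel two_ne_zero, ENNReal.rpow_one,
    ← lintegral_add_left hmeas]
  refine setLIntegral_congr_fun measurableSet_Ioi fun r hr => ?_
  have hr₀ : 0 ≤ r := hR.trans (mem_Ioi.1 hr).le
  rw [← ENNReal.ofReal_add (by positivity) (by positivity)]
  simp only [energyDensity, dru]
  ring_nf

lemma exists_energyBound {u : ℝ → ℝ → ℝ} {R : ℝ} (hR : 0 ≤ R) (hsup : supH R u < ⊤) :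
    ∃ M, EnergyBound u R M := by
  refine ⟨(supH R u ^ (2 : ℝ)).toReal, ENNReal.toReal_nonneg, fun t => ?_⟩
  rw [ENNReal.ofReal_toReal (ENNReal.rpow_ne_top_of_nonneg zero_le_two hsup.ne),
    ← eH_rpow_two u (add_nonneg hR (abs_nonneg t)) t]
  exact ENNReal.rpow_le_rpow (le_iSup (fun t => eH (R + |t|) (u t) (fun r => dtu u t r)) t)
    zero_le_two

lemma ae_energyDensity_nonneg (u : ℝ → ℝ → ℝ) {R : ℝ} (hR : 0 ≤ R) (t : ℝ) :
    0 ≤ᵐ[volume.restrict (Ioi (R + |t|))] energyDensity u t := by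
  filter_upwards [ae_restrict_mem measurableSet_Ioi] with r hr
  exact energyDensity_nonneg (by linarith [abs_nonneg t, mem_Ioi.1 hr])

lemma SmoothOnCone.energyDensity {u : ℝ → ℝ → ℝ} (h : SmoothOnCone u) :
    SmoothOnCone (energyDensity u) := by
  have ht : ContDiffOn ℝ _ _ _ := h.dtu
  have hr : ContDiffOn ℝ _ _ _ := h.dru
  exact ((ht.pow 2).add (hr.pow 2)).mul (by fun_prop)

lemma abs_le_mul_sq_add {c : ℝ} (hc : 0 < c) (a : ℝ) : |a| ≤ c * a ^ 2 + (4 * c)⁻¹ := by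
  have hsq : c * a ^ 2 + (4 * c)⁻¹ - |a| = c * (|a| - (2 * c)⁻¹) ^ 2 := by
    rw [← sq_abs a]
    field_simp
    ring
  linarith [show 0 ≤ c * (|a| - (2 * c)⁻¹) ^ 2 by positivity]

lemma integral_inv_cube_le {a b : ℝ} (ha : 0 < a) (hab : a ≤ b) :
    ∫ s in Icc a b, (s ^ 3)⁻¹ ≤ 1 / (2 * a ^ 2) := by
  have hpos : ∀ s ∈ Icc a b, s ≠ 0 := fun s hs => (ha.trans_le hs.1).ne'
  have hcont : ContinuousOn (fun s : ℝ => (s ^ 3)⁻¹) (Icc a b) :=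
    ContinuousOn.inv₀ (by fun_prop) fun s hs => pow_ne_zero 3 (hpos s hs)
  rw [setIntegral_Icc_eq_sub_of_hasDerivAt hab (f := fun s => -(1 / 2) * (s ^ 2)⁻¹)
    (fun s hs => ?_) hcont]
  · have hb : 0 ≤ (b ^ 2)⁻¹ := by positivity
    have ha' : 1 / (2 * a ^ 2) = 1 / 2 * (a ^ 2)⁻¹ := by field_simp
    linarith
  · have hs₀ := hpos s hs
    refine (((hasDerivAt_pow 2 s).inv (pow_ne_zero 2 hs₀)).const_mul _).congr_deriv ?_
    field_simp
    norm_num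

section EnergyBound

variable {u : ℝ → ℝ → ℝ} (h : SmoothOnCone u) {R M : ℝ} (hR : 0 ≤ R) (hM : EnergyBound u R M)

include h hR hM

lemma integrableOn_energyDensity (t : ℝ) :
    IntegrableOn (energyDensity u t) (Ioi (R + |t|)) := by
  refine ⟨(h.energyDensity.continuousOn_slice fun r hr => ?_).aestronglyMeasurable
    measurableSet_Ioi, ?_⟩
  · linarith [mem_Ioi.1 hr]
  · rw [hasFiniteIntegral_iff_ofReal (ae_energyDensity_nonneg u hR t)]
    exact (hM.2 t).trans_lt ENNReal.ofReal_lt_top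

lemma ofReal_integral_energyDensity (t : ℝ) :
    ENNReal.ofReal (∫ r in Ioi (R + |t|), energyDensity u t r) =
      ∫⁻ r in Ioi (R + |t|), ENNReal.ofReal (energyDensity u t r) :=
  ofReal_integral_eq_lintegral_ofReal (integrableOn_energyDensity h hR hM t)
    (ae_energyDensity_nonneg u hR t)

lemma tendsto_lintegral_energyDensity (hvan : ExtEnergyVanishes R u) :
    Tendsto (fun t => ∫⁻ r in Ioi (R + |t|), ENNReal.ofReal (energyDensity u t r)) atTop (𝓝 0) ∧
    Tendsto (fun t => ∫⁻ r in Ioi (R + |t|), ENNReal.ofReal (energyDensity u t r))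
      atBot (𝓝 0) := by
  simp only [← ofReal_integral_energyDensity h hR hM]
  rw [← ENNReal.ofReal_zero]
  exact ⟨ENNReal.tendsto_ofReal hvan.1, ENNReal.tendsto_ofReal hvan.2⟩

lemma integrableOn_energyDensity_Icc {t a : ℝ} (ha : R + |t| < a) (b : ℝ) :
    IntegrableOn (energyDensity u t) (Icc a b) :=
  (integrableOn_energyDensity h hR hM t).mono_set fun _ hr => ha.trans_le hr.1

lemma integral_energyDensity_Icc_le {t a : ℝ} (ha : R + |t| < a) (b : ℝ) :
    ∫ r in Icc a b, energyDensity u t r ≤ M := by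
  have hsub : Icc a b ⊆ Ioi (R + |t|) := fun r hr => ha.trans_le hr.1
  refine (setIntegral_mono_set (integrableOn_energyDensity h hR hM t)
    (ae_energyDensity_nonneg u hR t) hsub.eventuallyLE).trans ?_
  rw [← ENNReal.ofReal_le_ofReal_iff hM.1, ofReal_integral_energyDensity h hR hM]
  exact hM.2 t

lemma abs_sub_le_of_energyBound {t r r' : ℝ} (hr : R + |t| < r) (hrr' : r ≤ r') :
    |u t r' - u t r| ≤ (M + 1) / r := by
  have hr₀ : 0 < r := by linarith [abs_nonneg t]
  have hpos : ∀ s ∈ Icc r r', 0 < s := fun s hs => hr₀.trans_le hs.1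
  have hcone : ∀ s ∈ Icc r r', |t| < s := fun s hs => by linarith [hs.1]
  have hcont := h.dru.continuousOn_slice hcone
  have henergy := integrableOn_energyDensity_Icc h hR hM hr r'
  have hcube : IntegrableOn (fun s : ℝ => (s ^ 3)⁻¹) (Icc r r') :=
    (ContinuousOn.inv₀ (by fun_prop) fun s hs =>
      pow_ne_zero 3 (hpos s hs).ne').integrableOn_Icc
  rw [← setIntegral_Icc_eq_sub_of_hasDerivAt hrr'
    (fun s hs => h.hasDerivAt_dru (hcone s hs)) hcont]
  calc |∫ s in Icc r r', dru u t s| ≤ ∫ s in Icc r r', |dru u t s| := abs_integral_le_integral_abs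
    _ ≤ ∫ s in Icc r r', (r⁻¹ / 2 * energyDensity u t s + r / 2 * (s ^ 3)⁻¹) := by
        refine setIntegral_mono_on hcont.abs.integrableOn_Icc
          ((henergy.const_mul _).add (hcube.const_mul _)) measurableSet_Icc fun s hs => ?_
        have hs := hpos s hs
        calc |dru u t s| ≤ s ^ 3 / (2 * r) * dru u t s ^ 2 + (4 * (s ^ 3 / (2 * r)))⁻¹ :=
              abs_le_mul_sq_add (by positivity) _
          _ = r⁻¹ / 2 * ((0 + dru u t s ^ 2) * s ^ 3) + r / 2 * (s ^ 3)⁻¹ := by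
              field_simp
              ring
          _ ≤ r⁻¹ / 2 * energyDensity u t s + r / 2 * (s ^ 3)⁻¹ := by
              unfold energyDensity
              gcongr
              positivity
    _ = r⁻¹ / 2 * (∫ s in Icc r r', energyDensity u t s) + r / 2 * ∫ s in Icc r r', (s ^ 3)⁻¹ := by
        rw [integral_add (henergy.const_mul _) (hcube.const_mul _), integral_const_mul,
          integral_const_mul]
    _ ≤ r⁻¹ / 2 * M + r / 2 * (1 / (2 * r ^ 2)) := by
        gcongr
        · exact integral_energyDensity_Icc_le h hR hM hr r'
        · exact integral_inv_cube_le hr₀ hrr'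
    _ = (M / 2 + 1 / 4) / r := by field_simp; ring
    _ ≤ (M + 1) / r := by gcongr <;> linarith [hM.1]

lemma integral_abs_dtu_mul_le {t a b δ : ℝ} (ha : R + |t| < a) (hab : a ≤ b) (hδ : 0 < δ) :
    ∫ r in Icc a b, |dtu u t r| * r ≤ δ * M + Real.log (b / a) / (4 * δ) := by
  have ha₀ : 0 < a := by linarith [abs_nonneg t]
  have hpos : ∀ r ∈ Icc a b, 0 < r := fun r hr => ha₀.trans_le hr.1
  have hcont : ContinuousOn (dtu u t) (Icc a b) :=
    h.dtu.continuousOn_slice fun r hr => by linarith [hr.1]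
  have henergy := integrableOn_energyDensity_Icc h hR hM ha b
  have hinv : IntegrableOn (fun r : ℝ => r⁻¹) (Icc a b) :=
    (ContinuousOn.inv₀ continuousOn_id fun r hr => (hpos r hr).ne').integrableOn_Icc
  have hlog : ∫ r in Icc a b, r⁻¹ = Real.log (b / a) := by
    rw [integral_Icc_eq_integral_Ioc, ← intervalIntegral.integral_of_le hab,
      integral_inv_of_pos ha₀ (ha₀.trans_le hab)]
  calc ∫ r in Icc a b, |dtu u t r| * r
      ≤ ∫ r in Icc a b, (δ * energyDensity u t r + 1 / (4 * δ) * r⁻¹) := by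
        refine setIntegral_mono_on (hcont.abs.mul continuousOn_id).integrableOn_Icc
          ((henergy.const_mul _).add (hinv.const_mul _)) measurableSet_Icc fun r hr => ?_
        have hr := hpos r hr
        calc |dtu u t r| * r ≤ (δ * r ^ 2 * dtu u t r ^ 2 + (4 * (δ * r ^ 2))⁻¹) * r := by
              gcongr
              exact abs_le_mul_sq_add (by positivity) _
          _ = δ * ((dtu u t r ^ 2 + 0) * r ^ 3) + 1 / (4 * δ) * r⁻¹ := by field_simp; ring
          _ ≤ δ * energyDensity u t r + 1 / (4 * δ) * r⁻¹ := by
              unfold energyDensity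
              gcongr
              positivity
    _ = δ * (∫ r in Icc a b, energyDensity u t r) + 1 / (4 * δ) * Real.log (b / a) := by
        rw [integral_add (henergy.const_mul _) (hinv.const_mul _), integral_const_mul,
          integral_const_mul, hlog]
    _ ≤ δ * M + 1 / (4 * δ) * Real.log (b / a) := by
        gcongr
        exact integral_energyDensity_Icc_le h hR hM ha b
    _ = δ * M + Real.log (b / a) / (4 * δ) := by ring

omit hR hM in
lemma abs_sub_le_integral_abs_dtu {t₀ t r : ℝ} (hcone : ∀ s ∈ uIcc t₀ t, |s| < r) :
    |u t r - u t₀ r| ≤ ∫ s in uIoc t₀ t, |dtu u s r| := by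
  have hcont : ContinuousOn (fun s => dtu u s r) (uIcc t₀ t) :=
    h.dtu.continuousOn.comp (f := fun s => (s, r)) (by fun_prop) hcone
  rw [← intervalIntegral.integral_eq_sub_of_hasDerivAt (f := fun s => u s r)
    (fun s hs => h.hasDerivAt_dtu (hcone s hs)) hcont.intervalIntegrable]
  exact intervalIntegral.norm_integral_le_integral_norm_uIoc (f := fun s => dtu u s r) (μ := volume)

/- The bound is `√(log)` after optimising in `δ`, hence `o(log (b / a))`: this is what forces the
coefficient of `r⁻²` at infinity to be independent of time. -/
lemma integral_abs_sub_mul_le {t a b δ : ℝ} (ha : R + |t| < a) (hab : a ≤ b) (hδ : 0 < δ) :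
    ∫ r in Icc a b, |u t r - u 0 r| * r ≤ |t| * (δ * M + Real.log (b / a) / (4 * δ)) := by
  have habs : ∀ s ∈ uIcc 0 t, |s| ≤ |t| := fun s hs => by
    simpa using abs_sub_left_of_mem_uIcc hs
  have hcone : ∀ s ∈ uIcc 0 t, ∀ r ∈ Icc a b, |s| < r := fun s hs r hr => by
    linarith [habs s hs, hr.1]
  have hcont : ContinuousOn (fun q : ℝ × ℝ => |dtu u q.1 q.2| * q.2) (uIcc 0 t ×ˢ Icc a b) :=
    (h.dtu.continuousOn.mono fun q hq => hcone q.1 hq.1 q.2 hq.2).abs.mul (by fun_prop)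
  have hint : IntegrableOn (fun q : ℝ × ℝ => |dtu u q.1 q.2| * q.2) (uIoc 0 t ×ˢ Icc a b) :=
    (hcont.integrableOn_compact (isCompact_uIcc.prod isCompact_Icc)).mono_set
      (prod_mono uIoc_subset_uIcc subset_rfl)
  rw [Measure.volume_eq_prod, IntegrableOn, ← Measure.prod_restrict] at hint
  calc ∫ r in Icc a b, |u t r - u 0 r| * r
      ≤ ∫ r in Icc a b, ∫ s in uIoc 0 t, |dtu u s r| * r := by
        refine setIntegral_mono_on ?_ hint.integral_prod_right measurableSet_Icc fun r hr => ?_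
        · have ht := h.continuousOn_slice (hcone t right_mem_uIcc)
          have h₀ := h.continuousOn_slice (hcone 0 left_mem_uIcc)
          exact ContinuousOn.integrableOn_Icc (by fun_prop)
        · rw [integral_mul_const]
          gcongr
          · linarith [abs_nonneg t, hr.1]
          · exact abs_sub_le_integral_abs_dtu h fun s hs => hcone s hs r hr
    _ = ∫ s in uIoc 0 t, ∫ r in Icc a b, |dtu u s r| * r :=
        integral_integral_swap (f := fun r s => |dtu u s r| * r) hint.swap
    _ ≤ ∫ s in uIoc 0 t, (δ * M + Real.log (b / a) / (4 * δ)) :=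
        setIntegral_mono_on hint.integral_prod_left (integrableOn_const (by simp [uIoc]))
          measurableSet_uIoc fun s hs => integral_abs_dtu_mul_le h hR hM
            (by linarith [habs s (uIoc_subset_uIcc hs)]) hab hδ
    _ = |t| * (δ * M + Real.log (b / a) / (4 * δ)) := by
        rw [setIntegral_const, smul_eq_mul, measureReal_def, uIoc, Real.volume_Ioc,
          max_sub_min_eq_abs, sub_zero, ENNReal.toReal_ofReal (abs_nonneg t)]

end EnergyBound

/-! ### Decay in space -/

lemma exists_abs_lt_of_lintegral_lt_top {v : ℝ → ℝ} {k n : ℕ}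
    (hv : ∫⁻ r in Ioi (0 : ℝ), ENNReal.ofReal (|v r| ^ k * r ^ n) < ⊤) {ε : ℝ} (hε : 0 < ε)
    (N : ℝ) : ∃ r ≥ N, |v r| < ε := by
  by_contra! hlarge
  have hle : ∫⁻ _ in Ioi (max N 1), ENNReal.ofReal (ε ^ k) ≤
      ∫⁻ r in Ioi (0 : ℝ), ENNReal.ofReal (|v r| ^ k * r ^ n) := by
    refine (setLIntegral_mono' (g := fun r => ENNReal.ofReal (|v r| ^ k * r ^ n))
      measurableSet_Ioi fun r hr => ENNReal.ofReal_le_ofReal ?_).trans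
      (lintegral_mono_set (Ioi_subset_Ioi (zero_le_one.trans (le_max_right N 1))))
    obtain ⟨hN, h1⟩ := max_lt_iff.1 (mem_Ioi.1 hr)
    calc ε ^ k ≤ |v r| ^ k := by gcongr; exact hlarge r hN.le
      _ ≤ |v r| ^ k * r ^ n := le_mul_of_one_le_right (by positivity) (one_le_pow₀ h1.le)
  rw [setLIntegral_const, Real.volume_Ioi,
    ENNReal.mul_top (ENNReal.ofReal_pos.2 (pow_pos hε k)).ne'] at hle
  exact (hle.trans_lt hv).false

section Decay

variable {u : ℝ → ℝ → ℝ} (h : SmoothOnCone u) {R M : ℝ} (hR : 0 ≤ R) (hM : EnergyBound u R M)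

include h hR hM

lemma abs_le_div_of_exists_abs_lt {t r : ℝ} (hr : R + |t| < r)
    (hsmall : ∀ ε > 0, ∀ N, ∃ s ≥ N, |u t s| < ε) : |u t r| ≤ (M + 1) / r := by
  refine le_of_forall_pos_le_add fun ε hε => ?_
  obtain ⟨s, hrs, hs⟩ := hsmall ε hε r
  have hdiff := abs_sub_le_of_energyBound h hR hM hr hrs
  linarith [abs_sub_abs_le_abs_sub (u t r) (u t s), abs_sub_comm (u t r) (u t s)]

lemma exists_abs_lt_of_abs_le_div (h₀ : ∀ r, R < r → |u 0 r| ≤ (M + 1) / r) (t : ℝ) {ε : ℝ}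
    (hε : 0 < ε) (N : ℝ) : ∃ r ≥ N, |u t r| < ε := by
  by_contra! hlarge
  obtain ⟨A, hAN, hAR, hAM, hA1, hAt⟩ : ∃ A, N ≤ A ∧ R + |t| < A ∧ 2 * (M + 1) / ε ≤ A ∧ 1 ≤ A ∧
      2 * (|t| * (M + 1)) / ε < A :=
    ((eventually_ge_atTop N).and ((eventually_gt_atTop _).and ((eventually_ge_atTop _).and
      ((eventually_ge_atTop _).and (eventually_gt_atTop _))))).exists
  rw [div_le_iff₀ hε] at hAM
  rw [div_lt_iff₀ hε] at hAt
  have hlower : ∀ r ∈ Icc A (2 * A), ε / 2 * A ≤ |u t r - u 0 r| * r := fun r hr => by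
    have hr₀ : 0 < r := by linarith [hr.1]
    have hu₀ : |u 0 r| ≤ ε / 2 := by
      refine (h₀ r (by linarith [hr.1, abs_nonneg t])).trans ((div_le_iff₀ hr₀).2 ?_)
      linarith [mul_le_mul_of_nonneg_right hr.1 hε.le]
    have hdiff := abs_sub_abs_le_abs_sub (u t r) (u 0 r)
    exact mul_le_mul (by linarith [hlarge r (hAN.trans hr.1)]) hr.1 (by linarith) (abs_nonneg _)
  have hcont : ContinuousOn (fun r => |u t r - u 0 r| * r) (Icc A (2 * A)) := by
    have hut := h.continuousOn_slice (t := t) (s := Icc A (2 * A)) fun r hr => by linarith [hr.1]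
    have hu₀ := h.continuousOn_slice (t := 0) (s := Icc A (2 * A)) fun r hr => by
      rw [abs_zero]; linarith [hr.1]
    fun_prop
  have hlog : Real.log (2 * A / A) ≤ 4 := by
    rw [mul_div_cancel_right₀ _ (by linarith)]
    linarith [Real.log_le_sub_one_of_pos (zero_lt_two' ℝ)]
  have hsq : ε / 2 * A * 1 ≤ |t| * (M + 1) :=
    calc ε / 2 * A * 1 ≤ ε / 2 * A * A := by gcongr
      _ = ∫ _ in Icc A (2 * A), ε / 2 * A := by
          rw [setIntegral_const, smul_eq_mul, Real.volume_real_Icc_of_le (by linarith)]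
          ring
      _ ≤ ∫ r in Icc A (2 * A), |u t r - u 0 r| * r :=
          setIntegral_mono_on (integrableOn_const (by simp)) hcont.integrableOn_Icc
            measurableSet_Icc hlower
      _ ≤ |t| * (1 * M + Real.log (2 * A / A) / (4 * 1)) :=
          integral_abs_sub_mul_le h hR hM hAR (by linarith) one_pos
      _ ≤ |t| * (M + 1) := by gcongr <;> linarith
  linarith

lemma abs_le_div_of_energyBound {k n : ℕ}
    (hcrit : ∫⁻ r in Ioi (0 : ℝ), ENNReal.ofReal (|u 0 r| ^ k * r ^ n) < ⊤) {t r : ℝ}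
    (hr : R + |t| < r) : |u t r| ≤ (M + 1) / r :=
  abs_le_div_of_exists_abs_lt h hR hM hr fun _ hε N =>
    exists_abs_lt_of_abs_le_div h hR hM (fun s hs => abs_le_div_of_exists_abs_lt h hR hM
      (by rwa [abs_zero, add_zero]) fun _ => exists_abs_lt_of_lintegral_lt_top hcrit) t hε N

end Decay

/-! ### Energy on characteristic lines -/

/-- The integral of `f (t, r)` over the characteristic line `{t + r = Λ}`, parametrised by
`ξ = r - t`. -/
noncomputable def characteristicIntegral (f : ℝ × ℝ → ℝ≥0∞) (Λ : ℝ) : ℝ≥0∞ :=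
  ∫⁻ ξ, f ((Λ - ξ) / 2, (ξ + Λ) / 2)

lemma measurable_characteristicIntegral {f : ℝ × ℝ → ℝ≥0∞} (hf : Measurable f) :
    Measurable (characteristicIntegral f) :=
  Measurable.lintegral_prod_right' (f := fun q : ℝ × ℝ => f ((q.1 - q.2) / 2, (q.2 + q.1) / 2))
    (by fun_prop)

lemma lintegral_eq_two_mul_lintegral_sub_two_mul {k : ℝ → ℝ≥0∞} (hk : Measurable k) (c : ℝ) :
    ∫⁻ x, k x = 2 * ∫⁻ s, k (c - 2 * s) := by
  have hscale : ∫⁻ s, k (c - 2 * s) = ENNReal.ofReal |(2 : ℝ)⁻¹| * ∫⁻ x, k (c - x) := by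
    rw [← smul_eq_mul, ← lintegral_smul_measure, ← Real.map_volume_mul_left two_ne_zero,
      lintegral_map (by fun_prop) (by fun_prop)]
  have hcancel : (2 : ℝ≥0∞) * ENNReal.ofReal |(2 : ℝ)⁻¹| = 1 := by
    rw [abs_of_pos (by norm_num), ENNReal.ofReal_inv_of_pos two_pos, ENNReal.ofReal_ofNat]
    exact ENNReal.mul_inv_cancel two_ne_zero ENNReal.ofNat_ne_top
  rw [hscale, lintegral_sub_left_eq_self, ← mul_assoc, hcancel, one_mul]

lemma characteristicIntegral_le {f : ℝ × ℝ → ℝ≥0∞} (hf : Measurable f)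
    (hsupp : ∀ s r, ¬(0 ≤ s ∧ s ≤ r) → f (s, r) = 0) {Λ N : ℝ} (hΛ : Λ ≤ 2 * N) :
    characteristicIntegral f Λ ≤ 2 * ∫⁻ s in Icc 0 N, f (s, Λ - s) := by
  rw [characteristicIntegral, lintegral_eq_two_mul_lintegral_sub_two_mul (by fun_prop) Λ,
    ← lintegral_indicator measurableSet_Icc]
  gcongr with s
  rw [show (Λ - (Λ - 2 * s)) / 2 = s by ring, show (Λ - 2 * s + Λ) / 2 = Λ - s by ring]
  by_cases hs : s ∈ Icc 0 N
  · rw [indicator_of_mem hs]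
  · rw [hsupp s (Λ - s) fun hsr => hs ⟨hsr.1, by linarith [hsr.2]⟩]
    exact zero_le

lemma lintegral_characteristicIntegral_le {f : ℝ × ℝ → ℝ≥0∞} (hf : Measurable f)
    (hsupp : ∀ s r, ¬(0 ≤ s ∧ s ≤ r) → f (s, r) = 0) (N : ℝ) :
    ∫⁻ Λ in Icc N (2 * N), characteristicIntegral f Λ ≤ 2 * ∫⁻ s in Icc 0 N, ∫⁻ r, f (s, r) := by
  calc ∫⁻ Λ in Icc N (2 * N), characteristicIntegral f Λ
      ≤ ∫⁻ Λ in Icc N (2 * N), 2 * ∫⁻ s in Icc 0 N, f (s, Λ - s) :=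
        setLIntegral_mono' measurableSet_Icc fun Λ hΛ => characteristicIntegral_le hf hsupp hΛ.2
    _ = 2 * ∫⁻ s in Icc 0 N, ∫⁻ Λ in Icc N (2 * N), f (s, Λ - s) := by
        rw [lintegral_const_mul' _ _ ENNReal.ofNat_ne_top, lintegral_lintegral_swap]
        exact (hf.comp (by fun_prop : Measurable fun q : ℝ × ℝ => (q.2, q.1 - q.2))).aemeasurable
    _ ≤ 2 * ∫⁻ s in Icc 0 N, ∫⁻ r, f (s, r) := by
        refine mul_le_mul_right (lintegral_mono fun s => ?_) 2
        exact (setLIntegral_le_lintegral _ _).trans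
          (lintegral_sub_right_eq_self (μ := volume) (fun r => f (s, r)) s).le

lemma eventually_lintegral_Icc_le_of_tendsto_zero {g : ℝ → ℝ≥0∞} {M : ℝ} (hM : 0 ≤ M)
    (hg : ∀ s, g s ≤ ENNReal.ofReal M) (hlim : Tendsto g atTop (𝓝 0)) {δ : ℝ} (hδ : 0 < δ) :
    ∀ᶠ N in atTop, ∫⁻ s in Icc 0 N, g s ≤ ENNReal.ofReal (δ * N) := by
  obtain ⟨S, hS₀, hS⟩ : ∃ S ≥ 0, ∀ s ≥ S, g s ≤ ENNReal.ofReal (δ / 2) :=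
    ((eventually_ge_atTop (0 : ℝ)).and (eventually_forall_ge_atTop.2 (hlim.eventually
      (Iic_mem_nhds (ENNReal.ofReal_pos.2 (half_pos hδ)))))).exists
  filter_upwards [eventually_ge_atTop 0, eventually_ge_atTop (2 * (M * S) / δ)] with N hN₀ hN
  rw [div_le_iff₀ hδ] at hN
  have hcover : Icc 0 N ⊆ Icc 0 S ∪ Icc S (S + N) := fun s hs =>
    (le_total s S).imp (fun hsS => ⟨hs.1, hsS⟩) fun hsS => ⟨hsS, by linarith [hs.2]⟩
  calc ∫⁻ s in Icc 0 N, g s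
      ≤ (∫⁻ s in Icc 0 S, g s) + ∫⁻ s in Icc S (S + N), g s :=
        (lintegral_mono_set hcover).trans (lintegral_union_le _ _ _)
    _ ≤ (∫⁻ _ in Icc 0 S, ENNReal.ofReal M) + ∫⁻ _ in Icc S (S + N), ENNReal.ofReal (δ / 2) :=
        add_le_add (lintegral_mono hg) (setLIntegral_mono' measurableSet_Icc fun s hs => hS s hs.1)
    _ = ENNReal.ofReal (M * S + δ / 2 * N) := by
        rw [setLIntegral_const, setLIntegral_const, Real.volume_Icc, Real.volume_Icc,
          ← ENNReal.ofReal_mul hM, ← ENNReal.ofReal_mul (by positivity), sub_zero,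
          add_sub_cancel_left, ← ENNReal.ofReal_add (by positivity) (by positivity)]
    _ ≤ ENNReal.ofReal (δ * N) := ENNReal.ofReal_le_ofReal (by linarith)

/-- The region `{s ≥ 0, r ≥ ρ + s}`. -/
def forwardRegion (ρ : ℝ) : Set (ℝ × ℝ) := {q | 0 ≤ q.1 ∧ ρ + q.1 ≤ q.2}

lemma isClosed_forwardRegion (ρ : ℝ) : IsClosed (forwardRegion ρ) :=
  (isClosed_le continuous_const continuous_fst).inter
    (isClosed_le (continuous_const.add continuous_fst) continuous_snd)

/-- The energy density of `u` at time `t₀ + σ s` cut off to `{s ≥ 0, r ≥ ρ + s}`, as a function of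
`(s, r)`; the sign `σ = ±1` selects the future or the past of `t₀`. -/
noncomputable def truncatedEnergyDensity (u : ℝ → ℝ → ℝ) (t₀ ρ σ : ℝ) : ℝ × ℝ → ℝ≥0∞ :=
  (forwardRegion ρ).indicator fun q => ENNReal.ofReal (energyDensity u (t₀ + σ * q.1) q.2)

section TruncatedEnergy

variable {u : ℝ → ℝ → ℝ} (h : SmoothOnCone u) {t₀ ρ σ : ℝ}

lemma abs_add_mul_le (hσ : |σ| = 1) {s : ℝ} (hs : 0 ≤ s) : |t₀ + σ * s| ≤ |t₀| + s := by
  simpa only [abs_mul, hσ, one_mul, abs_of_nonneg hs] using abs_add_le t₀ (σ * s)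

include h in
lemma continuousOn_energyDensity_forwardRegion (hσ : |σ| = 1) (hρ : |t₀| < ρ) :
    ContinuousOn (fun q : ℝ × ℝ => energyDensity u (t₀ + σ * q.1) q.2) (forwardRegion ρ) :=
  h.energyDensity.continuousOn.comp (f := fun q : ℝ × ℝ => (t₀ + σ * q.1, q.2)) (by fun_prop)
    fun _ hq => ((abs_add_mul_le hσ hq.1).trans_lt (by linarith)).trans_le hq.2

include h in
lemma measurable_truncatedEnergyDensity (hσ : |σ| = 1) (hρ : |t₀| < ρ) :
    Measurable (truncatedEnergyDensity u t₀ ρ σ) := by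
  classical
  rw [truncatedEnergyDensity, ← piecewise_eq_indicator]
  exact (ENNReal.continuous_ofReal.comp_continuousOn
    (continuousOn_energyDensity_forwardRegion h hσ hρ)).measurable_piecewise continuousOn_const
      (isClosed_forwardRegion ρ).measurableSet

lemma truncatedEnergyDensity_eq_zero (hρ : 0 ≤ ρ) (s r : ℝ) (hsr : ¬(0 ≤ s ∧ s ≤ r)) :
    truncatedEnergyDensity u t₀ ρ σ (s, r) = 0 :=
  indicator_of_notMem (fun hmem => hsr ⟨hmem.1, by linarith [show ρ + s ≤ r from hmem.2]⟩) _

lemma lintegral_truncatedEnergyDensity_le {R : ℝ} (hσ : |σ| = 1) (hR : R + |t₀| < ρ) (s : ℝ) :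
    ∫⁻ r, truncatedEnergyDensity u t₀ ρ σ (s, r) ≤
      ∫⁻ r in Ioi (R + |t₀ + σ * s|), ENNReal.ofReal (energyDensity u (t₀ + σ * s) r) := by
  rw [← lintegral_indicator measurableSet_Ioi]
  refine lintegral_mono fun r => indicator_apply_le' (fun hsr => ?_) fun _ => zero_le
  have hr : r ∈ Ioi (R + |t₀ + σ * s|) := by
    have hs := abs_add_mul_le (t₀ := t₀) hσ hsr.1
    have hsr' : ρ + s ≤ r := hsr.2
    exact mem_Ioi.2 (by linarith)
  rw [indicator_of_mem hr]

include h in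
lemma tendsto_lintegral_truncatedEnergyDensity {R M : ℝ} (hR : 0 ≤ R) (hM : EnergyBound u R M)
    (hvan : ExtEnergyVanishes R u) (hσ : |σ| = 1) (hρ : R + |t₀| < ρ) :
    Tendsto (fun s => ∫⁻ r, truncatedEnergyDensity u t₀ ρ σ (s, r)) atTop (𝓝 0) := by
  obtain ⟨hfuture, hpast⟩ := tendsto_lintegral_energyDensity h hR hM hvan
  refine tendsto_of_tendsto_of_tendsto_of_le_of_le tendsto_const_nhds ?_ (fun s => zero_le)
    (lintegral_truncatedEnergyDensity_le hσ hρ)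
  rcases eq_or_eq_neg_of_abs_eq hσ with rfl | rfl
  · exact hfuture.comp (tendsto_atTop_add_const_left _ t₀ (tendsto_id.const_mul_atTop one_pos))
  · exact hpast.comp (tendsto_atBot_add_const_left _ t₀
      (tendsto_id.const_mul_atTop_of_neg neg_one_lt_zero))

include h in
lemma eventually_lintegral_characteristicIntegral_le {R M : ℝ} (hR : 0 ≤ R)
    (hM : EnergyBound u R M) (hvan : ExtEnergyVanishes R u) (hσ : |σ| = 1) (hρ : R + |t₀| < ρ)
    {δ : ℝ} (hδ : 0 < δ) :
    ∀ᶠ N in atTop, ∫⁻ Λ in Icc N (2 * N),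
      characteristicIntegral (truncatedEnergyDensity u t₀ ρ σ) Λ ≤ ENNReal.ofReal (δ * N) := by
  have ht₀ : |t₀| < ρ := by linarith
  filter_upwards [eventually_lintegral_Icc_le_of_tendsto_zero hM.1
    (fun s => (lintegral_truncatedEnergyDensity_le hσ hρ s).trans (hM.2 _))
    (tendsto_lintegral_truncatedEnergyDensity h hR hM hvan hσ hρ) (half_pos hδ)] with N hN
  calc _ ≤ 2 * ENNReal.ofReal (δ / 2 * N) :=
        (lintegral_characteristicIntegral_le (measurable_truncatedEnergyDensity h hσ ht₀)
          (truncatedEnergyDensity_eq_zero ((abs_nonneg t₀).trans ht₀.le)) N).trans (by gcongr)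
    _ = ENNReal.ofReal (δ * N) := by
        rw [← ENNReal.ofReal_ofNat, ← ENNReal.ofReal_mul zero_le_two]
        ring_nf

include h in
lemma integral_energyDensity_le_of_characteristicIntegral_le {Λ δ : ℝ} (hδ : 0 ≤ δ) (hσ : |σ| = 1)
    (hρ : |t₀| < ρ)
    (hchar : characteristicIntegral (truncatedEnergyDensity u t₀ ρ σ) Λ ≤ ENNReal.ofReal δ) :
    ∫ ξ in Icc ρ Λ, energyDensity u (t₀ + σ * ((Λ - ξ) / 2)) ((ξ + Λ) / 2) ≤ δ := by
  have hmem : ∀ ξ ∈ Icc ρ Λ, ((Λ - ξ) / 2, (ξ + Λ) / 2) ∈ forwardRegion ρ := fun ξ hξ =>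
    ⟨by linarith [hξ.2], by linarith [hξ.1]⟩
  have hcont : ContinuousOn (fun ξ => energyDensity u (t₀ + σ * ((Λ - ξ) / 2)) ((ξ + Λ) / 2))
      (Icc ρ Λ) :=
    (continuousOn_energyDensity_forwardRegion h hσ hρ).comp
      (f := fun ξ => ((Λ - ξ) / 2, (ξ + Λ) / 2)) (by fun_prop) hmem
  have hnonneg : 0 ≤ᵐ[volume.restrict (Icc ρ Λ)]
      fun ξ => energyDensity u (t₀ + σ * ((Λ - ξ) / 2)) ((ξ + Λ) / 2) := by
    filter_upwards [ae_restrict_mem measurableSet_Icc] with ξ hξ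
    exact energyDensity_nonneg (by linarith [hξ.1, hξ.2, abs_nonneg t₀])
  rw [← ENNReal.ofReal_le_ofReal_iff hδ,
    ofReal_integral_eq_lintegral_ofReal hcont.integrableOn_Icc hnonneg,
    ← lintegral_indicator measurableSet_Icc]
  refine le_trans (lintegral_mono fun ξ => ?_) hchar
  refine indicator_apply_le' (fun hξ => ?_) fun _ => zero_le
  rw [truncatedEnergyDensity, indicator_of_mem (hmem ξ hξ)]

include h in
lemma exists_integral_energyDensity_edges_le {R M : ℝ} (hR : 0 ≤ R) (hM : EnergyBound u R M)
    (hvan : ExtEnergyVanishes R u) (hρ : R + |t₀| < ρ) {δ : ℝ} (hδ : 0 < δ) (N : ℝ) :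
    ∃ Λ ≥ N, ∀ σ, |σ| = 1 →
      ∫ ξ in Icc ρ Λ, energyDensity u (t₀ + σ * ((Λ - ξ) / 2)) ((ξ + Λ) / 2) ≤ δ := by
  have ht₀ : |t₀| < ρ := by linarith
  have hone : |(1 : ℝ)| = 1 := abs_one
  have hneg : |(-1 : ℝ)| = 1 := by rw [abs_neg, abs_one]
  obtain ⟨A, hAN, hA₀, hfuture, hpast⟩ := ((eventually_ge_atTop N).and ((eventually_gt_atTop 0).and
    ((eventually_lintegral_characteristicIntegral_le h hR hM hvan hone hρ
      (show 0 < δ / 4 by positivity)).and (eventually_lintegral_characteristicIntegral_le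
        h hR hM hvan hneg hρ (show 0 < δ / 4 by positivity))))).exists
  obtain ⟨Λ, hΛ, hsum⟩ : ∃ Λ ∈ Icc A (2 * A),
      characteristicIntegral (truncatedEnergyDensity u t₀ ρ 1) Λ +
        characteristicIntegral (truncatedEnergyDensity u t₀ ρ (-1)) Λ ≤ ENNReal.ofReal δ := by
    by_contra! hlarge
    have hle := (setLIntegral_mono' (μ := volume) measurableSet_Icc
      fun Λ hΛ => (hlarge Λ hΛ).le).trans_eq (lintegral_add_left
        (measurable_characteristicIntegral (measurable_truncatedEnergyDensity h hone ht₀)) _)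
    rw [setLIntegral_const, Real.volume_Icc, ← ENNReal.ofReal_mul hδ.le] at hle
    replace hle := hle.trans (add_le_add hfuture hpast)
    rw [← ENNReal.ofReal_add (by positivity) (by positivity),
      ENNReal.ofReal_le_ofReal_iff (by positivity)] at hle
    linarith [mul_pos hδ hA₀]
  refine ⟨Λ, hAN.trans hΛ.1, fun σ hσ =>
    integral_energyDensity_le_of_characteristicIntegral_le h hδ.le hσ ht₀ ?_⟩
  rcases eq_or_eq_neg_of_abs_eq hσ with rfl | rfl
  · exact le_self_add.trans hsum
  · exact le_add_self.trans hsum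

end TruncatedEnergy

/-! ### The Duhamel term -/

/-- The pointwise bound `|u| ≤ A / r` on the exterior region `{r > R + |t|}`. -/
def DecayBound (u : ℝ → ℝ → ℝ) (R A : ℝ) : Prop :=
  0 ≤ A ∧ ∀ t r, R + |t| < r → |u t r| ≤ A / r

/-- The integrand of the Duhamel term of Green's identity with vertex `(t₀, ρ)`, in null
coordinates. -/
noncomputable def sourceDensity (p : ℕ) (u : ℝ → ℝ → ℝ) (t₀ ρ : ℝ) (q : ℝ × ℝ) : ℝ :=
  (q.1 + q.2) * riemannKernel ρ q.1 q.2 *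
    powerNonlinearity p (u (nullTime t₀ q.1 q.2) (nullRadius q.1 q.2))

/-- The Duhamel term of Green's identity with vertex `(t₀, ρ)` over the whole null quadrant. -/
noncomputable def sourceIntegral (p : ℕ) (u : ℝ → ℝ → ℝ) (t₀ ρ : ℝ) : ℝ :=
  ∫ q in Ici ρ ×ˢ Ici ρ, sourceDensity p u t₀ ρ q

lemma add_abs_nullTime_lt_nullRadius {R t₀ ξ η : ℝ} (hξ : R + |t₀| < ξ) (hη : R + |t₀| < η) :
    R + |nullTime t₀ ξ η| < nullRadius ξ η := by
  have habs : |nullTime t₀ ξ η| < nullRadius ξ η - R := by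
    rw [abs_lt, nullTime, nullRadius]
    constructor <;> linarith [le_abs_self t₀, neg_abs_le t₀]
  linarith

lemma abs_powerNonlinearity {p : ℕ} (hp : p ≠ 0) (x : ℝ) : |powerNonlinearity p x| = |x| ^ p := by
  rw [powerNonlinearity, abs_mul, abs_pow, abs_abs, pow_sub_one_mul hp]

lemma inv_nullRadius_cube_le {ξ η : ℝ} (hξ : 0 < ξ) (hη : 0 < η) :
    1 / nullRadius ξ η ^ 3 ≤ ξ ^ (-(3 / 2) : ℝ) * η ^ (-(3 / 2) : ℝ) := by
  have hr : 0 < nullRadius ξ η := by unfold nullRadius; positivity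
  have ham_gm : ξ * η ≤ nullRadius ξ η ^ 2 := by
    unfold nullRadius
    linarith [sq_nonneg (ξ - η)]
  calc 1 / nullRadius ξ η ^ 3 = (nullRadius ξ η ^ 2) ^ (-(3 / 2) : ℝ) := by
        rw [← Real.rpow_natCast (nullRadius ξ η) 2, ← Real.rpow_mul hr.le, one_div,
          ← Real.rpow_natCast, ← Real.rpow_neg hr.le]
        norm_num
    _ ≤ (ξ * η) ^ (-(3 / 2) : ℝ) :=
        Real.rpow_le_rpow_of_nonpos (by positivity) ham_gm (by norm_num)
    _ = ξ ^ (-(3 / 2) : ℝ) * η ^ (-(3 / 2) : ℝ) := Real.mul_rpow hξ.le hη.le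

lemma integrableOn_rpow_neg_three_halves {ρ : ℝ} (hρ : 0 < ρ) :
    IntegrableOn (fun x : ℝ => x ^ (-(3 / 2) : ℝ)) (Ici ρ) := by
  rw [integrableOn_Ici_iff_integrableOn_Ioi]
  exact integrableOn_Ioi_rpow_of_lt (by norm_num) hρ

lemma integrableOn_rpow_mul_rpow {ρ : ℝ} (hρ : 0 < ρ) :
    IntegrableOn (fun q : ℝ × ℝ => q.1 ^ (-(3 / 2) : ℝ) * q.2 ^ (-(3 / 2) : ℝ))
      (Ici ρ ×ˢ Ici ρ) := by
  rw [IntegrableOn, Measure.volume_eq_prod, ← Measure.prod_restrict]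
  exact (integrableOn_rpow_neg_three_halves hρ).mul_prod (integrableOn_rpow_neg_three_halves hρ)

lemma setIntegral_rpow_mul_rpow {ρ : ℝ} (hρ : 0 < ρ) :
    ∫ q in Ici ρ ×ˢ Ici ρ, q.1 ^ (-(3 / 2) : ℝ) * q.2 ^ (-(3 / 2) : ℝ) = 4 / ρ := by
  have hone : ∫ x in Ici ρ, x ^ (-(3 / 2) : ℝ) = 2 * ρ ^ (-(1 / 2) : ℝ) := by
    rw [integral_Ici_eq_integral_Ioi, integral_Ioi_rpow_of_lt (by norm_num) hρ]
    norm_num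
    ring
  have hmul : ρ ^ (-(1 / 2) : ℝ) * ρ ^ (-(1 / 2) : ℝ) = 1 / ρ := by
    rw [← Real.rpow_add hρ, show (-(1 / 2) + -(1 / 2) : ℝ) = -1 by norm_num, Real.rpow_neg_one,
      one_div]
  rw [Measure.volume_eq_prod, ← Measure.prod_restrict, integral_prod_mul
    (fun x : ℝ => x ^ (-(3 / 2) : ℝ)) (fun x : ℝ => x ^ (-(3 / 2) : ℝ)), hone]
  linear_combination 4 * hmul

lemma continuousOn_sourceDensity (p : ℕ) {u : ℝ → ℝ → ℝ} (h : SmoothOnCone u) {t₀ ρ : ℝ}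
    (hρ : |t₀| < ρ) : ContinuousOn (sourceDensity p u t₀ ρ) (Ici ρ ×ˢ Ici ρ) := by
  have hρ₀ : 0 < ρ := (abs_nonneg t₀).trans_lt hρ
  have hu := h.continuousOn_null (t₀ := t₀) (s := Ici ρ ×ˢ Ici ρ)
    fun q hq => ⟨hρ.trans_le hq.1, hρ.trans_le hq.2⟩
  have hm : ContinuousOn (fun q : ℝ × ℝ => riemannKernel ρ q.1 q.2) (Ici ρ ×ˢ Ici ρ) :=
    (continuousOn_riemannKernel hρ₀).mono fun q hq => ⟨hρ₀.trans_le hq.1, hρ₀.trans_le hq.2⟩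
  exact ((continuousOn_fst.add continuousOn_snd).mul hm).mul ((hu.abs.pow _).mul hu)

section DecayBound

variable {p : ℕ} (hp : 5 ≤ p) {u : ℝ → ℝ → ℝ} {t₀ ρ R A : ℝ} (hR : 0 < R)
  (hA : DecayBound u R A) (hρ : R + |t₀| < ρ)

include hp hR hA in
lemma abs_powerNonlinearity_le_of_decayBound {t r : ℝ} (hr : R + |t| < r) :
    |powerNonlinearity p (u t r)| ≤ (A / r) ^ 5 * (A / R) ^ (p - 5) := by
  have hA₀ := hA.1
  have hRr : R ≤ r := by linarith [abs_nonneg t]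
  have hr₀ : 0 < r := hR.trans_le hRr
  have hu := hA.2 t r hr
  have hu' : |u t r| ≤ A / R := hu.trans (by gcongr)
  calc |powerNonlinearity p (u t r)| = |u t r| ^ 5 * |u t r| ^ (p - 5) := by
        rw [abs_powerNonlinearity (by omega), ← pow_add, Nat.add_sub_of_le hp]
    _ ≤ (A / r) ^ 5 * (A / R) ^ (p - 5) := by gcongr

include hp hR hA hρ

lemma abs_sourceDensity_le {q : ℝ × ℝ} (hq : q ∈ Ici ρ ×ˢ Ici ρ) :
    |sourceDensity p u t₀ ρ q| ≤ 4 * riemannProfile 1 * A ^ 5 * (A / R) ^ (p - 5) *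
      (q.1 ^ (-(3 / 2) : ℝ) * q.2 ^ (-(3 / 2) : ℝ)) := by
  obtain ⟨ξ, η⟩ := q
  obtain ⟨hξ, hη⟩ : ρ ≤ ξ ∧ ρ ≤ η := hq
  have hA₀ := hA.1
  have hprofile := riemannProfile_nonneg zero_le_one
  have hρ₀ : 0 < ρ := by linarith [abs_nonneg t₀]
  have hξ₀ := hρ₀.trans_le hξ
  have hη₀ := hρ₀.trans_le hη
  have hr : 0 < nullRadius ξ η := by unfold nullRadius; positivity
  have hkernel := riemannKernel_nonneg hρ₀ hξ hη
  have hsource := abs_powerNonlinearity_le_of_decayBound hp hR hA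
    (add_abs_nullTime_lt_nullRadius (hρ.trans_le hξ) (hρ.trans_le hη))
  have hsum : ξ + η = 2 * nullRadius ξ η := by unfold nullRadius; ring
  rw [sourceDensity, abs_mul, abs_mul, abs_of_nonneg hkernel, abs_of_pos (add_pos hξ₀ hη₀)]
  calc (ξ + η) * riemannKernel ρ ξ η *
        |powerNonlinearity p (u (nullTime t₀ ξ η) (nullRadius ξ η))|
      ≤ (ξ + η) * (riemannProfile 1 * (ξ + η)) *
          ((A / nullRadius ξ η) ^ 5 * (A / R) ^ (p - 5)) := by
        gcongr
        exact riemannKernel_le hρ₀ hξ hη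
    _ = 4 * riemannProfile 1 * A ^ 5 * (A / R) ^ (p - 5) * (1 / nullRadius ξ η ^ 3) := by
        rw [hsum]
        field_simp
        ring
    _ ≤ _ := by
        gcongr
        exact inv_nullRadius_cube_le hξ₀ hη₀

lemma integrableOn_sourceDensity (h : SmoothOnCone u) :
    IntegrableOn (sourceDensity p u t₀ ρ) (Ici ρ ×ˢ Ici ρ) := by
  refine Integrable.mono' ((integrableOn_rpow_mul_rpow (by linarith [abs_nonneg t₀])).const_mul
      (4 * riemannProfile 1 * A ^ 5 * (A / R) ^ (p - 5)))
    ((continuousOn_sourceDensity p h (by linarith)).aestronglyMeasurable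
      (measurableSet_Ici.prod measurableSet_Ici)) ?_
  filter_upwards [ae_restrict_mem (measurableSet_Ici.prod measurableSet_Ici)] with q hq
  exact abs_sourceDensity_le hp hR hA hρ hq

lemma tendsto_setIntegral_sourceDensity (h : SmoothOnCone u) :
    Tendsto (fun Λ : ℝ => ∫ q in Icc ρ Λ ×ˢ Icc ρ Λ, sourceDensity p u t₀ ρ q) atTop
      (𝓝 (sourceIntegral p u t₀ ρ)) := by
  have hunion : (⋃ Λ : ℝ, Icc ρ Λ ×ˢ Icc ρ Λ) = Ici ρ ×ˢ Ici ρ := by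
    ext q
    simp only [mem_iUnion, mem_prod, mem_Icc, mem_Ici]
    exact ⟨fun ⟨Λ, h₁, h₂⟩ => ⟨h₁.1, h₂.1⟩,
      fun ⟨h₁, h₂⟩ => ⟨max q.1 q.2, ⟨h₁, le_max_left _ _⟩, h₂, le_max_right _ _⟩⟩
  rw [sourceIntegral, ← hunion]
  refine tendsto_setIntegral_of_monotone (fun Λ => measurableSet_Icc.prod measurableSet_Icc)
    (fun a b hab => prod_mono (Icc_subset_Icc_right hab) (Icc_subset_Icc_right hab)) ?_
  rw [hunion]
  exact integrableOn_sourceDensity hp hR hA hρ h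

lemma abs_sourceIntegral_le :
    |sourceIntegral p u t₀ ρ| ≤ 4 * riemannProfile 1 * A ^ 5 * (A / R) ^ (p - 5) * (4 / ρ) := by
  have hρ₀ : 0 < ρ := by linarith [abs_nonneg t₀]
  rw [← setIntegral_rpow_mul_rpow hρ₀, ← integral_const_mul, ← Real.norm_eq_abs, sourceIntegral]
  refine norm_integral_le_of_norm_le ((integrableOn_rpow_mul_rpow hρ₀).const_mul _) ?_
  filter_upwards [ae_restrict_mem (measurableSet_Ici.prod measurableSet_Ici)] with q hq
  exact abs_sourceDensity_le hp hR hA hρ hq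

end DecayBound

/-! ### Boundary terms of Green's identity -/

/-- The quantity integrated against the Riemann kernel along an outer edge of a null square:
`σ = 1` is the future edge `η = Λ` and `σ = -1` the past edge `ξ = Λ`; the other null coordinate is
the parameter. -/
noncomputable def edgeFlux (u : ℝ → ℝ → ℝ) (t₀ σ Λ ξ : ℝ) : ℝ :=
  (ξ + Λ) * ((dru u (t₀ + σ * ((Λ - ξ) / 2)) ((ξ + Λ) / 2) -
    σ * dtu u (t₀ + σ * ((Λ - ξ) / 2)) ((ξ + Λ) / 2)) / 2) +
    3 / 2 * u (t₀ + σ * ((Λ - ξ) / 2)) ((ξ + Λ) / 2)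

/-- The contribution of an outer edge of the null square `[ρ, Λ]²` to Green's identity. -/
noncomputable def edgeIntegral (u : ℝ → ℝ → ℝ) (t₀ σ ρ Λ : ℝ) : ℝ :=
  ∫ ξ in Icc ρ Λ, riemannKernel ρ ξ Λ * edgeFlux u t₀ σ Λ ξ

/-- All terms of Green's identity on the null square `[ρ, Λ]²` supported on its outer edges. -/
noncomputable def boundaryTerm (u : ℝ → ℝ → ℝ) (t₀ ρ Λ : ℝ) : ℝ :=
  2 * Λ * riemannKernel ρ Λ Λ * u t₀ Λ - edgeIntegral u t₀ 1 ρ Λ - edgeIntegral u t₀ (-1) ρ Λ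

lemma four_mul_sq_mul_eq_boundaryTerm_sub {p : ℕ} {u : ℝ → ℝ → ℝ} (h : IsExtSol p ⊤ 0 u)
    {t₀ ρ Λ : ℝ} (hρ : |t₀| < ρ) (hρΛ : ρ ≤ Λ) :
    4 * ρ ^ 2 * u t₀ ρ = boundaryTerm u t₀ ρ Λ -
      1 / 4 * ∫ q in Icc ρ Λ ×ˢ Icc ρ Λ, sourceDensity p u t₀ ρ q := by
  have hpast : ∀ ξ, nullTime t₀ Λ ξ = t₀ + -1 * ((Λ - ξ) / 2) := fun ξ => by
    rw [nullTime]
    ring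
  rw [four_mul_sq_mul_eq_of_isExtSol h hρ hρΛ]
  simp only [boundaryTerm, edgeIntegral, edgeFlux, sourceDensity, hpast,
    riemannKernel_comm ρ Λ, nullRadius, add_comm Λ, neg_one_mul, one_mul, sub_neg_eq_add]
  rfl

lemma add_abs_edge_lt {R t₀ σ ξ Λ : ℝ} (hσ : |σ| = 1) (hξ : R + |t₀| < ξ) (hΛ : ξ ≤ Λ) :
    R + |t₀ + σ * ((Λ - ξ) / 2)| < (ξ + Λ) / 2 := by
  linarith [abs_add_mul_le (t₀ := t₀) hσ (show 0 ≤ (Λ - ξ) / 2 by linarith)]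

lemma SmoothOnCone.continuousOn_edge {u : ℝ → ℝ → ℝ} (h : SmoothOnCone u) {t₀ σ ρ Λ : ℝ}
    (hσ : |σ| = 1) (hρ : |t₀| < ρ) :
    ContinuousOn (fun ξ => u (t₀ + σ * ((Λ - ξ) / 2)) ((ξ + Λ) / 2)) (Icc ρ Λ) :=
  h.continuousOn.comp (f := fun ξ => (t₀ + σ * ((Λ - ξ) / 2), (ξ + Λ) / 2)) (by fun_prop)
    fun ξ hξ => show |t₀ + σ * ((Λ - ξ) / 2)| < (ξ + Λ) / 2 by
      linarith [add_abs_edge_lt (R := 0) hσ (by linarith [hξ.1]) hξ.2]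

lemma SmoothOnCone.continuousOn_edgeFlux {u : ℝ → ℝ → ℝ} (h : SmoothOnCone u) {t₀ σ ρ Λ : ℝ}
    (hσ : |σ| = 1) (hρ : |t₀| < ρ) : ContinuousOn (edgeFlux u t₀ σ Λ) (Icc ρ Λ) := by
  have hu := h.continuousOn_edge (Λ := Λ) hσ hρ
  have ht := h.dtu.continuousOn_edge (Λ := Λ) hσ hρ
  have hr := h.dru.continuousOn_edge (Λ := Λ) hσ hρ
  exact ((continuousOn_id.add continuousOn_const).mul
    ((hr.sub (continuousOn_const.mul ht)).div_const 2)).add (continuousOn_const.mul hu)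

lemma sq_dru_sub_mul_dtu_mul_le (u : ℝ → ℝ → ℝ) {σ t r : ℝ} (hσ : |σ| = 1) (hr : 0 ≤ r) :
    (dru u t r - σ * dtu u t r) ^ 2 * r ^ 3 ≤ 2 * energyDensity u t r := by
  have hsq : σ ^ 2 = 1 := by rw [← sq_abs, hσ, one_pow]
  have hsum : (dru u t r - σ * dtu u t r) ^ 2 ≤ 2 * (dtu u t r ^ 2 + dru u t r ^ 2) := by
    linear_combination (exp := 1) sq_nonneg (dru u t r + σ * dtu u t r) + 2 * dtu u t r ^ 2 * hsq
  calc (dru u t r - σ * dtu u t r) ^ 2 * r ^ 3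
      ≤ 2 * (dtu u t r ^ 2 + dru u t r ^ 2) * r ^ 3 := by gcongr
    _ = 2 * energyDensity u t r := by rw [energyDensity]; ring

lemma mul_sqrt_div_mul_abs_le {C δ g ξ w E : ℝ} (hδ : 0 < δ) (hξ : 0 < ξ) (hg : 0 ≤ g)
    (hw : w ^ 2 * (g / 2) ^ 3 ≤ 2 * E) :
    C * (√g / ξ) * (g * (|w| / 2)) ≤ δ * (1 / ξ ^ 2) + C ^ 2 / δ * E := by
  have hyoung : C * (√g / ξ) * (g * (|w| / 2)) ≤
      δ * (1 / ξ ^ 2) + C ^ 2 * √g ^ 2 * g ^ 2 * |w| ^ 2 / (16 * δ) := by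
    rw [← sub_nonneg]
    calc 0 ≤ (δ * (1 / ξ) - C * √g * g * |w| / 4) ^ 2 / δ := by positivity
      _ = _ := by field_simp; ring
  calc C * (√g / ξ) * (g * (|w| / 2))
      ≤ δ * (1 / ξ ^ 2) + C ^ 2 * √g ^ 2 * g ^ 2 * |w| ^ 2 / (16 * δ) := hyoung
    _ = δ * (1 / ξ ^ 2) + C ^ 2 / δ * (w ^ 2 * (g / 2) ^ 3 / 2) := by
        rw [Real.sq_sqrt hg, sq_abs]
        field_simp
        ring
    _ ≤ δ * (1 / ξ ^ 2) + C ^ 2 / δ * E := by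
        gcongr
        linarith

lemma mul_sqrt_div_mul_div_le {C A g ξ Λ : ℝ} (hC : 0 ≤ C) (hA : 0 ≤ A) (hξ : 0 < ξ) (hΛ : 0 < Λ)
    (hg : Λ ≤ g) : C * (√g / ξ) * (3 / 2 * (A / (g / 2))) ≤ 3 * A * C / √Λ * (1 / ξ) := by
  have hg₀ : 0 < g := hΛ.trans_le hg
  have hsqrt : √g * √g = g := Real.mul_self_sqrt hg₀.le
  calc C * (√g / ξ) * (3 / 2 * (A / (g / 2))) = 3 * A * C / √g * (1 / ξ) := by
        field_simp [(Real.sqrt_pos.2 hg₀).ne']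
        linear_combination A * C * hsqrt
    _ ≤ 3 * A * C / √Λ * (1 / ξ) := by gcongr

lemma mul_sqrt_div_mul_abs_add_le {C A δ Λ ξ w v E : ℝ} (hC : 0 ≤ C) (hA : 0 ≤ A) (hδ : 0 < δ)
    (hξ : 0 < ξ) (hΛ : 0 < Λ) (hw : w ^ 2 * ((ξ + Λ) / 2) ^ 3 ≤ 2 * E)
    (hv : |v| ≤ A / ((ξ + Λ) / 2)) :
    C * (√(ξ + Λ) / ξ) * |(ξ + Λ) * (w / 2) + 3 / 2 * v| ≤
      δ * (1 / ξ ^ 2) + C ^ 2 / δ * E + 3 * A * C / √Λ * (1 / ξ) := by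
  have hsum : 0 < ξ + Λ := add_pos hξ hΛ
  have htriangle : |(ξ + Λ) * (w / 2) + 3 / 2 * v| ≤
      (ξ + Λ) * (|w| / 2) + 3 / 2 * (A / ((ξ + Λ) / 2)) := by
    refine (abs_add_le _ _).trans (add_le_add ?_ ?_)
    · rw [abs_mul, abs_of_pos hsum, abs_div, abs_two]
    · rw [abs_mul, abs_of_pos (by norm_num : (0 : ℝ) < 3 / 2)]
      gcongr
  calc C * (√(ξ + Λ) / ξ) * |(ξ + Λ) * (w / 2) + 3 / 2 * v|
      ≤ C * (√(ξ + Λ) / ξ) * ((ξ + Λ) * (|w| / 2) + 3 / 2 * (A / ((ξ + Λ) / 2))) := by gcongr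
    _ = C * (√(ξ + Λ) / ξ) * ((ξ + Λ) * (|w| / 2)) +
          C * (√(ξ + Λ) / ξ) * (3 / 2 * (A / ((ξ + Λ) / 2))) := mul_add _ _ _
    _ ≤ _ := add_le_add (mul_sqrt_div_mul_abs_le hδ hξ hsum.le hw)
          (mul_sqrt_div_mul_div_le hC hA hξ hΛ (by linarith))

lemma abs_setIntegral_mul_sub_setIntegral_mul_le {k₀ k₁ f g : ℝ → ℝ} {a b c : ℝ} (hab : a ≤ b)
    (hbc : b ≤ c) (hk₀ : ContinuousOn k₀ (Icc a c)) (hk₁ : ContinuousOn k₁ (Icc b c))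
    (hf : ContinuousOn f (Icc a c)) (hg : ContinuousOn g (Icc a c))
    (hleft : ∀ x ∈ Icc a b, |k₀ x| * |f x| ≤ g x)
    (hright : ∀ x ∈ Icc b c, |k₀ x - k₁ x| * |f x| ≤ g x) :
    |(∫ x in Icc a c, k₀ x * f x) - ∫ x in Icc b c, k₁ x * f x| ≤ ∫ x in Icc a c, g x := by
  have hac := hab.trans hbc
  have hsub₁ : Icc a b ⊆ Icc a c := Icc_subset_Icc_right hbc
  have hsub₂ : Icc b c ⊆ Icc a c := Icc_subset_Icc_left hab
  have hkf : ContinuousOn (fun x => k₀ x * f x) (Icc a c) := hk₀.mul hf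
  have hk₁f : ContinuousOn (fun x => k₁ x * f x) (Icc b c) := hk₁.mul (hf.mono hsub₂)
  have hkf₁ := (hkf.mono hsub₁).intervalIntegrable_of_Icc (μ := volume) hab
  have hkf₂ := (hkf.mono hsub₂).intervalIntegrable_of_Icc (μ := volume) hbc
  have hg₁ := (hg.mono hsub₁).intervalIntegrable_of_Icc (μ := volume) hab
  have hg₂ := (hg.mono hsub₂).intervalIntegrable_of_Icc (μ := volume) hbc
  simp only [integral_Icc_eq_integral_Ioc, ← intervalIntegral.integral_of_le hac,
    ← intervalIntegral.integral_of_le hbc]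
  rw [← intervalIntegral.integral_add_adjacent_intervals hkf₁ hkf₂,
    ← intervalIntegral.integral_add_adjacent_intervals hg₁ hg₂, add_sub_assoc,
    ← intervalIntegral.integral_sub hkf₂ (hk₁f.intervalIntegrable_of_Icc hbc)]
  refine (abs_add_le _ _).trans (add_le_add ?_ ?_)
  · rw [← Real.norm_eq_abs]
    refine intervalIntegral.norm_integral_le_of_norm_le hab (.of_forall fun x hx => ?_) hg₁
    rw [Real.norm_eq_abs, abs_mul]
    exact hleft x ⟨hx.1.le, hx.2⟩
  · rw [← Real.norm_eq_abs]
    refine intervalIntegral.norm_integral_le_of_norm_le hbc (.of_forall fun x hx => ?_) hg₂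
    rw [Real.norm_eq_abs, ← sub_mul, abs_mul]
    exact hright x ⟨hx.1.le, hx.2⟩

lemma continuousOn_one_div_pow {a b : ℝ} (ha : 0 < a) (n : ℕ) :
    ContinuousOn (fun x : ℝ => 1 / x ^ n) (Icc a b) :=
  continuousOn_const.div (by fun_prop) fun _ hx => pow_ne_zero _ (ha.trans_le hx.1).ne'

lemma setIntegral_one_div_sq_le {a b : ℝ} (ha : 0 < a) (hab : a ≤ b) :
    ∫ x in Icc a b, 1 / x ^ 2 ≤ 1 / a := by
  have hderiv : ∀ x ∈ Icc a b, HasDerivAt (fun y : ℝ => -y⁻¹) (1 / x ^ 2) x := fun x hx => by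
    simpa using (hasDerivAt_inv (ha.trans_le hx.1).ne').fun_neg
  rw [setIntegral_Icc_eq_sub_of_hasDerivAt hab hderiv (continuousOn_one_div_pow ha 2), one_div]
  linarith [inv_pos.2 (ha.trans_le hab)]

lemma setIntegral_one_div {a b : ℝ} (ha : 0 < a) (hab : a ≤ b) :
    ∫ x in Icc a b, 1 / x = Real.log (b / a) := by
  rw [integral_Icc_eq_integral_Ioc, ← intervalIntegral.integral_of_le hab,
    integral_one_div_of_pos ha (ha.trans_le hab)]

lemma setIntegral_edge_majorant_le {a b C A δ J : ℝ} {E : ℝ → ℝ} (ha : 0 < a) (hab : a ≤ b)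
    (hδ : 0 < δ) (hE : ContinuousOn E (Icc a b)) (hJ : ∫ x in Icc a b, E x ≤ J) :
    ∫ x in Icc a b, (δ * (1 / x ^ 2) + C ^ 2 / δ * E x + 3 * A * C / √b * (1 / x)) ≤
      δ / a + C ^ 2 / δ * J + 3 * A * C * (Real.log (b / a) / √b) := by
  have hinv : ContinuousOn (fun x : ℝ => 1 / x) (Icc a b) := by
    simpa only [pow_one] using continuousOn_one_div_pow ha 1
  have hint₁ := (continuousOn_one_div_pow (b := b) ha 2).integrableOn_Icc (μ := volume)
    |>.const_mul δ
  have hint₂ := (hE.integrableOn_Icc (μ := volume)).const_mul (C ^ 2 / δ)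
  have hint₃ := (hinv.integrableOn_Icc (μ := volume)).const_mul (3 * A * C / √b)
  have hint₁₂ : Integrable (fun x => δ * (1 / x ^ 2) + C ^ 2 / δ * E x)
      (volume.restrict (Icc a b)) := hint₁.add hint₂
  rw [integral_add hint₁₂ hint₃, integral_add hint₁ hint₂, integral_const_mul,
    integral_const_mul, integral_const_mul, setIntegral_one_div ha hab]
  have hsq := setIntegral_one_div_sq_le ha hab
  calc _ ≤ δ * (1 / a) + C ^ 2 / δ * J + 3 * A * C / √b * Real.log (b / a) := by gcongr
    _ = _ := by ring

lemma tendsto_log_div_div_sqrt {ρ : ℝ} (hρ : 0 < ρ) :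
    Tendsto (fun Λ : ℝ => Real.log (Λ / ρ) / √Λ) atTop (𝓝 0) := by
  have hlog : Tendsto (fun Λ : ℝ => Real.log Λ / √Λ) atTop (𝓝 0) := by
    simpa only [Real.sqrt_eq_rpow] using
      (isLittleO_log_rpow_atTop (show (0 : ℝ) < 1 / 2 by norm_num)).tendsto_div_nhds_zero
  have hdiff := hlog.sub
    ((tendsto_const_nhds (x := Real.log ρ)).div_atTop Real.tendsto_sqrt_atTop)
  rw [sub_zero] at hdiff
  refine hdiff.congr' ?_
  filter_upwards [eventually_gt_atTop 0] with Λ hΛ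
  rw [Real.log_div hΛ.ne' hρ.ne', sub_div]

lemma tendsto_sqrt_add_self_div : Tendsto (fun Λ : ℝ => √(Λ + Λ) / Λ) atTop (𝓝 0) := by
  have hlim : Tendsto (fun Λ : ℝ => 2 / √(Λ + Λ)) atTop (𝓝 0) :=
    tendsto_const_nhds.div_atTop
      (Real.tendsto_sqrt_atTop.comp (tendsto_id.atTop_add_atTop tendsto_id))
  refine hlim.congr' ?_
  filter_upwards [eventually_gt_atTop 0] with Λ hΛ
  have hsqrt := Real.mul_self_sqrt (show 0 ≤ Λ + Λ by linarith)
  rw [div_eq_div_iff (Real.sqrt_pos.2 (by linarith)).ne' hΛ.ne']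
  linarith

/-- The bounds on the Riemann kernels with vertices `ρ₀ ≤ ρ₁` that make their contributions to the
outer edges of a large null square asymptotically equal. -/
structure KernelBound (ρ₀ ρ₁ C : ℝ) : Prop where
  nonneg : 0 ≤ C
  inner : ∀ ξ η, ρ₀ ≤ ξ → ξ ≤ ρ₁ → ξ ≤ η → |riemannKernel ρ₀ ξ η| ≤ C * (√(ξ + η) / ξ)
  outer : ∀ ξ η, ρ₁ ≤ ξ → ξ ≤ η →
    |riemannKernel ρ₀ ξ η - riemannKernel ρ₁ ξ η| ≤ C * (√(ξ + η) / ξ)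

lemma exists_kernelBound {ρ₀ ρ₁ : ℝ} (hρ₀ : 0 < ρ₀) (hρ : ρ₀ ≤ ρ₁) : ∃ C, KernelBound ρ₀ ρ₁ C := by
  obtain ⟨C, hC, hinner⟩ := exists_abs_riemannKernel_le hρ₀ ρ₁
  obtain ⟨D, -, houter⟩ := exists_abs_riemannKernel_sub_riemannKernel_le hρ₀ (hρ₀.trans_le hρ)
  refine ⟨max C D, hC.trans (le_max_left _ _), fun ξ η hξ hξ' hη => ?_, fun ξ η hξ hη => ?_⟩
  · have hξ₀ := hρ₀.trans_le hξ
    refine (hinner ξ η hξ hξ' hη).trans ?_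
    gcongr
    exact le_max_left _ _
  · have hξ₀ := (hρ₀.trans_le hρ).trans_le hξ
    refine (houter ξ η (hρ.trans hξ) hξ hη).trans ?_
    gcongr
    exact le_max_right _ _

section Boundary

variable {u : ℝ → ℝ → ℝ} (h : SmoothOnCone u) {t₀ ρ₀ ρ₁ R A C Λ : ℝ} (hR : 0 ≤ R)
  (hρ₀ : R + |t₀| < ρ₀) (hρ : ρ₀ ≤ ρ₁) (hA : DecayBound u R A) (hC : KernelBound ρ₀ ρ₁ C)
  (hΛ : ρ₁ ≤ Λ)

include hR hρ₀ hρ hA hC hΛ in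
lemma abs_corner_sub_corner_le :
    |2 * Λ * riemannKernel ρ₀ Λ Λ * u t₀ Λ - 2 * Λ * riemannKernel ρ₁ Λ Λ * u t₀ Λ| ≤
      2 * A * C * (√(Λ + Λ) / Λ) := by
  have hC₀ := hC.nonneg
  have hΛ₀ : 0 < Λ := by linarith [abs_nonneg t₀]
  have hu := hA.2 t₀ Λ (by linarith)
  have hkernel := hC.outer Λ Λ hΛ le_rfl
  calc |2 * Λ * riemannKernel ρ₀ Λ Λ * u t₀ Λ - 2 * Λ * riemannKernel ρ₁ Λ Λ * u t₀ Λ|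
      = 2 * Λ * (|riemannKernel ρ₀ Λ Λ - riemannKernel ρ₁ Λ Λ| * |u t₀ Λ|) := by
        rw [← abs_mul, ← abs_of_pos (show 0 < 2 * Λ by positivity), ← abs_mul,
          abs_of_pos (show 0 < 2 * Λ by positivity)]
        ring_nf
    _ ≤ 2 * Λ * (C * (√(Λ + Λ) / Λ) * (A / Λ)) := by gcongr
    _ = 2 * A * C * (√(Λ + Λ) / Λ) := by field_simp

include hR hρ₀ hA hC in
lemma mul_sqrt_div_mul_abs_edgeFlux_le {σ δ ξ : ℝ} (hσ : |σ| = 1) (hδ : 0 < δ)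
    (hξ : ξ ∈ Icc ρ₀ Λ) :
    C * (√(ξ + Λ) / ξ) * |edgeFlux u t₀ σ Λ ξ| ≤ δ * (1 / ξ ^ 2) +
      C ^ 2 / δ * energyDensity u (t₀ + σ * ((Λ - ξ) / 2)) ((ξ + Λ) / 2) +
      3 * A * C / √Λ * (1 / ξ) := by
  have hξ₀ : 0 < ξ := by linarith [abs_nonneg t₀, hξ.1]
  have hΛ₀ : 0 < Λ := hξ₀.trans_le hξ.2
  exact mul_sqrt_div_mul_abs_add_le hC.nonneg hA.1 hδ hξ₀ hΛ₀
    (sq_dru_sub_mul_dtu_mul_le u hσ (by positivity))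
    (hA.2 _ _ (add_abs_edge_lt hσ (hρ₀.trans_le hξ.1) hξ.2))

include h hR hρ₀ hρ hA hC hΛ

lemma abs_edgeIntegral_sub_edgeIntegral_le {σ δ J : ℝ} (hσ : |σ| = 1) (hδ : 0 < δ)
    (hJ : ∫ ξ in Icc ρ₀ Λ, energyDensity u (t₀ + σ * ((Λ - ξ) / 2)) ((ξ + Λ) / 2) ≤ J) :
    |edgeIntegral u t₀ σ ρ₀ Λ - edgeIntegral u t₀ σ ρ₁ Λ| ≤
      δ / ρ₀ + C ^ 2 / δ * J + 3 * A * C * (Real.log (Λ / ρ₀) / √Λ) := by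
  have ht₀ : |t₀| < ρ₀ := by linarith
  have hρ₀_pos : 0 < ρ₀ := (abs_nonneg t₀).trans_lt ht₀
  have hkernel : ∀ {ρ}, 0 < ρ → ContinuousOn (fun ξ => riemannKernel ρ ξ Λ) (Icc ρ Λ) :=
    fun hρ => (continuousOn_riemannKernel hρ).comp (f := fun ξ => (ξ, Λ)) (by fun_prop)
      fun ξ hξ => ⟨hρ.trans_le hξ.1, hρ.trans_le (hξ.1.trans hξ.2)⟩
  have henergy := h.energyDensity.continuousOn_edge (Λ := Λ) hσ ht₀
  have hinv : ContinuousOn (fun x : ℝ => 1 / x) (Icc ρ₀ Λ) := by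
    simpa only [pow_one] using continuousOn_one_div_pow hρ₀_pos 1
  refine (abs_setIntegral_mul_sub_setIntegral_mul_le hρ hΛ (hkernel hρ₀_pos)
    (hkernel (hρ₀_pos.trans_le hρ)) (h.continuousOn_edgeFlux hσ ht₀)
    (((continuousOn_const.mul (continuousOn_one_div_pow hρ₀_pos 2)).add
      (continuousOn_const.mul henergy)).add (continuousOn_const.mul hinv))
    (fun ξ hξ => ?_) fun ξ hξ => ?_).trans
    (setIntegral_edge_majorant_le hρ₀_pos (hρ.trans hΛ) hδ henergy hJ)
  · have hξΛ := hξ.2.trans hΛ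
    exact (mul_le_mul_of_nonneg_right (hC.inner ξ Λ hξ.1 hξ.2 hξΛ) (abs_nonneg _)).trans
      (mul_sqrt_div_mul_abs_edgeFlux_le hR hρ₀ hA hC hσ hδ ⟨hξ.1, hξΛ⟩)
  · exact (mul_le_mul_of_nonneg_right (hC.outer ξ Λ hξ.1 hξ.2) (abs_nonneg _)).trans
      (mul_sqrt_div_mul_abs_edgeFlux_le hR hρ₀ hA hC hσ hδ ⟨hρ.trans hξ.1, hξ.2⟩)

lemma abs_boundaryTerm_sub_boundaryTerm_le {δ J : ℝ} (hδ : 0 < δ)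
    (hJ : ∀ σ, |σ| = 1 →
      ∫ ξ in Icc ρ₀ Λ, energyDensity u (t₀ + σ * ((Λ - ξ) / 2)) ((ξ + Λ) / 2) ≤ J) :
    |boundaryTerm u t₀ ρ₀ Λ - boundaryTerm u t₀ ρ₁ Λ| ≤ 2 * A * C * (√(Λ + Λ) / Λ) +
      2 * (δ / ρ₀ + C ^ 2 / δ * J + 3 * A * C * (Real.log (Λ / ρ₀) / √Λ)) := by
  have hedge := fun {σ : ℝ} (hσ : |σ| = 1) =>
    abs_le.1 (abs_edgeIntegral_sub_edgeIntegral_le h hR hρ₀ hρ hA hC hΛ hσ hδ (hJ σ hσ))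
  have hfuture := hedge (σ := 1) abs_one
  have hpast := hedge (σ := -1) (by rw [abs_neg, abs_one])
  have hcorner := abs_le.1 (abs_corner_sub_corner_le hR hρ₀ hρ hA hC hΛ)
  rw [abs_le, boundaryTerm, boundaryTerm]
  constructor <;> linarith [hfuture.1, hfuture.2, hpast.1, hpast.2, hcorner.1, hcorner.2]

end Boundary

section Conservation

variable {u : ℝ → ℝ → ℝ} {t₀ ρ₀ ρ₁ R M A : ℝ} (hR : 0 ≤ R)
  (hM : EnergyBound u R M) (hA : DecayBound u R A) (hvan : ExtEnergyVanishes R u)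
  (hρ₀ : R + |t₀| < ρ₀) (hρ : ρ₀ ≤ ρ₁)

include hR hM hA hvan hρ₀ hρ

lemma exists_abs_boundaryTerm_sub_boundaryTerm_lt (h : SmoothOnCone u) {ε : ℝ} (hε : 0 < ε)
    (N : ℝ) : ∃ Λ ≥ N, |boundaryTerm u t₀ ρ₀ Λ - boundaryTerm u t₀ ρ₁ Λ| < ε := by
  have hρ₀_pos : 0 < ρ₀ := by linarith [abs_nonneg t₀]
  obtain ⟨C, hC⟩ := exists_kernelBound hρ₀_pos hρ
  have hlim : Tendsto (fun Λ : ℝ => 2 * A * C * (√(Λ + Λ) / Λ) +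
      2 * (3 * A * C * (Real.log (Λ / ρ₀) / √Λ))) atTop (𝓝 0) := by
    simpa using (tendsto_sqrt_add_self_div.const_mul (2 * A * C)).add
      (((tendsto_log_div_div_sqrt hρ₀_pos).const_mul (3 * A * C)).const_mul 2)
  obtain ⟨N', hN'⟩ := eventually_atTop.1 (hlim.eventually (gt_mem_nhds (half_pos hε)))
  have hδ : 0 < ε / 8 * ρ₀ := by positivity
  have hJ : 0 < ε / 8 * ρ₀ * (ε / 8) / (C ^ 2 + 1) := by positivity
  obtain ⟨Λ, hΛ, hedges⟩ := exists_integral_energyDensity_edges_le h hR hM hvan hρ₀ hJ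
    (max N (max N' ρ₁))
  obtain ⟨hΛN, hΛN', hΛρ₁⟩ : N ≤ Λ ∧ N' ≤ Λ ∧ ρ₁ ≤ Λ := by simpa using hΛ
  refine ⟨Λ, hΛN,
    (abs_boundaryTerm_sub_boundaryTerm_le h hR hρ₀ hρ hA hC hΛρ₁ hδ hedges).trans_lt ?_⟩
  have hcorner : ε / 8 * ρ₀ / ρ₀ = ε / 8 := mul_div_cancel_right₀ _ hρ₀_pos.ne'
  have henergy : C ^ 2 / (ε / 8 * ρ₀) * (ε / 8 * ρ₀ * (ε / 8) / (C ^ 2 + 1)) ≤ ε / 8 := by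
    calc C ^ 2 / (ε / 8 * ρ₀) * (ε / 8 * ρ₀ * (ε / 8) / (C ^ 2 + 1))
        = C ^ 2 / (C ^ 2 + 1) * (ε / 8) := by field_simp
      _ ≤ 1 * (ε / 8) := by
        gcongr
        exact (div_le_one (by positivity)).2 (le_add_of_nonneg_right zero_le_one)
      _ = ε / 8 := one_mul _
  linarith [hN' Λ hΛN']

lemma four_mul_sq_mul_add_sourceIntegral_eq {p : ℕ} (hp : 5 ≤ p) (hR_pos : 0 < R)
    (h : IsExtSol p ⊤ 0 u) :
    4 * ρ₀ ^ 2 * u t₀ ρ₀ + 1 / 4 * sourceIntegral p u t₀ ρ₀ =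
      4 * ρ₁ ^ 2 * u t₀ ρ₁ + 1 / 4 * sourceIntegral p u t₀ ρ₁ := by
  have hsmooth := smoothOnCone_of_isExtSol h
  have hlim := fun {ρ : ℝ} (hρ' : R + |t₀| < ρ) =>
    ((tendsto_setIntegral_sourceDensity hp hR_pos hA hρ' hsmooth).const_mul (1 / 4)).const_add
      (4 * ρ ^ 2 * u t₀ ρ)
  refine sub_eq_zero.1 (abs_eq_zero.1 (le_antisymm (le_of_forall_pos_le_add fun ε hε => ?_)
    (abs_nonneg _)))
  obtain ⟨N, hN⟩ := eventually_atTop.1 (((hlim hρ₀).sub (hlim (hρ₀.trans_le hρ))).abs.eventually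
    (lt_mem_nhds (sub_lt_self _ (half_pos hε))))
  obtain ⟨Λ, hΛ, hboundary⟩ := exists_abs_boundaryTerm_sub_boundaryTerm_lt hR hM hA hvan hρ₀ hρ
    hsmooth (half_pos hε) (max N ρ₁)
  have hΛρ₁ : ρ₁ ≤ Λ := (le_max_right _ _).trans hΛ
  have hclose := hN Λ ((le_max_left _ _).trans hΛ)
  rw [four_mul_sq_mul_eq_boundaryTerm_sub h (by linarith) (hρ.trans hΛρ₁),
    four_mul_sq_mul_eq_boundaryTerm_sub h (by linarith) hΛρ₁] at hclose ⊢
  simp only [sub_add_cancel] at hclose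
  linarith

end Conservation

/-! ### Asymptotics at spatial infinity -/

/-- A radial non-radiative solution of the focusing wave equation outside the light cone: its
exterior energies are bounded and vanish asymptotically in both time directions, and its data lie
in the critical Lebesgue space. -/
structure NonradiativeSolution (p : ℕ) (u : ℝ → ℝ → ℝ) : Prop where
  isExtSol : IsExtSol p ⊤ 0 u
  supH_lt_top : ∀ R, 0 < R → supH R u < ⊤
  extEnergyVanishes : ∀ R, 0 < R → ExtEnergyVanishes R u
  lintegral_critical_lt_top :
    ∫⁻ r in Ioi (0 : ℝ), ENNReal.ofReal (|u 0 r| ^ (2 * (p - 1)) * r ^ 3) < ⊤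

/-- The limit of `4 r² u(t₀, r)` as `r → ∞`. It is evaluated at `r = |t₀| + 1` through the quantity
`4 r² u(t₀, r) + ¼ sourceIntegral`, which does not depend on `r > |t₀|`. -/
noncomputable def asymptoticCoefficient (p : ℕ) (u : ℝ → ℝ → ℝ) (t₀ : ℝ) : ℝ :=
  4 * (|t₀| + 1) ^ 2 * u t₀ (|t₀| + 1) + 1 / 4 * sourceIntegral p u t₀ (|t₀| + 1)

lemma mul_abs_mul_add_div_le {t d M δ l : ℝ} (hd : 0 < d) (hδ : δ = (4 * |t| + 1) / d)
    (hl : l = 16 * (|t| * (δ * M) + 1) / d) (hl₀ : 0 ≤ l) :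
    |t| * (δ * M + l / (4 * δ)) < d / 8 * l := by
  have ht : 0 < 4 * |t| + 1 := by positivity
  have hfirst : |t| * (δ * M) = d / 16 * l - 1 := by
    rw [hl]
    field_simp
    ring
  have hsecond : |t| * (l / (4 * δ)) ≤ d / 16 * l := by
    calc |t| * (l / (4 * δ)) = 4 * |t| / (4 * |t| + 1) * (d / 16 * l) := by
          rw [hδ]
          field_simp
          ring
      _ ≤ 1 * (d / 16 * l) := by
          gcongr
          exact (div_le_one ht).2 (by linarith)
      _ = d / 16 * l := one_mul _
  rw [mul_add]
  linarith

lemma mul_log_le_setIntegral_abs_mul {f : ℝ → ℝ} {a b c : ℝ} (ha : 0 < a) (hab : a ≤ b)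
    (hf : ContinuousOn f (Icc a b)) (hlow : ∀ r ∈ Icc a b, c ≤ r ^ 2 * |f r|) :
    c * Real.log (b / a) ≤ ∫ r in Icc a b, |f r| * r := by
  rw [← setIntegral_one_div ha hab, ← integral_const_mul]
  refine setIntegral_mono_on (continuousOn_const.mul (continuousOn_const.div continuousOn_id
    fun r hr => (ha.trans_le hr.1).ne')).integrableOn_Icc
    (hf.abs.mul continuousOn_id).integrableOn_Icc measurableSet_Icc fun r hr => ?_
  rw [mul_one_div, div_le_iff₀ (ha.trans_le hr.1)]
  linarith [hlow r hr]

/-- Otherwise `|u(t, r) - u(0, r)| ≥ c / r²` for large `r`, and the integral of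
`|u(t, r) - u(0, r)| r` over `[N, N eˡ]` would grow linearly in `l` with a slope that finite energy
does not allow. -/
lemma eq_of_tendsto_sq_mul {u : ℝ → ℝ → ℝ} (h : SmoothOnCone u) {R M t L L₀ : ℝ} (hR : 0 ≤ R)
    (hM : EnergyBound u R M) (hL : Tendsto (fun r => 4 * r ^ 2 * u t r) atTop (𝓝 L))
    (hL₀ : Tendsto (fun r => 4 * r ^ 2 * u 0 r) atTop (𝓝 L₀)) : L = L₀ := by
  by_contra hne
  have hd : 0 < |L - L₀| := abs_pos.2 (sub_ne_zero.2 hne)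
  generalize hd_eq : |L - L₀| = d at hd
  obtain ⟨N₀, hN₀⟩ := eventually_atTop.1 ((hL.sub hL₀).abs.eventually
    (lt_mem_nhds (show d / 2 < |L - L₀| by linarith)))
  obtain ⟨N, hNN₀, hNt⟩ : ∃ N, N₀ ≤ N ∧ R + |t| < N :=
    ⟨max N₀ (R + |t| + 1), le_max_left _ _, (lt_add_one _).trans_le (le_max_right _ _)⟩
  have hN : 0 < N := by linarith [abs_nonneg t]
  obtain ⟨δ, hδ⟩ : ∃ δ, δ = (4 * |t| + 1) / d := ⟨_, rfl⟩
  have hδ₀ : 0 < δ := by rw [hδ]; positivity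
  obtain ⟨l, hl⟩ : ∃ l, l = 16 * (|t| * (δ * M) + 1) / d := ⟨_, rfl⟩
  have hM₀ := hM.1
  have hl₀ : 0 ≤ l := by rw [hl]; positivity
  have hNexp : N ≤ N * Real.exp l := le_mul_of_one_le_right hN.le (Real.one_le_exp hl₀)
  have hlog : Real.log (N * Real.exp l / N) = l := by
    rw [mul_div_cancel_left₀ _ hN.ne', Real.log_exp]
  have hupper := integral_abs_sub_mul_le h hR hM hNt hNexp hδ₀
  have hslice : ∀ s, |s| ≤ |t| → ContinuousOn (u s) (Icc N (N * Real.exp l)) := fun s hs =>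
    h.continuousOn_slice fun r hr => by linarith [hr.1]
  have hlower : d / 8 * Real.log (N * Real.exp l / N) ≤
      ∫ r in Icc N (N * Real.exp l), |u t r - u 0 r| * r := by
    refine mul_log_le_setIntegral_abs_mul hN hNexp
      ((hslice t le_rfl).sub (hslice 0 (by simp))) fun r hr => ?_
    have hgap := hN₀ r (hNN₀.trans hr.1)
    rw [← mul_sub, abs_mul, abs_of_pos (by nlinarith [hN.trans_le hr.1])] at hgap
    linarith
  rw [hlog] at hlower hupper
  exact (hlower.trans hupper).not_gt (mul_abs_mul_add_div_le hd hδ hl hl₀)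

namespace NonradiativeSolution

variable {p : ℕ} {u : ℝ → ℝ → ℝ} (sol : NonradiativeSolution p u)

include sol

lemma smoothOnCone : SmoothOnCone u := smoothOnCone_of_isExtSol sol.isExtSol

lemma exists_decayBound {R : ℝ} (hR : 0 < R) :
    ∃ M, EnergyBound u R M ∧ DecayBound u R (M + 1) := by
  obtain ⟨M, hM⟩ := exists_energyBound hR.le (sol.supH_lt_top R hR)
  exact ⟨M, hM, add_nonneg hM.1 zero_le_one, fun t r hr =>
    abs_le_div_of_energyBound sol.smoothOnCone hR.le hM sol.lintegral_critical_lt_top hr⟩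

variable (hp : 5 ≤ p)

include hp

lemma four_mul_sq_mul_add_sourceIntegral {t₀ ρ : ℝ} (hρ : |t₀| < ρ) :
    4 * ρ ^ 2 * u t₀ ρ + 1 / 4 * sourceIntegral p u t₀ ρ = asymptoticCoefficient p u t₀ := by
  have hindep : ∀ ρ₀ ρ₁, |t₀| < ρ₀ → ρ₀ ≤ ρ₁ →
      4 * ρ₀ ^ 2 * u t₀ ρ₀ + 1 / 4 * sourceIntegral p u t₀ ρ₀ =
        4 * ρ₁ ^ 2 * u t₀ ρ₁ + 1 / 4 * sourceIntegral p u t₀ ρ₁ := fun ρ₀ ρ₁ hρ₀ hρ₁ => by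
    have hR : 0 < (ρ₀ - |t₀|) / 2 := by linarith
    obtain ⟨M, hM, hdecay⟩ := sol.exists_decayBound hR
    exact four_mul_sq_mul_add_sourceIntegral_eq hR.le hM hdecay (sol.extEnergyVanishes _ hR)
      (by linarith) hρ₁ hp hR sol.isExtSol
  rcases le_total ρ (|t₀| + 1) with hle | hle
  · exact hindep _ _ hρ hle
  · exact (hindep _ _ (lt_add_one _) hle).symm

lemma tendsto_sourceIntegral (t₀ : ℝ) : Tendsto (sourceIntegral p u t₀) atTop (𝓝 0) := by
  obtain ⟨M, -, hdecay⟩ := sol.exists_decayBound one_pos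
  have hlim := ((tendsto_const_nhds (x := (4 : ℝ))).div_atTop tendsto_id).const_mul
    (4 * riemannProfile 1 * (M + 1) ^ 5 * ((M + 1) / 1) ^ (p - 5))
  rw [mul_zero] at hlim
  refine squeeze_zero_norm' ?_ hlim
  filter_upwards [eventually_gt_atTop (1 + |t₀|)] with ρ hρ
  exact abs_sourceIntegral_le hp one_pos hdecay hρ

lemma tendsto_asymptoticCoefficient (t₀ : ℝ) :
    Tendsto (fun ρ => 4 * ρ ^ 2 * u t₀ ρ) atTop (𝓝 (asymptoticCoefficient p u t₀)) := by
  have hlim := ((sol.tendsto_sourceIntegral hp t₀).const_mul (1 / 4)).const_sub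
    (asymptoticCoefficient p u t₀)
  rw [mul_zero, sub_zero] at hlim
  refine hlim.congr' ?_
  filter_upwards [eventually_gt_atTop |t₀|] with ρ hρ
  rw [← sol.four_mul_sq_mul_add_sourceIntegral hp hρ, add_sub_cancel_right]

lemma asymptoticCoefficient_eq (t : ℝ) :
    asymptoticCoefficient p u t = asymptoticCoefficient p u 0 := by
  obtain ⟨M, hM, -⟩ := sol.exists_decayBound one_pos
  exact eq_of_tendsto_sq_mul sol.smoothOnCone zero_le_one hM
    (sol.tendsto_asymptoticCoefficient hp t) (sol.tendsto_asymptoticCoefficient hp 0)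

lemma exists_abs_le_div_sq {R : ℝ} (hR : 0 < R) :
    ∃ B, 0 ≤ B ∧ ∀ t r, R + |t| < r → |u t r| ≤ B / r ^ 2 := by
  obtain ⟨M, -, hdecay⟩ := sol.exists_decayBound hR
  have hM := hdecay.1
  have hprofile := riemannProfile_nonneg zero_le_one
  obtain ⟨K, hK⟩ : ∃ K, K =
      4 * riemannProfile 1 * (M + 1) ^ 5 * ((M + 1) / R) ^ (p - 5) * (4 / R) := ⟨_, rfl⟩
  have hK₀ : 0 ≤ K := by rw [hK]; positivity
  refine ⟨(|asymptoticCoefficient p u 0| + K) / 4, by positivity, fun t r hr => ?_⟩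
  have hRr : R ≤ r := by linarith [abs_nonneg t]
  have hr₀ : 0 < r := hR.trans_le hRr
  have hsource : |sourceIntegral p u t r| ≤ K := by
    refine (abs_sourceIntegral_le hp hR hdecay hr).trans ?_
    rw [hK]
    gcongr
  have hcons := sol.four_mul_sq_mul_add_sourceIntegral hp (t₀ := t) (ρ := r) (by linarith)
  rw [sol.asymptoticCoefficient_eq hp] at hcons
  rw [le_div_iff₀ (by positivity)]
  calc |u t r| * r ^ 2 = |4 * r ^ 2 * u t r| / 4 := by
        rw [abs_mul, abs_of_pos (by positivity : 0 < 4 * r ^ 2)]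
        ring
    _ = |asymptoticCoefficient p u 0 - 1 / 4 * sourceIntegral p u t r| / 4 := by
        rw [← hcons, add_sub_cancel_right]
    _ ≤ (|asymptoticCoefficient p u 0| + |1 / 4 * sourceIntegral p u t r|) / 4 := by
        gcongr
        exact abs_sub _ _
    _ ≤ (|asymptoticCoefficient p u 0| + K) / 4 := by
        rw [abs_mul, abs_of_pos (by norm_num : (0 : ℝ) < 1 / 4)]
        linarith

end NonradiativeSolution

/-! ### Stationarity -/

lemma abs_powerNonlinearity_sub_le {p : ℕ} (hp : p ≠ 0) {x y M : ℝ} (hx : |x| ≤ M) (hy : |y| ≤ M) :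
    |powerNonlinearity p x - powerNonlinearity p y| ≤ p * M ^ (p - 1) * |x - y| := by
  obtain ⟨n, rfl⟩ := Nat.exists_eq_succ_of_ne_zero hp
  have hM : 0 ≤ M := (abs_nonneg x).trans hx
  have hpow : |(|x| ^ n - |y| ^ n)| * |y| ≤ n * M ^ n * |x - y| := by
    cases n with
    | zero => simp
    | succ m =>
      have hxy : |(|x| ^ (m + 1) - |y| ^ (m + 1))| ≤ |x - y| * ↑(m + 1) * M ^ m := by
        refine (abs_pow_sub_pow_le _ _ _).trans ?_
        rw [abs_abs, abs_abs, Nat.add_sub_cancel]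
        have hbase : 0 ≤ max |x| |y| := le_max_of_le_left (abs_nonneg x)
        exact mul_le_mul (mul_le_mul_of_nonneg_right (abs_abs_sub_abs_le x y) (Nat.cast_nonneg _))
          (pow_le_pow_left₀ hbase (max_le hx hy) m) (pow_nonneg hbase m) (by positivity)
      calc |(|x| ^ (m + 1) - |y| ^ (m + 1))| * |y| ≤ |x - y| * ↑(m + 1) * M ^ m * M := by gcongr
        _ = ↑(m + 1) * M ^ (m + 1) * |x - y| := by ring
  calc |powerNonlinearity (n + 1) x - powerNonlinearity (n + 1) y|
      = |(|x| ^ n - |y| ^ n) * y + |x| ^ n * (x - y)| := by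
        rw [powerNonlinearity, powerNonlinearity, Nat.add_sub_cancel]
        ring_nf
    _ ≤ |(|x| ^ n - |y| ^ n)| * |y| + |x| ^ n * |x - y| := by
        refine (abs_add_le _ _).trans_eq ?_
        rw [abs_mul, abs_mul, abs_pow, abs_abs]
    _ ≤ n * M ^ n * |x - y| + M ^ n * |x - y| := by gcongr
    _ = ↑(n + 1) * M ^ n * |x - y| := by
        push_cast
        ring

section ImproperIntegral

variable {f f' : ℝ → ℝ} {a l : ℝ} (hf : ∀ x ∈ Ici a, HasDerivAt f (f' x) x)
  (hf' : ∀ x ∈ Ici a, 0 ≤ f' x) (hlim : Tendsto f atTop (𝓝 l))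

include hf hf' hlim

lemma integrableOn_Ici_of_hasDerivAt_of_nonneg : IntegrableOn f' (Ici a) := by
  rw [integrableOn_Ici_iff_integrableOn_Ioi]
  exact integrableOn_Ioi_deriv_of_nonneg (hf a self_mem_Ici).continuousAt.continuousWithinAt
    (fun x hx => hf x (Ioi_subset_Ici_self hx)) (fun x hx => hf' x (Ioi_subset_Ici_self hx)) hlim

lemma integral_Ici_of_hasDerivAt_of_nonneg : ∫ x in Ici a, f' x = l - f a := by
  rw [integral_Ici_eq_integral_Ioi]
  exact integral_Ioi_of_hasDerivAt_of_nonneg (hf a self_mem_Ici).continuousAt.continuousWithinAt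
    (fun x hx => hf x (Ioi_subset_Ici_self hx)) (fun x hx => hf' x (Ioi_subset_Ici_self hx)) hlim

end ImproperIntegral

/-- The function of `ξ` that dominates `r⁻² e^{l/r}` at the radius `r = (ξ + η) / 2` for every
`η ≥ ρ`. -/
noncomputable def expWeight (l ρ ξ : ℝ) : ℝ :=
  4 / (ξ + ρ) ^ 2 * Real.exp (2 * l / (ξ + ρ))

section Weights

variable {l ρ : ℝ} (hρ : 0 < ρ)

lemma expWeight_nonneg (l ρ ξ : ℝ) : 0 ≤ expWeight l ρ ξ := by
  unfold expWeight
  positivity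

include hρ

lemma hasDerivAt_expWeight_primitive (hl : 0 < l) {x : ℝ} (hx : x ∈ Ici ρ) :
    HasDerivAt (fun x => -(2 / l) * Real.exp (2 * l / (x + ρ))) (expWeight l ρ x) x := by
  have hx₀ : x + ρ ≠ 0 := (add_pos (hρ.trans_le hx) hρ).ne'
  have hquot : HasDerivAt (fun x => 2 * l / (x + ρ)) ((0 * (x + ρ) - 2 * l * 1) / (x + ρ) ^ 2) x :=
    (hasDerivAt_const x (2 * l)).div ((hasDerivAt_id x).add_const ρ) hx₀
  refine (hquot.exp.const_mul (-(2 / l))).congr_deriv ?_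
  unfold expWeight
  field_simp
  ring

omit hρ in
lemma tendsto_expWeight_primitive (l ρ : ℝ) :
    Tendsto (fun x => -(2 / l) * Real.exp (2 * l / (x + ρ))) atTop (𝓝 (-(2 / l))) := by
  have hexp : Tendsto (fun x => Real.exp (2 * l / (x + ρ))) atTop (𝓝 1) := by
    rw [← Real.exp_zero]
    exact (Real.continuous_exp.tendsto 0).comp
      (tendsto_const_nhds.div_atTop (tendsto_atTop_add_const_right _ _ tendsto_id))
  simpa only [mul_one] using hexp.const_mul (-(2 / l))

lemma integrableOn_expWeight (hl : 0 < l) : IntegrableOn (expWeight l ρ) (Ici ρ) :=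
  integrableOn_Ici_of_hasDerivAt_of_nonneg (fun _ => hasDerivAt_expWeight_primitive hρ hl)
    (fun x _ => expWeight_nonneg l ρ x) (tendsto_expWeight_primitive l ρ)

lemma integral_expWeight_le (hl : 0 < l) :
    ∫ x in Ici ρ, expWeight l ρ x ≤ 2 / l * Real.exp (l / ρ) := by
  rw [integral_Ici_of_hasDerivAt_of_nonneg (fun _ => hasDerivAt_expWeight_primitive hρ hl)
    (fun x _ => expWeight_nonneg l ρ x) (tendsto_expWeight_primitive l ρ),
    show 2 * l / (ρ + ρ) = l / ρ by rw [← two_mul, mul_div_mul_left _ _ two_ne_zero]]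
  linarith [div_pos two_pos hl]

lemma hasDerivAt_neg_four_div {x : ℝ} (hx : x ∈ Ici ρ) :
    HasDerivAt (fun x : ℝ => -4 / x) (4 / x ^ 2) x := by
  simpa using (hasDerivAt_const x (-4 : ℝ)).fun_div (hasDerivAt_id x) (hρ.trans_le hx).ne'

lemma integrableOn_four_div_sq : IntegrableOn (fun x : ℝ => 4 / x ^ 2) (Ici ρ) :=
  integrableOn_Ici_of_hasDerivAt_of_nonneg (fun _ => hasDerivAt_neg_four_div hρ)
    (fun _ _ => by positivity) (tendsto_const_nhds.div_atTop tendsto_id)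

lemma integral_four_div_sq : ∫ x in Ici ρ, 4 / x ^ 2 = 4 / ρ := by
  rw [integral_Ici_of_hasDerivAt_of_nonneg (fun _ => hasDerivAt_neg_four_div hρ)
    (fun _ _ => by positivity) (tendsto_const_nhds.div_atTop tendsto_id)]
  ring

lemma integrableOn_expWeight_mul (hl : 0 < l) :
    IntegrableOn (fun q : ℝ × ℝ => expWeight l ρ q.1 * (4 / q.2 ^ 2)) (Ici ρ ×ˢ Ici ρ) := by
  rw [IntegrableOn, Measure.volume_eq_prod, ← Measure.prod_restrict]
  exact (integrableOn_expWeight hρ hl).mul_prod (integrableOn_four_div_sq hρ)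

lemma integral_expWeight_mul_le (hl : 0 < l) :
    ∫ q in Ici ρ ×ˢ Ici ρ, expWeight l ρ q.1 * (4 / q.2 ^ 2) ≤
      2 / l * Real.exp (l / ρ) * (4 / ρ) := by
  rw [Measure.volume_eq_prod, ← Measure.prod_restrict,
    integral_prod_mul (expWeight l ρ) fun x : ℝ => 4 / x ^ 2, integral_four_div_sq hρ]
  gcongr
  exact integral_expWeight_le hρ hl

lemma exp_div_nullRadius_mul_le (hl : 0 < l) {ξ η : ℝ} (hξ : ρ ≤ ξ) (hη : ρ ≤ η) :
    Real.exp (l / nullRadius ξ η) * (1 / nullRadius ξ η ^ 2) * (1 / nullRadius ξ η ^ 2) ≤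
      expWeight l ρ ξ * (4 / η ^ 2) := by
  have hξ₀ : 0 < ξ := hρ.trans_le hξ
  have hη₀ : 0 < η := hρ.trans_le hη
  have hξr : (ξ + ρ) / 2 ≤ nullRadius ξ η := by unfold nullRadius; linarith
  have hηr : η / 2 ≤ nullRadius ξ η := by unfold nullRadius; linarith
  calc _ ≤ Real.exp (l / ((ξ + ρ) / 2)) * (1 / ((ξ + ρ) / 2) ^ 2) * (1 / (η / 2) ^ 2) := by gcongr
    _ = expWeight l ρ ξ * (4 / η ^ 2) := by
      rw [expWeight, show l / ((ξ + ρ) / 2) = 2 * l / (ξ + ρ) by field_simp]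
      field_simp
      norm_num

end Weights

/-- A Lipschitz constant for the Duhamel integrand on functions bounded by `B r⁻²` on radii
`r ≥ R`. -/
noncomputable def sourceLipschitz (p : ℕ) (B R : ℝ) : ℝ :=
  4 * riemannProfile 1 * p * B ^ (p - 1) / R ^ (2 * (p - 3))

lemma sourceLipschitz_nonneg (p : ℕ) {B R : ℝ} (hB : 0 ≤ B) (hR : 0 ≤ R) :
    0 ≤ sourceLipschitz p B R := by
  have hprofile := riemannProfile_nonneg zero_le_one
  unfold sourceLipschitz
  positivity

section TimeTranslation

variable {p : ℕ} {u : ℝ → ℝ → ℝ} (hp : 5 ≤ p) {B R τ l Q : ℝ} (hR : 0 < R) (hB : 0 ≤ B)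
  (hQ : 0 ≤ Q) (hl : 0 < l) (hu : ∀ t r, R + |t| < r → |u t r| ≤ B / r ^ 2)
  (hdiff : ∀ t r, R + |τ| + |t| < r → |u (t + τ) r - u t r| ≤ Q / r ^ 2 * Real.exp (l / r))
  {t₀ ρ : ℝ} (hρ : R + |τ| + |t₀| < ρ)

include hp hR hB hQ hl hu hdiff hρ

lemma abs_sourceDensity_add_sub_le {q : ℝ × ℝ} (hq : q ∈ Ici ρ ×ˢ Ici ρ) :
    |sourceDensity p u (t₀ + τ) ρ q - sourceDensity p u t₀ ρ q| ≤
      sourceLipschitz p B R * Q * (expWeight l ρ q.1 * (4 / q.2 ^ 2)) := by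
  obtain ⟨ξ, η⟩ := q
  obtain ⟨hξ, hη⟩ : ρ ≤ ξ ∧ ρ ≤ η := hq
  have hρ₀ : 0 < ρ := by linarith [abs_nonneg τ, abs_nonneg t₀]
  have hcone := add_abs_nullTime_lt_nullRadius (hρ.trans_le hξ) (hρ.trans_le hη)
  have hshift : nullTime (t₀ + τ) ξ η = nullTime t₀ ξ η + τ := by unfold nullTime; ring
  have hsum : ξ + η = 2 * nullRadius ξ η := by unfold nullRadius; ring
  have hweight := exp_div_nullRadius_mul_le hρ₀ hl hξ hη
  have hkernel₀ := riemannKernel_nonneg hρ₀ hξ hη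
  have hkernel := riemannKernel_le hρ₀ hξ hη
  have hprofile := riemannProfile_nonneg zero_le_one
  rw [sourceDensity, sourceDensity, hshift, ← mul_sub, abs_mul, abs_mul]
  simp only [hsum] at hkernel ⊢
  generalize nullTime t₀ ξ η = t at hcone ⊢
  generalize nullRadius ξ η = r at hcone hweight hkernel ⊢
  have hRr : R ≤ r := by linarith [abs_nonneg τ, abs_nonneg t]
  have hr₀ : 0 < r := hR.trans_le hRr
  have hlip := abs_powerNonlinearity_sub_le (p := p) (by lia)
    (hu (t + τ) r (by linarith [abs_add_le t τ])) (hu t r (by linarith [abs_nonneg τ]))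
  rw [abs_of_nonneg hkernel₀, abs_of_pos (by linarith)]
  calc _ ≤ 2 * r * (riemannProfile 1 * (2 * r)) *
        (p * (B / r ^ 2) ^ (p - 1) * (Q / r ^ 2 * Real.exp (l / r))) := by
        gcongr
        exact hlip.trans (by gcongr; exact hdiff t r hcone)
    _ = 4 * riemannProfile 1 * p * B ^ (p - 1) / r ^ (2 * (p - 3)) * Q *
        (Real.exp (l / r) * (1 / r ^ 2) * (1 / r ^ 2)) := by
        rw [div_pow, ← pow_mul, show 2 * (p - 1) = 2 * (p - 3) + 4 by lia, pow_add]
        field_simp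
        ring
    _ ≤ _ := by
        unfold sourceLipschitz
        gcongr

lemma abs_sourceIntegral_add_sub_le
    (hint : IntegrableOn (sourceDensity p u t₀ ρ) (Ici ρ ×ˢ Ici ρ))
    (hint_add : IntegrableOn (sourceDensity p u (t₀ + τ) ρ) (Ici ρ ×ˢ Ici ρ)) :
    |sourceIntegral p u (t₀ + τ) ρ - sourceIntegral p u t₀ ρ| ≤
      sourceLipschitz p B R * Q * (2 / l * Real.exp (l / ρ) * (4 / ρ)) := by
  have hρ₀ : 0 < ρ := by linarith [abs_nonneg τ, abs_nonneg t₀]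
  have hK := sourceLipschitz_nonneg p hB hR.le
  rw [sourceIntegral, sourceIntegral, ← integral_sub hint_add hint, ← Real.norm_eq_abs]
  refine (norm_integral_le_of_norm_le ((integrableOn_expWeight_mul hρ₀ hl).const_mul
    (sourceLipschitz p B R * Q)) ?_).trans ?_
  · filter_upwards [ae_restrict_mem (measurableSet_Ici.prod measurableSet_Ici)] with q hq
    exact abs_sourceDensity_add_sub_le hp hR hB hQ hl hu hdiff hρ hq
  · rw [integral_const_mul]
    gcongr
    exact integral_expWeight_mul_le hρ₀ hl

end TimeTranslation

namespace NonradiativeSolution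

variable {p : ℕ} {u : ℝ → ℝ → ℝ} (sol : NonradiativeSolution p u) (hp : 5 ≤ p)

include sol hp

lemma integrableOn_sourceDensity {t₀ ρ : ℝ} (hρ : |t₀| < ρ) :
    IntegrableOn (sourceDensity p u t₀ ρ) (Ici ρ ×ˢ Ici ρ) := by
  have hR : 0 < (ρ - |t₀|) / 2 := by linarith
  obtain ⟨M, -, hdecay⟩ := sol.exists_decayBound hR
  exact RadialWave.integrableOn_sourceDensity hp hR hdecay (by linarith) sol.smoothOnCone

section

variable {B R τ l : ℝ} (hR : 0 < R) (hB : 0 ≤ B)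
  (hu : ∀ t r, R + |t| < r → |u t r| ≤ B / r ^ 2) (hl : 0 < l) (hlR : sourceLipschitz p B R ≤ l * R)

include hR hB hu hl hlR

lemma abs_add_sub_le_half {Q : ℝ} (hQ : 0 ≤ Q)
    (hdiff : ∀ t r, R + |τ| + |t| < r → |u (t + τ) r - u t r| ≤ Q / r ^ 2 * Real.exp (l / r))
    {t r : ℝ} (hr : R + |τ| + |t| < r) :
    |u (t + τ) r - u t r| ≤ Q / 2 / r ^ 2 * Real.exp (l / r) := by
  have hτ := abs_nonneg τ
  have hRr : R ≤ r := by linarith [abs_nonneg t]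
  have hr₀ : 0 < r := hR.trans_le hRr
  have ht : |t| < r := by linarith
  have htτ : |t + τ| < r := by linarith [abs_add_le t τ]
  have hsource := abs_sourceIntegral_add_sub_le hp hR hB hQ hl hu hdiff hr
    (sol.integrableOn_sourceDensity hp ht) (sol.integrableOn_sourceDensity hp htτ)
  have hcons := (sol.four_mul_sq_mul_add_sourceIntegral hp htτ).trans
    ((sol.asymptoticCoefficient_eq hp _).trans (sol.asymptoticCoefficient_eq hp t).symm)
  rw [← sol.four_mul_sq_mul_add_sourceIntegral hp ht] at hcons
  have hsmall : sourceLipschitz p B R / (l * r) ≤ 1 :=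
    (div_le_one (by positivity)).2 (hlR.trans (by gcongr))
  rw [div_mul_eq_mul_div, le_div_iff₀ (by positivity)]
  calc |u (t + τ) r - u t r| * r ^ 2 = |4 * r ^ 2 * (u (t + τ) r - u t r)| / 4 := by
        rw [abs_mul, abs_of_pos (by positivity : 0 < 4 * r ^ 2)]
        ring
    _ = |sourceIntegral p u (t + τ) r - sourceIntegral p u t r| / 16 := by
        rw [show 4 * r ^ 2 * (u (t + τ) r - u t r) =
          -(1 / 4 * (sourceIntegral p u (t + τ) r - sourceIntegral p u t r)) by linarith,
          abs_neg, abs_mul, abs_of_pos (by norm_num : (0 : ℝ) < 1 / 4)]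
        ring
    _ ≤ sourceLipschitz p B R * Q * (2 / l * Real.exp (l / r) * (4 / r)) / 16 := by gcongr
    _ = sourceLipschitz p B R / (l * r) * (Q / 2 * Real.exp (l / r)) := by
        field_simp
        ring
    _ ≤ 1 * (Q / 2 * Real.exp (l / r)) := by gcongr
    _ = Q / 2 * Real.exp (l / r) := one_mul _

lemma abs_add_sub_le (n : ℕ) : ∀ t r, R + |τ| + |t| < r →
    |u (t + τ) r - u t r| ≤ 2 * B / 2 ^ n / r ^ 2 * Real.exp (l / r) := by
  induction n with
  | zero =>
    intro t r hr
    have hr₀ : 0 < r := by linarith [abs_nonneg τ, abs_nonneg t]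
    calc |u (t + τ) r - u t r| ≤ |u (t + τ) r| + |u t r| := abs_sub _ _
      _ ≤ B / r ^ 2 + B / r ^ 2 := add_le_add
          (hu _ r (by linarith [abs_add_le t τ])) (hu t r (by linarith [abs_nonneg τ]))
      _ = 2 * B / 2 ^ 0 / r ^ 2 * 1 := by ring
      _ ≤ _ := by
          gcongr
          exact Real.one_le_exp (by positivity)
  | succ n ih =>
    intro t r hr
    rw [pow_succ, ← div_div]
    exact sol.abs_add_sub_le_half hp hR hB hu hl hlR (by positivity) ih hr

end

theorem eq_apply_zero {t r : ℝ} (hr : |t| < r) : u t r = u 0 r := by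
  obtain ⟨R, hR, hRt⟩ : ∃ R, 0 < R ∧ R + |t| < r := ⟨(r - |t|) / 2, by linarith, by linarith⟩
  obtain ⟨B, hB, hu⟩ := sol.exists_abs_le_div_sq hp hR
  obtain ⟨l, hl, hlR⟩ : ∃ l, 0 < l ∧ sourceLipschitz p B R ≤ l * R := by
    have hK := sourceLipschitz_nonneg p hB hR.le
    refine ⟨sourceLipschitz p B R / R + 1, by positivity, ?_⟩
    rw [add_mul, div_mul_cancel₀ _ hR.ne']
    linarith
  have hbound : ∀ n : ℕ, |u t r - u 0 r| ≤ 2 * B / 2 ^ n / r ^ 2 * Real.exp (l / r) := fun n => by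
    simpa only [zero_add] using sol.abs_add_sub_le hp hR hB hu hl hlR (τ := t) n 0 r (by simpa)
  have hlim : Tendsto (fun n : ℕ => 2 * B / 2 ^ n / r ^ 2 * Real.exp (l / r)) atTop (𝓝 0) := by
    have hgeom : Tendsto (fun n : ℕ => 2 * B / (2 : ℝ) ^ n) atTop (𝓝 0) :=
      tendsto_const_nhds.div_atTop (tendsto_pow_atTop_atTop_of_one_lt one_lt_two)
    simpa using (hgeom.div_const (r ^ 2)).mul_const (Real.exp (l / r))
  exact sub_eq_zero.1 (abs_nonpos_iff.1 (ge_of_tendsto' hlim hbound))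

end NonradiativeSolution

/-! ### The damped oscillator -/

/-- `(Y, Z)` solves the first-order form `Y' = Z`, `Z' = -b Z + c Y - |Y|^{p-1} Y` of the damped
oscillator to which the radial stationary equation reduces in logarithmic coordinates. -/
structure IsDampedOscillator (p : ℕ) (b c : ℝ) (Y Z : ℝ → ℝ) : Prop where
  hasDerivAt_pos : ∀ s, HasDerivAt Y (Z s) s
  hasDerivAt_vel : ∀ s, HasDerivAt Z (-b * Z s + c * Y s - powerNonlinearity p (Y s)) s

/-- The mechanical energy of the damped oscillator. -/
noncomputable def oscillatorEnergy (p : ℕ) (c : ℝ) (Y Z : ℝ → ℝ) (s : ℝ) : ℝ :=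
  Z s ^ 2 / 2 - c * Y s ^ 2 / 2 + |Y s| ^ (p + 1) / (p + 1)

/-- A weight that vanishes to second order at both ends of `[0, 1]`, so that the virial identity
against it has no boundary terms. -/
noncomputable def bump (x : ℝ) : ℝ := (x * (1 - x)) ^ 2

/-- The first derivative of `bump`. -/
noncomputable def bumpDeriv (x : ℝ) : ℝ := 2 * (x * (1 - x)) * (1 - 2 * x)

/-- The second derivative of `bump`. -/
noncomputable def bumpDeriv₂ (x : ℝ) : ℝ := 2 * (1 - 6 * x + 6 * x ^ 2)

lemma hasDerivAt_bump (x : ℝ) : HasDerivAt bump (bumpDeriv x) x := by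
  refine (((hasDerivAt_id' x).fun_mul ((hasDerivAt_id' x).const_sub 1)).fun_pow 2).congr_deriv ?_
  unfold bumpDeriv
  push_cast
  ring

lemma hasDerivAt_bumpDeriv (x : ℝ) : HasDerivAt bumpDeriv (bumpDeriv₂ x) x := by
  refine ((((hasDerivAt_id' x).fun_mul ((hasDerivAt_id' x).const_sub 1)).const_mul 2).fun_mul
    (((hasDerivAt_id' x).const_mul 2).const_sub 1)).congr_deriv ?_
  unfold bumpDeriv₂
  ring

lemma continuous_bump : Continuous bump := by
  unfold bump
  fun_prop

lemma bump_nonneg (x : ℝ) : 0 ≤ bump x := sq_nonneg _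

lemma integral_bump : ∫ x in (0 : ℝ)..1, bump x = 1 / 30 := by
  have hderiv : ∀ x : ℝ, HasDerivAt (fun x => x ^ 3 / 3 - x ^ 4 / 2 + x ^ 5 / 5) (bump x) x :=
    fun x => by
      refine ((((hasDerivAt_pow 3 x).div_const 3).fun_sub
        ((hasDerivAt_pow 4 x).div_const 2)).fun_add
        ((hasDerivAt_pow 5 x).div_const 5)).congr_deriv ?_
      unfold bump
      push_cast
      ring
  rw [intervalIntegral.integral_eq_sub_of_hasDerivAt (fun x _ => hderiv x)
    (continuous_bump.intervalIntegrable _ _)]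
  norm_num

section BumpBounds

variable {x : ℝ} (hx : x ∈ Icc (0 : ℝ) 1)

include hx

lemma abs_bump_le_one : |bump x| ≤ 1 := by
  have hnonneg : 0 ≤ x * (1 - x) := mul_nonneg hx.1 (sub_nonneg.2 hx.2)
  rw [abs_of_nonneg (bump_nonneg x)]
  exact pow_le_one₀ hnonneg (by nlinarith [sq_nonneg (1 - 2 * x)])

lemma abs_bumpDeriv_le_two : |bumpDeriv x| ≤ 2 := by
  have hnonneg : 0 ≤ x * (1 - x) := mul_nonneg hx.1 (sub_nonneg.2 hx.2)
  have hle : x * (1 - x) ≤ 1 := by nlinarith [sq_nonneg (1 - 2 * x)]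
  have hslope : |1 - 2 * x| ≤ 1 := by
    rw [abs_le]
    constructor <;> linarith [hx.1, hx.2]
  rw [bumpDeriv, abs_mul, abs_mul, abs_two, abs_of_nonneg hnonneg]
  nlinarith [abs_nonneg (1 - 2 * x)]

lemma abs_bumpDeriv₂_le_two : |bumpDeriv₂ x| ≤ 2 := by
  rw [bumpDeriv₂, abs_le]
  constructor <;> nlinarith [hx.1, hx.2, sq_nonneg (2 * x - 1)]

lemma abs_virialCoefficient_le {b c : ℝ} (hb : 0 ≤ b) :
    |bumpDeriv₂ x / 4 - b / 4 * bumpDeriv x - bump x * c| ≤ |c| + b + 1 := by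
  calc _ ≤ |bumpDeriv₂ x / 4| + |b / 4 * bumpDeriv x| + |bump x * c| :=
        (abs_sub _ _).trans (add_le_add_left (abs_sub _ _) _)
    _ = |bumpDeriv₂ x| / 4 + b / 4 * |bumpDeriv x| + |bump x| * |c| := by
        rw [abs_div, abs_mul, abs_mul, abs_of_nonneg (by positivity : 0 ≤ b / 4),
          abs_of_pos (by norm_num : (0 : ℝ) < 4)]
    _ ≤ 2 / 4 + b / 4 * 2 + 1 * |c| := by
        gcongr
        exacts [abs_bumpDeriv₂_le_two hx, abs_bumpDeriv_le_two hx, abs_bump_le_one hx]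
    _ ≤ |c| + b + 1 := by linarith

end BumpBounds

lemma hasDerivAt_abs_pow_add_one {p : ℕ} (hp : p ≠ 0) (x : ℝ) :
    HasDerivAt (fun x : ℝ => |x| ^ (p + 1)) ((p + 1) * powerNonlinearity p x) x := by
  have hp₁ : (1 : ℝ) < ↑(p + 1) := by exact_mod_cast Nat.lt_add_of_pos_left (Nat.pos_of_ne_zero hp)
  have hexp : ((p + 1 : ℕ) : ℝ) - 2 = ((p - 1 : ℕ) : ℝ) := by
    rw [Nat.cast_sub (Nat.one_le_iff_ne_zero.2 hp)]
    push_cast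
    ring
  have hderiv := hasDerivAt_abs_rpow x hp₁
  simp only [hexp, Real.rpow_natCast] at hderiv
  refine hderiv.congr_deriv ?_
  rw [powerNonlinearity]
  push_cast
  ring

lemma abs_pow_add_one_eq {p : ℕ} (hp : p ≠ 0) (x : ℝ) :
    |x| ^ (p + 1) = powerNonlinearity p x * x := by
  rw [powerNonlinearity, mul_assoc, ← abs_mul_abs_self x, ← pow_two, ← pow_add,
    show p - 1 + 2 = p + 1 by lia]

namespace IsDampedOscillator

variable {p : ℕ} {b c : ℝ} {Y Z : ℝ → ℝ} (hYZ : IsDampedOscillator p b c Y Z)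

include hYZ

lemma comp_const_add (α : ℝ) :
    IsDampedOscillator p b c (fun s => Y (α + s)) fun s => Z (α + s) where
  hasDerivAt_pos s := (hYZ.hasDerivAt_pos (α + s)).comp_const_add α s
  hasDerivAt_vel s := (hYZ.hasDerivAt_vel (α + s)).comp_const_add α s

lemma continuous_pos : Continuous Y :=
  continuous_iff_continuousAt.2 fun s => (hYZ.hasDerivAt_pos s).continuousAt

lemma continuous_vel : Continuous Z :=
  continuous_iff_continuousAt.2 fun s => (hYZ.hasDerivAt_vel s).continuousAt

lemma continuous_oscillatorEnergy : Continuous (oscillatorEnergy p c Y Z) := by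
  have hY := hYZ.continuous_pos
  have hZ := hYZ.continuous_vel
  unfold oscillatorEnergy
  fun_prop

lemma hasDerivAt_oscillatorEnergy (hp : p ≠ 0) (s : ℝ) :
    HasDerivAt (oscillatorEnergy p c Y Z) (-b * Z s ^ 2) s := by
  have hY := hYZ.hasDerivAt_pos s
  have hpot := (hasDerivAt_abs_pow_add_one hp (Y s)).comp s hY
  refine (((((hYZ.hasDerivAt_vel s).fun_pow 2).div_const 2).fun_sub
    (((hY.fun_pow 2).const_mul c).div_const 2)).fun_add (hpot.div_const (p + 1))).congr_deriv ?_
  field_simp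
  push_cast
  ring

lemma antitone_oscillatorEnergy (hp : p ≠ 0) (hb : 0 ≤ b) :
    Antitone (oscillatorEnergy p c Y Z) := by
  refine antitone_of_deriv_nonpos
    (fun s => (hYZ.hasDerivAt_oscillatorEnergy hp s).differentiableAt) fun s => ?_
  rw [(hYZ.hasDerivAt_oscillatorEnergy hp s).deriv, neg_mul]
  exact neg_nonpos.2 (by positivity)

lemma hasDerivAt_virial (hp : p ≠ 0) (s : ℝ) :
    HasDerivAt
      (fun s => bump s * Y s * Z s - bumpDeriv s * Y s ^ 2 / 2 + b / 2 * (bump s * Y s ^ 2))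
      (bump s * Z s ^ 2 + bump s * (c * Y s ^ 2 - |Y s| ^ (p + 1)) - bumpDeriv₂ s * Y s ^ 2 / 2 +
        b / 2 * (bumpDeriv s * Y s ^ 2)) s := by
  have hY := hYZ.hasDerivAt_pos s
  have hβ := hasDerivAt_bump s
  refine ((((hβ.fun_mul hY).fun_mul (hYZ.hasDerivAt_vel s)).fun_sub
    (((hasDerivAt_bumpDeriv s).fun_mul (hY.fun_pow 2)).div_const 2)).fun_add
    ((hβ.fun_mul (hY.fun_pow 2)).const_mul (b / 2))).congr_deriv ?_
  rw [abs_pow_add_one_eq hp]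
  push_cast
  ring

/-- The virial identity eliminates the kinetic energy. -/
lemma integral_bump_mul_oscillatorEnergy (hp : p ≠ 0) :
    ∫ s in (0 : ℝ)..1, bump s * oscillatorEnergy p c Y Z s =
      ∫ s in (0 : ℝ)..1, ((bumpDeriv₂ s / 4 - b / 4 * bumpDeriv s - bump s * c) * |Y s| ^ 2 +
        bump s * (1 / (p + 1) + 1 / 2) * |Y s| ^ (p + 1)) := by
  have hY := hYZ.continuous_pos
  have hZ := hYZ.continuous_vel
  have henergy := hYZ.continuous_oscillatorEnergy
  have hβ := continuous_bump
  have hβ' : Continuous bumpDeriv := by unfold bumpDeriv; fun_prop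
  have hβ'' : Continuous bumpDeriv₂ := by unfold bumpDeriv₂; fun_prop
  have hvirial := intervalIntegral.integral_eq_sub_of_hasDerivAt (a := 0) (b := 1)
    (fun s _ => hYZ.hasDerivAt_virial hp s) ((by fun_prop : Continuous _).intervalIntegrable _ _)
  have hends : bump 0 = 0 ∧ bump 1 = 0 ∧ bumpDeriv 0 = 0 ∧ bumpDeriv 1 = 0 := by
    simp [bump, bumpDeriv]
  simp only [hends, zero_mul, zero_div, mul_zero, sub_zero, add_zero] at hvirial
  have hhalf := congrArg (1 / 2 * ·) hvirial
  simp only [← intervalIntegral.integral_const_mul, mul_zero] at hhalf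
  rw [← sub_eq_zero, ← intervalIntegral.integral_sub
    (Continuous.intervalIntegrable (by fun_prop) _ _)
    (Continuous.intervalIntegrable (by fun_prop) _ _)]
  refine (intervalIntegral.integral_congr fun s _ => ?_).trans hhalf
  simp only [oscillatorEnergy, sq_abs]
  ring

lemma abs_integral_bump_mul_oscillatorEnergy_le (hp : p ≠ 0) (hb : 0 ≤ b) :
    |∫ s in (0 : ℝ)..1, bump s * oscillatorEnergy p c Y Z s| ≤
      (|c| + b + 1) * ∫ s in (0 : ℝ)..1, (|Y s| ^ 2 + |Y s| ^ (p + 1)) := by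
  have hY := hYZ.continuous_pos
  rw [hYZ.integral_bump_mul_oscillatorEnergy hp, ← intervalIntegral.integral_const_mul,
    ← Real.norm_eq_abs]
  refine intervalIntegral.norm_integral_le_of_norm_le zero_le_one (.of_forall fun s hs => ?_)
    ((by fun_prop : Continuous _).intervalIntegrable _ _)
  have hmem : s ∈ Icc (0 : ℝ) 1 := Ioc_subset_Icc_self hs
  have hβ := abs_bump_le_one hmem
  have hpot : |bump s * (1 / (p + 1) + 1 / 2)| ≤ |c| + b + 1 := by
    have hp₂ : 1 / ((p : ℝ) + 1) ≤ 1 / 2 := by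
      refine one_div_le_one_div_of_le two_pos ?_
      exact_mod_cast Nat.succ_le_succ (Nat.one_le_iff_ne_zero.2 hp)
    calc |bump s * (1 / (p + 1) + 1 / 2)| = |bump s| * (1 / (p + 1) + 1 / 2) := by
          rw [abs_mul, abs_of_pos (by positivity : (0 : ℝ) < 1 / (p + 1) + 1 / 2)]
      _ ≤ 1 * (1 / 2 + 1 / 2) := by gcongr
      _ ≤ |c| + b + 1 := by linarith [abs_nonneg c]
  calc _ ≤ |bumpDeriv₂ s / 4 - b / 4 * bumpDeriv s - bump s * c| * |Y s| ^ 2 +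
          |bump s * (1 / (p + 1) + 1 / 2)| * |Y s| ^ (p + 1) := by
        refine (abs_add_le _ _).trans_eq ?_
        rw [abs_mul, abs_mul, abs_pow, abs_pow, abs_abs]
    _ ≤ (|c| + b + 1) * |Y s| ^ 2 + (|c| + b + 1) * |Y s| ^ (p + 1) := by
        gcongr
        exact abs_virialCoefficient_le hmem hb
    _ = (|c| + b + 1) * (|Y s| ^ 2 + |Y s| ^ (p + 1)) := by ring

end IsDampedOscillator

lemma sq_add_pow_le {p : ℕ} (hp : 3 ≤ p) {x η : ℝ} (hη : 0 < η) (hη₁ : η ≤ 1) (hx : 0 ≤ x) :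
    x ^ 2 + x ^ (p + 1) ≤ 2 * η ^ 2 + 2 * (x / η) ^ (2 * (p - 1)) := by
  rcases le_or_gt x η with hle | hgt
  · have hpow : x ^ (p + 1) ≤ η ^ 2 :=
      (pow_le_pow_left₀ hx hle _).trans (pow_le_pow_of_le_one hη.le hη₁ (by lia))
    have hsq : x ^ 2 ≤ η ^ 2 := pow_le_pow_left₀ hx hle 2
    have hrest : 0 ≤ (x / η) ^ (2 * (p - 1)) := by positivity
    linarith
  · have hdiv : x ≤ x / η := le_div_self hx hη hη₁
    have hone : 1 ≤ x / η := (one_le_div hη).2 hgt.le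
    have hle {k : ℕ} (hk : k ≤ 2 * (p - 1)) : x ^ k ≤ (x / η) ^ (2 * (p - 1)) :=
      (pow_le_pow_left₀ hx hdiv k).trans (pow_le_pow_right₀ hone hk)
    linarith [hle (k := 2) (by lia), hle (k := p + 1) (by lia), sq_nonneg η]

lemma tendsto_integral_window {g : ℝ → ℝ} (hg : Integrable g) :
    Tendsto (fun α => ∫ s in (0 : ℝ)..1, g (α + s)) (atBot ⊔ atTop) (𝓝 0) := by
  have hwindow (α : ℝ) : ∫ s in (0 : ℝ)..1, g (α + s) =
      (∫ s in (0 : ℝ)..(α + 1), g s) - ∫ s in (0 : ℝ)..α, g s := by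
    rw [intervalIntegral.integral_comp_add_left, add_zero,
      intervalIntegral.integral_interval_sub_left hg.intervalIntegrable hg.intervalIntegrable]
  simp only [hwindow]
  refine Tendsto.sup ?_ ?_
  · have hlim {f : ℝ → ℝ} (hf : Tendsto f atBot atBot) :
        Tendsto (fun α => ∫ s in (0 : ℝ)..f α, g s) atBot (𝓝 (-∫ s in Iic 0, g s)) := by
      simp only [intervalIntegral.integral_symm _ (0 : ℝ)]
      exact (intervalIntegral_tendsto_integral_Iic 0 hg.integrableOn hf).neg
    simpa using (hlim (tendsto_atBot_add_const_right atBot 1 tendsto_id)).sub (hlim tendsto_id)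
  · have hlim {f : ℝ → ℝ} (hf : Tendsto f atTop atTop) :=
      intervalIntegral_tendsto_integral_Ioi 0 hg.integrableOn hf
    simpa using (hlim (tendsto_atTop_add_const_right atTop 1 tendsto_id)).sub (hlim tendsto_id)

/-- Antitonicity bounds `f` at a given point by its weighted averages over distant windows. -/
lemma eq_zero_of_antitone_of_tendsto_window {f w : ℝ → ℝ} (hf : Antitone f) (hfc : Continuous f)
    (hw : Continuous w) (hw₀ : ∀ s, 0 ≤ w s) (hwpos : 0 < ∫ s in (0 : ℝ)..1, w s)
    (hlim : Tendsto (fun α => ∫ s in (0 : ℝ)..1, w s * f (α + s)) (atBot ⊔ atTop) (𝓝 0)) (x : ℝ) :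
    f x = 0 := by
  obtain ⟨hbot, htop⟩ := tendsto_sup.1 hlim
  have hconst : ∫ s in (0 : ℝ)..1, w s * f x = (∫ s in (0 : ℝ)..1, w s) * f x :=
    intervalIntegral.integral_mul_const _ _
  have hint : IntervalIntegrable (fun s => w s * f x) volume 0 1 :=
    (by fun_prop : Continuous _).intervalIntegrable _ _
  have hint' (α : ℝ) : IntervalIntegrable (fun s => w s * f (α + s)) volume 0 1 :=
    (by fun_prop : Continuous _).intervalIntegrable _ _
  have hnonpos : (∫ s in (0 : ℝ)..1, w s) * f x ≤ 0 := by
    refine ge_of_tendsto hbot ?_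
    filter_upwards [eventually_le_atBot (x - 1)] with α hα
    rw [← hconst]
    exact intervalIntegral.integral_mono_on zero_le_one hint (hint' α) fun s hs =>
      mul_le_mul_of_nonneg_left (hf (by linarith [hs.2])) (hw₀ s)
  have hnonneg : 0 ≤ (∫ s in (0 : ℝ)..1, w s) * f x := by
    refine le_of_tendsto htop ?_
    filter_upwards [eventually_ge_atTop x] with α hα
    rw [← hconst]
    exact intervalIntegral.integral_mono_on zero_le_one (hint' α) hint fun s hs =>
      mul_le_mul_of_nonneg_left (hf (by linarith [hs.1])) (hw₀ s)
  exact (mul_eq_zero.1 (le_antisymm hnonpos hnonneg)).resolve_left hwpos.ne'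

namespace IsDampedOscillator

variable {p : ℕ} {b c : ℝ} {Y Z : ℝ → ℝ} (hYZ : IsDampedOscillator p b c Y Z)

include hYZ

lemma integral_sq_add_pow_le (hp : 3 ≤ p) {η : ℝ} (hη : 0 < η) (hη₁ : η ≤ 1) :
    ∫ s in (0 : ℝ)..1, (|Y s| ^ 2 + |Y s| ^ (p + 1)) ≤
      2 * η ^ 2 + 2 / η ^ (2 * (p - 1)) * ∫ s in (0 : ℝ)..1, |Y s| ^ (2 * (p - 1)) := by
  have hY := hYZ.continuous_pos
  calc ∫ s in (0 : ℝ)..1, (|Y s| ^ 2 + |Y s| ^ (p + 1))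
      ≤ ∫ s in (0 : ℝ)..1, (2 * η ^ 2 + 2 / η ^ (2 * (p - 1)) * |Y s| ^ (2 * (p - 1))) := by
        refine intervalIntegral.integral_mono_on zero_le_one
          ((by fun_prop : Continuous _).intervalIntegrable _ _)
          ((by fun_prop : Continuous _).intervalIntegrable _ _) fun s _ => ?_
        refine (sq_add_pow_le hp hη hη₁ (abs_nonneg (Y s))).trans_eq ?_
        rw [div_pow]
        ring
    _ = _ := by
        rw [intervalIntegral.integral_add intervalIntegrable_const
          ((by fun_prop : Continuous _).intervalIntegrable _ _),
          intervalIntegral.integral_const_mul]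
        simp

lemma tendsto_integral_bump_mul_oscillatorEnergy (hp : 3 ≤ p) (hb : 0 ≤ b) {l : Filter ℝ}
    (hl : Tendsto (fun α => ∫ s in (0 : ℝ)..1, |Y (α + s)| ^ (2 * (p - 1))) l (𝓝 0)) :
    Tendsto (fun α => ∫ s in (0 : ℝ)..1, bump s * oscillatorEnergy p c Y Z (α + s)) l (𝓝 0) := by
  refine squeeze_zero_norm (a := fun α =>
    (|c| + b + 1) * ∫ s in (0 : ℝ)..1, (|Y (α + s)| ^ 2 + |Y (α + s)| ^ (p + 1)))
    (fun α => (hYZ.comp_const_add α).abs_integral_bump_mul_oscillatorEnergy_le (by lia) hb) ?_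
  suffices hpot : Tendsto (fun α => ∫ s in (0 : ℝ)..1, (|Y (α + s)| ^ 2 + |Y (α + s)| ^ (p + 1)))
      l (𝓝 0) by simpa using hpot.const_mul (|c| + b + 1)
  refine (Metric.tendsto_nhds.2 fun ε hε => ?_)
  obtain ⟨η, ⟨hη, hη₁⟩, hηε⟩ : ∃ η ∈ Ioc (0 : ℝ) 1, 2 * η ^ 2 < ε / 2 := by
    have hcont : Tendsto (fun η : ℝ => 2 * η ^ 2) (𝓝[>] 0) (𝓝 0) := by
      simpa using ((by fun_prop : Continuous fun η : ℝ => 2 * η ^ 2).tendsto 0).mono_left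
        nhdsWithin_le_nhds
    exact (Eventually.and (Ioc_mem_nhdsGT one_pos)
      (hcont.eventually_lt_const (half_pos hε))).exists
  have htail := hl.const_mul (2 / η ^ (2 * (p - 1)))
  rw [mul_zero] at htail
  filter_upwards [htail.eventually_lt_const (half_pos hε)] with α hα
  have hnonneg : 0 ≤ ∫ s in (0 : ℝ)..1, (|Y (α + s)| ^ 2 + |Y (α + s)| ^ (p + 1)) :=
    intervalIntegral.integral_nonneg zero_le_one fun s _ => by positivity
  rw [Real.dist_0_eq_abs, abs_of_nonneg hnonneg]
  linarith [(hYZ.comp_const_add α).integral_sq_add_pow_le hp hη hη₁]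

lemma eq_zero_of_integrable (hp : 3 ≤ p) (hb : 0 < b)
    (hint : Integrable fun s => |Y s| ^ (2 * (p - 1))) (s : ℝ) : Y s = 0 := by
  have hp₀ : p ≠ 0 := by lia
  have hwindow := tendsto_integral_window hint
  have henergy : oscillatorEnergy p c Y Z = fun _ => 0 := funext <|
    eq_zero_of_antitone_of_tendsto_window (hYZ.antitone_oscillatorEnergy hp₀ hb.le)
      hYZ.continuous_oscillatorEnergy continuous_bump bump_nonneg
      (by rw [integral_bump]; norm_num)
      (hYZ.tendsto_integral_bump_mul_oscillatorEnergy hp hb.le hwindow)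
  have hvel (x : ℝ) : Z x = 0 := by
    have hderiv := hYZ.hasDerivAt_oscillatorEnergy hp₀ x
    rw [henergy] at hderiv
    simpa [hb.ne'] using hderiv.unique (hasDerivAt_const x 0)
  have hconst (x : ℝ) : Y x = Y s :=
    is_const_of_deriv_eq_zero (fun y => (hYZ.hasDerivAt_pos y).differentiableAt)
      (fun y => (hYZ.hasDerivAt_pos y).deriv.trans (hvel y)) x s
  simp only [hconst, intervalIntegral.integral_const, sub_zero, one_smul] at hwindow
  have hzero := tendsto_nhds_unique tendsto_const_nhds (tendsto_sup.1 hwindow).2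
  exact abs_eq_zero.1 (eq_zero_of_pow_eq_zero hzero)

end IsDampedOscillator

/-! ### Stationary solutions -/

lemma powerNonlinearity_mul {p : ℕ} (hp : p ≠ 0) {x : ℝ} (hx : 0 ≤ x) (y : ℝ) :
    powerNonlinearity p (x * y) = x ^ p * powerNonlinearity p y := by
  obtain ⟨n, rfl⟩ := Nat.exists_eq_succ_of_ne_zero hp
  rw [powerNonlinearity, powerNonlinearity, abs_mul, abs_of_nonneg hx, Nat.succ_sub_one, mul_pow,
    pow_succ]
  ring

/-- The Emden–Fowler transform `e^{as} f(e^s)`. -/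
noncomputable def emdenFowler (a : ℝ) (f : ℝ → ℝ) (s : ℝ) : ℝ :=
  Real.exp (a * s) * f (Real.exp s)

lemma hasDerivAt_emdenFowler {a : ℝ} {f f' : ℝ → ℝ} (hf : ∀ r, 0 < r → HasDerivAt f (f' r) r)
    (s : ℝ) :
    HasDerivAt (emdenFowler a f) (a * emdenFowler a f s + emdenFowler (a + 1) f' s) s := by
  have hexp : HasDerivAt (fun s => Real.exp (a * s)) (Real.exp (a * s) * a) s := by
    simpa using ((hasDerivAt_id' s).const_mul a).exp
  refine (hexp.fun_mul
    ((hf _ (Real.exp_pos s)).comp s (Real.hasDerivAt_exp s))).congr_deriv ?_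
  rw [emdenFowler, emdenFowler, add_mul, one_mul, Real.exp_add, Function.comp_apply]
  ring

section StationaryEquation

variable {p : ℕ} {a : ℝ} {f : ℝ → ℝ}

lemma isDampedOscillator_emdenFowler {g : ℝ → ℝ} (hp : p ≠ 0) (ha : a * (p - 1) = 2)
    (hf : ∀ r, 0 < r → HasDerivAt f (g r) r)
    (hg : ∀ r, 0 < r → HasDerivAt g (-(3 / r) * g r - powerNonlinearity p (f r)) r) :
    IsDampedOscillator p (2 - 2 * a) (a * (2 - a)) (emdenFowler a f)
      fun s => a * emdenFowler a f s + emdenFowler (a + 1) g s where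
  hasDerivAt_pos := hasDerivAt_emdenFowler hf
  hasDerivAt_vel s := by
    refine (((hasDerivAt_emdenFowler hf s).const_mul a).fun_add
      (hasDerivAt_emdenFowler hg s)).congr_deriv ?_
    have hscale : Real.exp (a * s) ^ p = Real.exp ((a + 1 + 1) * s) := by
      rw [← Real.exp_nat_mul]
      congr 1
      linear_combination s * ha
    have hexp : Real.exp ((a + 1 + 1) * s) = Real.exp ((a + 1) * s) * Real.exp s := by
      rw [← Real.exp_add]
      ring_nf
    simp only [emdenFowler]
    rw [powerNonlinearity_mul hp (Real.exp_nonneg _), hscale, hexp]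
    field_simp
    ring

lemma integrable_abs_emdenFowler_pow (hp : p ≠ 0) (ha : a * (p - 1) = 2)
    (hf : IntegrableOn (fun r => |f r| ^ (2 * (p - 1)) * r ^ 3) (Ioi 0)) :
    Integrable fun s => |emdenFowler a f s| ^ (2 * (p - 1)) := by
  have hcov := (integrableOn_image_iff_integrableOn_abs_deriv_smul (s := univ) MeasurableSet.univ
    (fun x _ => (Real.hasDerivAt_exp x).hasDerivWithinAt) Real.exp_injective.injOn
    (fun r => |f r| ^ (2 * (p - 1)) * r ^ 3)).1 (by rwa [image_univ, Real.range_exp])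
  rw [integrableOn_univ] at hcov
  refine hcov.congr (.of_forall fun s => ?_)
  have hscale : Real.exp (a * s) ^ (2 * (p - 1)) = Real.exp s * Real.exp s ^ 3 := by
    rw [← pow_succ', ← Real.exp_nat_mul, ← Real.exp_nat_mul]
    congr 1
    push_cast [Nat.cast_sub (Nat.one_le_iff_ne_zero.2 hp)]
    linear_combination 2 * s * ha
  simp only [emdenFowler, smul_eq_mul, abs_mul, mul_pow, Real.abs_exp]
  rw [hscale]
  ring

theorem eq_zero_of_stationary {g : ℝ → ℝ} (hp : 4 ≤ p) (hf : ∀ r, 0 < r → HasDerivAt f (g r) r)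
    (hg : ∀ r, 0 < r → HasDerivAt g (-(3 / r) * g r - powerNonlinearity p (f r)) r)
    (hcrit : IntegrableOn (fun r => |f r| ^ (2 * (p - 1)) * r ^ 3) (Ioi 0)) {r : ℝ} (hr : 0 < r) :
    f r = 0 := by
  have hp₀ : p ≠ 0 := by lia
  have hp₁ : (3 : ℝ) ≤ p - 1 := by
    have hp' : (4 : ℝ) ≤ p := by exact_mod_cast hp
    linarith
  have ha : 2 / ((p : ℝ) - 1) * (p - 1) = 2 := div_mul_cancel₀ _ (by positivity)
  have hdamping : 0 < 2 - 2 * (2 / ((p : ℝ) - 1)) := by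
    have hle : 2 / ((p : ℝ) - 1) ≤ 2 / 3 := by gcongr
    linarith
  have hzero := (isDampedOscillator_emdenFowler hp₀ ha hf hg).eq_zero_of_integrable (by lia)
    hdamping (integrable_abs_emdenFowler_pow hp₀ ha hcrit) (Real.log r)
  rw [emdenFowler, Real.exp_log hr] at hzero
  exact (mul_eq_zero.1 hzero).resolve_left (Real.exp_ne_zero _)

end StationaryEquation

namespace NonradiativeSolution

variable {p : ℕ} {u : ℝ → ℝ → ℝ} (sol : NonradiativeSolution p u)

include sol

lemma integrableOn_critical :
    IntegrableOn (fun r => |u 0 r| ^ (2 * (p - 1)) * r ^ 3) (Ioi 0) := by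
  have hcont : ContinuousOn (u 0) (Ioi 0) :=
    sol.smoothOnCone.continuousOn_slice fun r hr => by rwa [abs_zero]
  refine ⟨((hcont.abs.pow _).mul (continuousOn_id.pow 3)).aestronglyMeasurable measurableSet_Ioi,
    (hasFiniteIntegral_iff_ofReal ?_).2 sol.lintegral_critical_lt_top⟩
  filter_upwards [ae_restrict_mem measurableSet_Ioi] with r hr
  exact mul_nonneg (by positivity) (pow_nonneg (le_of_lt hr) 3)

variable (hp : 5 ≤ p)

include hp

lemma dtu_eq_zero {t r : ℝ} (hr : |t| < r) : dtu u t r = 0 := by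
  have hconst : (fun s => u s r) =ᶠ[𝓝 t] fun _ => u 0 r := by
    filter_upwards [continuous_abs.continuousAt.eventually_lt_const hr] with s hs
    exact sol.eq_apply_zero hp hs
  rw [dtu, hconst.deriv_eq, deriv_const]

lemma dru_dru_zero {r : ℝ} (hr : 0 < r) :
    dru (dru u) 0 r = -(3 / r) * dru u 0 r - powerNonlinearity p (u 0 r) := by
  have hr' : |(0 : ℝ)| < r := by rwa [abs_zero]
  have hdtt : dtu (dtu u) 0 r = 0 := by
    have hzero : (fun s => dtu u s r) =ᶠ[𝓝 0] fun _ => 0 := by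
      filter_upwards [continuous_abs.continuousAt.eventually_lt_const hr'] with s hs
      exact sol.dtu_eq_zero hp hs
    rw [dtu, hzero.deriv_eq, deriv_const]
  have hwave := wave_eq_of_isExtSol sol.isExtSol hr'
  linarith

theorem eq_zero {t r : ℝ} (hr : |t| < r) : u t r = 0 := by
  rw [sol.eq_apply_zero hp hr]
  have hcone {x : ℝ} (hx : 0 < x) : |(0 : ℝ)| < x := by rwa [abs_zero]
  refine eq_zero_of_stationary (by lia) (fun x hx => sol.smoothOnCone.hasDerivAt_dru (hcone hx))
    (fun x hx => ?_) sol.integrableOn_critical ((abs_nonneg t).trans_lt hr)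
  rw [← sol.dru_dru_zero hp hx]
  exact sol.smoothOnCone.dru.hasDerivAt_dru (hcone hx)

end NonradiativeSolution

end RadialWave

theorem stmt11_general {p : ℕ} (hp : 5 ≤ p) {u : ℝ → ℝ → ℝ} (hsol : IsExtSol p ⊤ 0 u)
    (hcrit : ∫⁻ r in Ioi (0 : ℝ), ENNReal.ofReal (|u 0 r| ^ (2 * (p - 1)) * r ^ 3) < ⊤)
    (hbd : ∀ R, 0 < R → supH R u < ⊤) (hvan : ∀ R, 0 < R → ExtEnergyVanishes R u)
    {t r : ℝ} (hr : |t| < r) : u t r = 0 ∧ dtu u t r = 0 :=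
  have sol : RadialWave.NonradiativeSolution p u := ⟨hsol, hbd, hvan, hcrit⟩
  ⟨sol.eq_zero hp hr, sol.dtu_eq_zero hp hr⟩

/-- main rigidity theorem: a smooth non-radiative radial solution on
`{r > |t|}` whose data lies in `L^{2(p-1)}(r³dr)` has compactly supported data:
there is `R > 0` with `u₀ = u₁ = 0` on `(R,∞)`. -/
theorem stmt11 (p : ℕ) (hodd : Odd p) (hp5 : 5 ≤ p) (C₀ : ℝ) (hC₀ : 0 < C₀)
    (u : ℝ → ℝ → ℝ)
    (hsol : IsExtSol p ⊤ 0 u)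
    (hdata : ∀ R₀ : ℝ, 0 < R₀ → eH R₀ (u 0) (fun r => dtu u 0 r) < ⊤)
    (hcrit : (∫⁻ r in Ioi (0:ℝ),
        ENNReal.ofReal (|u 0 r| ^ (2 * (p - 1)) * r ^ 3)) < ⊤)
    (hbd : ∀ R₀ : ℝ, 0 < R₀ → ∀ ρ : ℝ, R₀ ≤ ρ →
      eLL 2 8 ρ u + eLL 3 6 ρ u + supH ρ u
        ≤ ENNReal.ofReal C₀ * eH ρ (u 0) (fun r => dtu u 0 r))
    (hvan : ∀ R₀ : ℝ, 0 < R₀ → ExtEnergyVanishes R₀ u) :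
    ∃ R > (0:ℝ), ∀ r : ℝ, R < r → u 0 r = 0 ∧ dtu u 0 r = 0 := by
  refine ⟨1, one_pos, fun r hr => stmt11_general hp5 hsol hcrit (fun R hR => ?_) hvan ?_⟩
  · exact le_add_self.trans (hbd R hR R le_rfl) |>.trans_lt
      (ENNReal.mul_lt_top ENNReal.ofReal_lt_top (hdata R hR))
  · rw [abs_zero]
    exact one_pos.trans hr
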